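/- arXiv:math/0301178 — 3 statements merged into one kernel-verified Lean document; each statement's English description precedes it below -/
import Mathlib

section
/- For integers m, n ≥ 2, the following are equivalent: (i) the groups BS(1,m) and BS(1,n) are quasi-isometric; (ii) BS(1,m) and BS(1,n) are commensurable, i.e. contain isomorphic subgroups of finite index; (iii) there exist integers r, j, k > 0 such that m = r^j and n = r^k. -/
/-- `f : X → Y` is a `(K,C)`-quasi-isometry with respect to the distance
functions `dX`, `dY`. -/
def IsQI {X Y : Type*} (K C : ℝ) (dX : X → X → ℝ) (dY : Y → Y → ℝ)
    (f : X → Y) : Prop :=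
  (∀ x₁ x₂ : X, dX x₁ x₂ / K - C ≤ dY (f x₁) (f x₂)) ∧
  (∀ x₁ x₂ : X, dY (f x₁) (f x₂) ≤ K * dX x₁ x₂ + C) ∧
  (∀ y : Y, ∃ x : X, dY (f x) y ≤ C)

/-- The word metric on a group `G` associated to a generating set `S`:
the distance from `g` to `h` is the length of a shortest word in the
elements of `S` and their inverses representing `g⁻¹ * h`. -/
noncomputable def wordDist {G : Type*} [Group G] (S : Set G) (g h : G) : ℝ :=
  sInf {r : ℝ | ∃ L : List G, (∀ x ∈ L, x ∈ S ∨ x⁻¹ ∈ S) ∧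
      L.prod = g⁻¹ * h ∧ r = L.length}

/-- Two groups are quasi-isometric if, when equipped with word metrics coming
from finite generating sets, there is a quasi-isometry between them. -/
def QuasiIsometricGroups (G H : Type*) [Group G] [Group H] : Prop :=
  ∃ (S : Finset G) (T : Finset H),
    Subgroup.closure (S : Set G) = ⊤ ∧ Subgroup.closure (T : Set H) = ⊤ ∧
    ∃ (K C : ℝ) (f : G → H), 1 ≤ K ∧ 0 ≤ C ∧
      IsQI K C (wordDist (S : Set G)) (wordDist (T : Set H)) f

/-- Two groups are (abstractly) commensurable if they contain isomorphic
subgroups of finite index. -/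
def CommensurableGroups (G H : Type*) [Group G] [Group H] : Prop :=
  ∃ (G₁ : Subgroup G) (H₁ : Subgroup H),
    G₁.FiniteIndex ∧ H₁.FiniteIndex ∧ Nonempty (G₁ ≃* H₁)

/-- The relators for the group
`Γ(n₁,…,n_k) = ⟨a₁,…,a_k, b ∣ aᵢ⁻¹ b aᵢ = b^{nᵢ}, aᵢaⱼ = aⱼaᵢ (i ≠ j)⟩`.
The generator `aᵢ` is `Sum.inl i` and `b` is `Sum.inr ()`. -/
def gammaRels {k : ℕ} (n : Fin k → ℕ) : Set (FreeGroup (Fin k ⊕ Unit)) :=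
  {r | (∃ i : Fin k,
        r = (FreeGroup.of (Sum.inl i))⁻¹ * FreeGroup.of (Sum.inr ()) *
            FreeGroup.of (Sum.inl i) * (FreeGroup.of (Sum.inr ()) ^ (n i))⁻¹) ∨
      (∃ i j : Fin k, i ≠ j ∧
        r = FreeGroup.of (Sum.inl i) * FreeGroup.of (Sum.inl j) *
            (FreeGroup.of (Sum.inl i))⁻¹ * (FreeGroup.of (Sum.inl j))⁻¹)}

/-- The group `Γ(n₁,…,n_k)` given by the presentation
`⟨a₁,…,a_k, b ∣ aᵢ⁻¹ b aᵢ = b^{nᵢ}, aᵢaⱼ = aⱼaᵢ (i ≠ j)⟩`. -/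
def GammaGroup {k : ℕ} (n : Fin k → ℕ) : Type := PresentedGroup (gammaRels n)

instance {k : ℕ} (n : Fin k → ℕ) : Group (GammaGroup n) := by
  unfold GammaGroup; infer_instance

/-- The generator `aᵢ` of `Γ(n₁,…,n_k)`. -/
def gammaA {k : ℕ} (n : Fin k → ℕ) (i : Fin k) : GammaGroup n :=
  PresentedGroup.of (rels := gammaRels n) (Sum.inl i)

/-- The generator `b` of `Γ(n₁,…,n_k)`. -/
def gammaB {k : ℕ} (n : Fin k → ℕ) : GammaGroup n :=
  PresentedGroup.of (rels := gammaRels n) (Sum.inr ())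

/-- The solvable Baumslag–Solitar group `BS(1,n) = ⟨a, b ∣ a b a⁻¹ = bⁿ⟩`.
The generator `a` is `true` and `b` is `false`. -/
def BS (n : ℕ) : Type :=
  PresentedGroup {FreeGroup.of true * FreeGroup.of false * (FreeGroup.of true)⁻¹ *
    (FreeGroup.of false ^ n)⁻¹}

instance (n : ℕ) : Group (BS n) := by unfold BS; infer_instance



namespace FM

open Pointwise

section coarse

/-- Bornologous maps between groups (with their canonical left-invariant coarse structures). -/
def Born {G H : Type*} [Group G] [Group H] (f : G → H) : Prop :=
  ∀ d : G, (Set.range fun g => (f g)⁻¹ * f (g * d)).Finite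

/-- A self-map at finite distance from the identity. -/
def NearId {G : Type*} [Group G] (f : G → G) : Prop :=
  (Set.range fun g => g⁻¹ * f g).Finite

/-- Coarse equivalence data. -/
structure CE {G H : Type*} [Group G] [Group H] (f : G → H) (f' : H → G) : Prop where
  bf : Born f
  bf' : Born f'
  near : NearId fun g => f' (f g)
  near' : NearId fun h => f (f' h)

variable {G H K : Type*} [Group G] [Group H] [Group K]

lemma CE.symm {f : G → H} {f' : H → G} (h : CE f f') : CE f' f :=
  ⟨h.bf', h.bf, h.near', h.near⟩

lemma Born.fin {f : G → H} (hf : Born f) {F : Set G} (hF : F.Finite) :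
    ∃ F' : Set H, F'.Finite ∧ ∀ g h, g⁻¹ * h ∈ F → (f g)⁻¹ * f h ∈ F' := by
  refine ⟨⋃ d ∈ F, Set.range fun g => (f g)⁻¹ * f (g * d), hF.biUnion fun d _ => hf d, ?_⟩
  intro g h hgh
  simp only [Set.mem_iUnion]
  exact ⟨g⁻¹ * h, hgh, g, by simp⟩

lemma born_of_fin {f : G → H} (h : ∀ d : G, ∃ F' : Set H, F'.Finite ∧
    ∀ g, (f g)⁻¹ * f (g * d) ∈ F') : Born f := by
  intro d
  obtain ⟨F', hF', h'⟩ := h d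
  exact hF'.subset (by rintro _ ⟨g, rfl⟩; exact h' g)

lemma Born.comp {f : H → K} {g : G → H} (hf : Born f) (hg : Born g) : Born fun x => f (g x) := by
  refine born_of_fin fun d => ?_
  obtain ⟨F', hF', h⟩ := hf.fin (hg d)
  exact ⟨F', hF', fun x => h _ _ ⟨x, rfl⟩⟩

lemma CE.trans {f : G → H} {f' : H → G} {k : H → K} {k' : K → H} (h : CE f f') (h' : CE k k') :
    CE (fun x => k (f x)) (fun x => f' (k' x)) := by
  refine ⟨h'.bf.comp h.bf, h.bf'.comp h'.bf', ?_, ?_⟩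
  · obtain ⟨F, hF, h1⟩ := h.bf'.fin h'.near
    refine (h.near.mul hF).subset ?_
    rintro _ ⟨g, rfl⟩
    refine ⟨_, ⟨g, rfl⟩, _, h1 (f g) (k' (k (f g))) ⟨_, rfl⟩, ?_⟩
    simp [mul_assoc]
  · obtain ⟨F, hF, h1⟩ := h'.bf.fin h.near'
    refine (h'.near'.mul hF).subset ?_
    rintro _ ⟨g, rfl⟩
    refine ⟨_, ⟨g, rfl⟩, _, h1 (k' g) (f (f' (k' g))) ⟨_, rfl⟩, ?_⟩
    simp [mul_assoc]

lemma CE.ofEquiv (e : G ≃* H) : CE e e.symm := by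
  refine ⟨?_, ?_, ?_, ?_⟩
  · intro d; exact (Set.finite_singleton (e d)).subset (by rintro _ ⟨g, rfl⟩; simp)
  · intro d; exact (Set.finite_singleton (e.symm d)).subset (by rintro _ ⟨g, rfl⟩; simp)
  · exact (Set.finite_singleton 1).subset (by rintro _ ⟨g, rfl⟩; simp)
  · exact (Set.finite_singleton 1).subset (by rintro _ ⟨g, rfl⟩; simp)

lemma CE.ofSubgroup (G₁ : Subgroup G) [G₁.FiniteIndex] :
    ∃ (f : G₁ → G) (f' : G → G₁), CE f f' := by
  classical
  -- finite set `R` with `G = G₁ R`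
  obtain ⟨R, hR, hcov⟩ : ∃ R : Set G, R.Finite ∧ ∀ g : G, ∃ r ∈ R, g * r⁻¹ ∈ G₁ := by
    have : Finite (G ⧸ G₁) := Subgroup.finite_quotient_of_finiteIndex
    refine ⟨Set.range fun q : G ⧸ G₁ => (q.out)⁻¹, Set.finite_range _, ?_⟩
    intro g
    refine ⟨_, ⟨(QuotientGroup.mk g⁻¹ : G ⧸ G₁), rfl⟩, ?_⟩
    have h : (QuotientGroup.mk ((QuotientGroup.mk g⁻¹ : G ⧸ G₁).out) : G ⧸ G₁)
        = QuotientGroup.mk g⁻¹ := Quotient.out_eq' _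
    rw [eq_comm, QuotientGroup.eq] at h
    simpa using h
  choose r hr hr' using hcov
  have inj : Set.InjOn (fun x : G₁ => (x : G)) Set.univ := fun x _ y _ h => Subtype.ext h
  refine ⟨fun x => x, fun g => ⟨g * (r g)⁻¹, hr' g⟩, ?_, ?_, ?_, ?_⟩
  · intro d; exact (Set.finite_singleton (d : G)).subset (by rintro _ ⟨g, rfl⟩; simp)
  · intro d
    refine Set.Finite.of_finite_image (f := fun x : G₁ => (x : G)) ?_ (inj.mono (Set.subset_univ _))
    refine ((hR.mul (Set.finite_singleton d)).mul hR.inv).subset ?_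
    rintro _ ⟨_, ⟨g, rfl⟩, rfl⟩
    refine ⟨_, ⟨_, hr g, d, rfl, rfl⟩, (r (g * d))⁻¹, by simpa using hr (g * d), ?_⟩
    simp [mul_assoc]
  · refine Set.Finite.of_finite_image (f := fun x : G₁ => (x : G)) ?_ (inj.mono (Set.subset_univ _))
    refine hR.inv.subset ?_
    rintro _ ⟨_, ⟨g, rfl⟩, rfl⟩
    simpa using hr (g : G)
  · refine hR.inv.subset ?_
    rintro _ ⟨g, rfl⟩
    simpa using hr (g : G)

lemma commensurable_ce (h : CommensurableGroups G H) : ∃ (f : G → H) (f' : H → G), CE f f' := by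
  obtain ⟨G₁, H₁, h1, h2, ⟨e⟩⟩ := h
  obtain ⟨f, f', hf⟩ := CE.ofSubgroup G₁
  obtain ⟨k, k', hk⟩ := CE.ofSubgroup H₁
  exact ⟨_, _, (hf.symm.trans (CE.ofEquiv e)).trans hk⟩

/-! word metrics -/

lemma exists_word {S : Set G} (hS : Subgroup.closure S = ⊤) (d : G) :
    ∃ L : List G, (∀ x ∈ L, x ∈ S ∨ x⁻¹ ∈ S) ∧ L.prod = d := by
  have h : d ∈ (Subgroup.closure S).toSubmonoid := by rw [hS]; trivial
  rw [Subgroup.closure_toSubmonoid] at h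
  exact Submonoid.exists_list_of_mem_closure h

lemma wordDist_bdd (S : Set G) (g h : G) : BddBelow {r : ℝ | ∃ L : List G,
    (∀ x ∈ L, x ∈ S ∨ x⁻¹ ∈ S) ∧ L.prod = g⁻¹ * h ∧ r = L.length} :=
  ⟨0, by rintro _ ⟨L, -, -, rfl⟩; positivity⟩

lemma wordDist_le {S : Set G} {g h : G} (L : List G) (hL : ∀ x ∈ L, x ∈ S ∨ x⁻¹ ∈ S)
    (h' : L.prod = g⁻¹ * h) : wordDist S g h ≤ L.length :=
  csInf_le (wordDist_bdd S g h) ⟨L, hL, h', rfl⟩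

lemma wordDist_exists {S : Set G} (hS : Subgroup.closure S = ⊤) (g h : G) :
    ∃ L : List G, (∀ x ∈ L, x ∈ S ∨ x⁻¹ ∈ S) ∧ L.prod = g⁻¹ * h ∧
      (L.length : ℝ) ≤ wordDist S g h + 1 := by
  obtain ⟨L, hL, hp⟩ := exists_word hS (g⁻¹ * h)
  obtain ⟨r, ⟨L', h1, h2, rfl⟩, hr⟩ := exists_lt_of_csInf_lt (s := {r : ℝ | ∃ L : List G,
    (∀ x ∈ L, x ∈ S ∨ x⁻¹ ∈ S) ∧ L.prod = g⁻¹ * h ∧ r = L.length})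
    (b := wordDist S g h + 1) ⟨_, L, hL, hp, rfl⟩ (lt_add_one _)
  exact ⟨L', h1, h2, hr.le⟩

lemma wordDist_congr (S : Set G) {g h g' h' : G} (e : g⁻¹ * h = g'⁻¹ * h') :
    wordDist S g h = wordDist S g' h' := by
  unfold wordDist; rw [e]

lemma wordDist_nonneg (S : Set G) (g h : G) : 0 ≤ wordDist S g h :=
  Real.sInf_nonneg (by rintro _ ⟨L, -, -, rfl⟩; positivity)

lemma ball_finite {S : Set G} (hfin : S.Finite) (hS : Subgroup.closure S = ⊤) (R : ℝ) :
    {d : G | wordDist S 1 d ≤ R}.Finite := by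
  obtain ⟨N, hN⟩ := exists_nat_ge (R + 1)
  have hT : (S ∪ S⁻¹).Finite := hfin.union hfin.inv
  have := hT.to_subtype
  have : Finite {L : List ↥(S ∪ S⁻¹) // L.length ≤ N} := by
    have := List.finite_length_le ↥(S ∪ S⁻¹) N
    exact this.to_subtype
  refine (Set.finite_range fun L : {L : List ↥(S ∪ S⁻¹) // L.length ≤ N} =>
    (L.1.map Subtype.val).prod).subset ?_
  intro d hd
  obtain ⟨L, h1, h2, h3⟩ := wordDist_exists hS 1 d
  have hlen : L.length ≤ N := by
    have : (L.length : ℝ) ≤ N := by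
      have : wordDist S 1 d ≤ R := hd
      linarith
    exact_mod_cast this
  have h1' : ∀ x ∈ L, x ∈ S ∪ S⁻¹ := h1
  lift L to List ↥(S ∪ S⁻¹) using h1'
  exact ⟨⟨L, by simpa using hlen⟩, by simpa using h2⟩

lemma finite_bdd (S : Set G) {F : Set G} (hF : F.Finite) :
    ∃ R : ℝ, 0 ≤ R ∧ ∀ d ∈ F, wordDist S 1 d ≤ R := by
  obtain ⟨R, hR⟩ := (hF.image (wordDist S 1)).bddAbove
  exact ⟨max R 0, le_max_right _ _, fun d hd => (hR ⟨d, hd, rfl⟩).trans (le_max_left _ _)⟩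

lemma qi_ce (h : QuasiIsometricGroups G H) : ∃ (f : G → H) (f' : H → G), CE f f' := by
  obtain ⟨S, T, hS, hT, K, C, f, hK, hC, h1, h2, h3⟩ := h
  have e1 : ∀ g h : G, wordDist (S : Set G) g h = wordDist (S : Set G) 1 (g⁻¹ * h) := fun g h =>
    wordDist_congr _ (by simp)
  have e2 : ∀ g h : H, wordDist (T : Set H) g h = wordDist (T : Set H) 1 (g⁻¹ * h) := fun g h =>
    wordDist_congr _ (by simp)
  have up : ∀ F : Set G, F.Finite → ∃ F' : Set H, F'.Finite ∧
      ∀ g h, g⁻¹ * h ∈ F → (f g)⁻¹ * f h ∈ F' := by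
    intro F hF
    obtain ⟨R, hR0, hR⟩ := finite_bdd (S : Set G) hF
    refine ⟨_, ball_finite T.finite_toSet hT (K * R + C), fun g h hgh => ?_⟩
    have := h2 g h
    rw [e1, e2] at this
    have h' := hR _ hgh
    show wordDist _ _ _ ≤ _
    nlinarith
  have dn : ∀ F : Set H, F.Finite → ∃ F' : Set G, F'.Finite ∧
      ∀ g h, (f g)⁻¹ * f h ∈ F → g⁻¹ * h ∈ F' := by
    intro F hF
    obtain ⟨R, hR0, hR⟩ := finite_bdd (T : Set H) hF
    refine ⟨_, ball_finite S.finite_toSet hS (K * (R + C)), fun g h hgh => ?_⟩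
    have := h1 g h
    rw [e1, e2] at this
    have h' := hR _ hgh
    show wordDist _ _ _ ≤ _
    rw [mul_comm, ← div_le_iff₀ (by linarith)]
    linarith
  choose f' hf' using h3
  have hB : {d : H | wordDist (T : Set H) 1 d ≤ C}.Finite := ball_finite T.finite_toSet hT C
  have near0 : ∀ y, (f (f' y))⁻¹ * y ∈ {d : H | wordDist (T : Set H) 1 d ≤ C} := by
    intro y
    have := hf' y
    rw [e2] at this
    exact this
  refine ⟨f, f', ?_, ?_, ?_, ?_⟩
  · refine born_of_fin fun d => ?_
    obtain ⟨F', hF', h⟩ := up {d} (Set.finite_singleton _)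
    exact ⟨F', hF', fun g => h _ _ (by simp)⟩
  · refine born_of_fin fun d => ?_
    obtain ⟨F', hF', h⟩ := dn _ ((hB.mul (Set.finite_singleton d)).mul hB.inv)
    refine ⟨F', hF', fun g => h _ _ ?_⟩
    refine ⟨_, ⟨_, near0 g, d, rfl, rfl⟩, _, Set.inv_mem_inv.2 (near0 (g * d)), ?_⟩
    simp [mul_assoc]
  · obtain ⟨F', hF', h⟩ := dn _ hB.inv
    refine hF'.subset ?_
    rintro _ ⟨g, rfl⟩
    refine h _ _ ?_
    have := Set.inv_mem_inv.2 (near0 (f g))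
    simpa using this
  · refine hB.inv.subset ?_
    rintro _ ⟨g, rfl⟩
    have := Set.inv_mem_inv.2 (near0 g)
    simpa using this

lemma lip_of_born {f : G → H} (hf : Born f) {S : Set G} {T : Set H} (hSf : S.Finite)
    (hS : Subgroup.closure S = ⊤) (hT : Subgroup.closure T = ⊤) :
    ∃ K : ℝ, 0 ≤ K ∧ ∀ g h, wordDist T (f g) (f h) ≤ K * wordDist S g h + K := by
  obtain ⟨F', hF', hb⟩ := hf.fin (hSf.union hSf.inv)
  -- word lengths
  choose w hw1 hw2 using exists_word hT
  obtain ⟨N, hN⟩ := (hF'.image fun d => (w d).length).bddAbove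
  have key : ∀ (L : List G), (∀ x ∈ L, x ∈ S ∨ x⁻¹ ∈ S) → ∀ g, ∃ L' : List H,
      (∀ x ∈ L', x ∈ T ∨ x⁻¹ ∈ T) ∧ L'.prod = (f g)⁻¹ * f (g * L.prod) ∧
        L'.length ≤ N * L.length := by
    intro L
    induction L with
    | nil => intro _ g; exact ⟨[], by simp, by simp, by simp⟩
    | cons s L ih =>
      intro hL g
      obtain ⟨L', h1, h2, h3⟩ := ih (fun x hx => hL x (List.mem_cons_of_mem _ hx)) (g * s)
      have hs := hL s List.mem_cons_self
      have hmem : (f g)⁻¹ * f (g * s) ∈ F' := hb _ _ (by simpa using hs)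
      refine ⟨w ((f g)⁻¹ * f (g * s)) ++ L', ?_, ?_, ?_⟩
      · intro x hx
        rcases List.mem_append.1 hx with hx | hx
        · exact hw1 _ x hx
        · exact h1 x hx
      · rw [List.prod_append, hw2, h2]; simp [mul_assoc]
      · have := hN ⟨_, hmem, rfl⟩
        simp only [List.length_append, List.length_cons] at *
        nlinarith
  refine ⟨N, by positivity, fun g h => ?_⟩
  obtain ⟨L, h1, h2, h3⟩ := wordDist_exists hS g h
  obtain ⟨L', h4, h5, h6⟩ := key L h1 g
  have h7 : (L'.length : ℝ) ≤ N * L.length := by exact_mod_cast h6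
  have h8 := wordDist_le (g := f g) (h := f h) L' h4 (by rw [h5, h2]; simp)
  have : (0 : ℝ) ≤ N := by positivity
  nlinarith

lemma wordDist_triangle {S : Set G} (hS : Subgroup.closure S = ⊤) (g h k : G) :
    wordDist S g k ≤ wordDist S g h + wordDist S h k + 2 := by
  obtain ⟨L, h1, h2, h3⟩ := wordDist_exists hS g h
  obtain ⟨L', h1', h2', h3'⟩ := wordDist_exists hS h k
  have := wordDist_le (S := S) (g := g) (h := k) (L ++ L') (by
    intro x hx
    rcases List.mem_append.1 hx with hx | hx
    · exact h1 x hx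
    · exact h1' x hx) (by rw [List.prod_append, h2, h2']; simp [mul_assoc])
  rw [List.length_append] at this
  push_cast at this
  linarith

lemma ce_qi {S : Finset G} {T : Finset H} (hS : Subgroup.closure (S : Set G) = ⊤)
    (hT : Subgroup.closure (T : Set H) = ⊤) {f : G → H} {f' : H → G} (h : CE f f') :
    QuasiIsometricGroups G H := by
  obtain ⟨K1, hK1, l1⟩ := lip_of_born h.bf S.finite_toSet hS hT
  obtain ⟨K2, hK2, l2⟩ := lip_of_born h.bf' T.finite_toSet hT hS
  obtain ⟨R, hR0, hR⟩ := finite_bdd (S : Set G) (h.near.union h.near.inv)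
  obtain ⟨R', hR0', hR'⟩ := finite_bdd (T : Set H) h.near'.inv
  have e1 : ∀ g h : G, wordDist (S : Set G) g h = wordDist (S : Set G) 1 (g⁻¹ * h) := fun g h =>
    wordDist_congr _ (by simp)
  have e2 : ∀ g h : H, wordDist (T : Set H) g h = wordDist (T : Set H) 1 (g⁻¹ * h) := fun g h =>
    wordDist_congr _ (by simp)
  refine ⟨S, T, hS, hT, K1 + K2 + 1, K1 + K2 + 2 * R + R' + 4, f, by linarith, by linarith, ?_, ?_, ?_⟩
  · intro x y
    have a1 := l2 (f x) (f y)
    have a2 : wordDist (S : Set G) x (f' (f x)) ≤ R := by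
      rw [e1]; exact hR _ (Or.inl ⟨x, rfl⟩)
    have a3 : wordDist (S : Set G) (f' (f y)) y ≤ R := by
      rw [e1]; exact hR _ (Or.inr ⟨y, by simp⟩)
    have a4 := wordDist_triangle hS x (f' (f x)) y
    have a5 := wordDist_triangle hS (f' (f x)) (f' (f y)) y
    have a6 := wordDist_nonneg (T : Set H) (f x) (f y)
    rw [sub_le_iff_le_add, div_le_iff₀ (by linarith)]
    nlinarith [mul_nonneg a6 hK1, mul_nonneg hK1 hK2, mul_nonneg hK1 hR0, mul_nonneg hK2 hR0, mul_nonneg hK1 hR0', mul_nonneg hK2 hR0']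
  · intro x y
    have a1 := l1 x y
    have a6 := wordDist_nonneg (S : Set G) x y
    nlinarith [mul_nonneg hK2 a6]
  · intro y
    refine ⟨f' y, ?_⟩
    have : wordDist (T : Set H) (f (f' y)) y ≤ R' := by
      rw [e2]; exact hR' _ ⟨y, by simp⟩
    linarith

end coarse

end FM

set_option linter.unusedSectionVars false

namespace FM

open Pointwise

/-! ### Coordinates on `BS n` -/

/-- The affine group `ℚ ⋊ ℤ` with `ℤ` acting by powers of `n`. -/
@[ext] structure Aff (n : ℕ) where
  x : ℚ
  t : ℤ

section
variable {n : ℕ} [hn : Fact (2 ≤ n)]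

lemma npos : (0 : ℚ) < n := by have := hn.out; exact_mod_cast (by omega : 0 < n)
lemma nne : (n : ℚ) ≠ 0 := npos.ne'
lemma nge2 : (2 : ℚ) ≤ n := by exact_mod_cast hn.out
lemma none : (1 : ℚ) < n := lt_of_lt_of_le (by norm_num) nge2
lemma none' : (1 : ℚ) ≤ n := none.le

noncomputable instance : Group (Aff n) where
  mul p q := ⟨p.x + (n : ℚ) ^ p.t * q.x, p.t + q.t⟩
  one := ⟨0, 0⟩
  inv p := ⟨-((n : ℚ) ^ (-p.t) * p.x), -p.t⟩
  mul_assoc p q r := by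
    change Aff.mk _ _ = Aff.mk _ _
    ext
    · show (p.x + (n : ℚ) ^ p.t * q.x) + (n : ℚ) ^ (p.t + q.t) * r.x =
        p.x + (n : ℚ) ^ p.t * (q.x + (n : ℚ) ^ q.t * r.x)
      rw [zpow_add₀ nne]; ring
    · show p.t + q.t + r.t = p.t + (q.t + r.t)
      ring
  one_mul p := by
    change Aff.mk _ _ = p
    ext
    · show 0 + (n : ℚ) ^ (0 : ℤ) * p.x = p.x
      simp
    · show 0 + p.t = p.t
      simp
  mul_one p := by
    change Aff.mk _ _ = p
    ext
    · show p.x + (n : ℚ) ^ p.t * 0 = p.x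
      simp
    · show p.t + 0 = p.t
      simp
  inv_mul_cancel p := by
    change Aff.mk _ _ = Aff.mk _ _
    ext
    · show -((n : ℚ) ^ (-p.t) * p.x) + (n : ℚ) ^ (-p.t) * p.x = 0
      simp
    · show -p.t + p.t = 0
      simp

lemma Aff.mul_x (p q : Aff n) : (p * q).x = p.x + (n : ℚ) ^ p.t * q.x := rfl
lemma Aff.mul_t (p q : Aff n) : (p * q).t = p.t + q.t := rfl
lemma Aff.one_x : (1 : Aff n).x = 0 := rfl
lemma Aff.one_t : (1 : Aff n).t = 0 := rfl
lemma Aff.inv_x (p : Aff n) : (p⁻¹).x = -((n : ℚ) ^ (-p.t) * p.x) := rfl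
lemma Aff.inv_t (p : Aff n) : (p⁻¹).t = -p.t := rfl

end

/-- The generator `a`. -/
def a {n : ℕ} : BS n := PresentedGroup.of (rels := {FreeGroup.of true * FreeGroup.of false *
  (FreeGroup.of true)⁻¹ * (FreeGroup.of false ^ n)⁻¹}) true
/-- The generator `b`. -/
def b {n : ℕ} : BS n := PresentedGroup.of (rels := {FreeGroup.of true * FreeGroup.of false *
  (FreeGroup.of true)⁻¹ * (FreeGroup.of false ^ n)⁻¹}) false

lemma rel0 {n : ℕ} : (a * b * a⁻¹ * (b ^ n)⁻¹ : BS n) = 1 := by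
  have := PresentedGroup.one_of_mem (rels := {FreeGroup.of true * FreeGroup.of false *
    (FreeGroup.of true)⁻¹ * (FreeGroup.of false ^ n)⁻¹}) (Set.mem_singleton _)
  simp only [map_mul, map_inv, map_pow] at this
  exact this

lemma rel {n : ℕ} : (a * b : BS n) = b ^ n * a := by
  have h := rel0 (n := n)
  rw [mul_inv_eq_one, mul_inv_eq_iff_eq_mul] at h
  exact h

/-- lifting homomorphisms out of `BS n` -/
def lift {n : ℕ} {G : Type*} [Group G] (α β : G) (h : α * β * α⁻¹ * (β ^ n)⁻¹ = 1) : BS n →* G :=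
  PresentedGroup.toGroup (rels := {FreeGroup.of true * FreeGroup.of false *
    (FreeGroup.of true)⁻¹ * (FreeGroup.of false ^ n)⁻¹}) (f := fun i => if i then α else β)
    (by
      intro r hr
      rw [Set.mem_singleton_iff] at hr
      subst hr
      simpa using h)

lemma lift_a {n : ℕ} {G : Type*} [Group G] (α β : G) (h : α * β * α⁻¹ * (β ^ n)⁻¹ = 1) :
    lift α β h a = α :=
  PresentedGroup.toGroup.of _

lemma lift_b {n : ℕ} {G : Type*} [Group G] (α β : G) (h : α * β * α⁻¹ * (β ^ n)⁻¹ = 1) :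
    lift α β h b = β :=
  PresentedGroup.toGroup.of _

lemma closure_ab {n : ℕ} : Subgroup.closure ({a, b} : Set (BS n)) = ⊤ := by
  have h := PresentedGroup.closure_range_of ({FreeGroup.of true * FreeGroup.of false *
    (FreeGroup.of true)⁻¹ * (FreeGroup.of false ^ n)⁻¹})
  rw [eq_top_iff]
  refine le_trans (le_of_eq h.symm) (Subgroup.closure_mono ?_)
  rintro _ ⟨i, rfl⟩
  cases i
  · exact Or.inr rfl
  · exact Or.inl rfl

/-- Induction principle by left multiplication by generators. -/
lemma left_induction {n : ℕ} {P : BS n → Prop} (h1 : P 1)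
    (ha : ∀ g, P g → P (a * g)) (ha' : ∀ g, P g → P (a⁻¹ * g))
    (hb : ∀ g, P g → P (b * g)) (hb' : ∀ g, P g → P (b⁻¹ * g)) (g : BS n) : P g := by
  have : g ∈ Subgroup.closure ({a, b} : Set (BS n)) := by rw [closure_ab]; trivial
  induction this using Subgroup.closure_induction_left with
  | one => exact h1
  | mul_left x hx y _ ih =>
    rcases hx with rfl | hx
    · exact ha _ ih
    · rw [Set.mem_singleton_iff.1 hx]; exact hb _ ih
  | inv_mul_cancel x hx y _ ih =>
    rcases hx with rfl | hx
    · exact ha' _ ih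
    · rw [Set.mem_singleton_iff.1 hx]; exact hb' _ ih

section
variable {n : ℕ} [hn : Fact (2 ≤ n)]

lemma Aff.b_pow (k : ℕ) : (⟨1, 0⟩ : Aff n) ^ k = ⟨k, 0⟩ := by
  induction k with
  | zero => simp; rfl
  | succ k ih => rw [pow_succ, ih]; ext <;> simp [Aff.mul_x, Aff.mul_t]

/-- The map to the affine group. -/
noncomputable def toAff : BS n →* Aff n := lift ⟨0, 1⟩ ⟨1, 0⟩ (by
  rw [mul_inv_eq_one, mul_inv_eq_iff_eq_mul, Aff.b_pow]
  ext <;> simp [Aff.mul_x, Aff.mul_t])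

/-- horizontal (real and `n`-adic) coordinate -/
noncomputable def X (g : BS n) : ℚ := (toAff g).x
/-- height -/
noncomputable def ht (g : BS n) : ℤ := (toAff g).t

@[simp] lemma X_mul (g h : BS n) : X (g * h) = X g + (n : ℚ) ^ ht g * X h := by
  simp [X, ht, Aff.mul_x]
@[simp] lemma ht_mul (g h : BS n) : ht (g * h) = ht g + ht h := by simp [ht, Aff.mul_t]
@[simp] lemma X_one : X (1 : BS n) = 0 := by simp [X, Aff.one_x]
@[simp] lemma ht_one : ht (1 : BS n) = 0 := by simp [ht, Aff.one_t]
@[simp] lemma X_inv (g : BS n) : X g⁻¹ = -((n : ℚ) ^ (-ht g) * X g) := by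
  simp [X, ht, Aff.inv_x]
@[simp] lemma ht_inv (g : BS n) : ht g⁻¹ = - ht g := by simp [ht, Aff.inv_t]
@[simp] lemma X_a : X (a : BS n) = 0 := by simp [X, toAff, lift_a]
@[simp] lemma ht_a : ht (a : BS n) = 1 := by simp [ht, toAff, lift_a]
@[simp] lemma X_b : X (b : BS n) = 1 := by simp [X, toAff, lift_b]
@[simp] lemma ht_b : ht (b : BS n) = 0 := by simp [ht, toAff, lift_b]

/-- height as a homomorphism -/
noncomputable def htHom : BS n →* Multiplicative ℤ where
  toFun g := Multiplicative.ofAdd (ht g)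
  map_one' := by simp
  map_mul' g h := by simp

@[simp] lemma ht_zpow (g : BS n) (k : ℤ) : ht (g ^ k) = k * ht g := by
  have := map_zpow (htHom (n := n)) g k
  have := congrArg Multiplicative.toAdd this
  simpa [htHom] using this
@[simp] lemma ht_pow (g : BS n) (k : ℕ) : ht (g ^ k) = k * ht g := by
  have := ht_zpow g (k : ℤ)
  simpa using this
@[simp] lemma X_a_zpow (k : ℤ) : X ((a : BS n) ^ k) = 0 := by
  induction k using Int.induction_on with
  | zero => simp
  | succ k ih => rw [zpow_add_one, X_mul, ih]; simp
  | pred k ih => rw [zpow_sub_one, X_mul, ih]; simp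
@[simp] lemma X_b_zpow (k : ℤ) : X ((b : BS n) ^ k) = k := by
  induction k using Int.induction_on with
  | zero => simp
  | succ k ih => rw [zpow_add_one]; simp at ih; simp [ih]
  | pred k ih => rw [zpow_sub_one]; simp at ih; simp [ih]; ring
@[simp] lemma X_a_pow (k : ℕ) : X ((a : BS n) ^ k) = 0 := by
  have := X_a_zpow (n := n) (k : ℤ)
  simpa using this
@[simp] lemma X_b_pow (k : ℕ) : X ((b : BS n) ^ k) = k := by
  have := X_b_zpow (n := n) (k : ℤ)
  simpa using this

lemma a_pow_b (i : ℕ) (k : ℤ) : (a ^ i * b ^ k : BS n) = b ^ ((n : ℤ) ^ i * k) * a ^ i := by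
  have h1 : ∀ k : ℤ, (a * b ^ k : BS n) = b ^ ((n : ℤ) * k) * a := by
    intro k
    have : (a * b * a⁻¹ : BS n) = b ^ n := by rw [rel]; group
    have h2 := congrArg (· ^ k) this
    simp only [conj_zpow] at h2
    rw [mul_inv_eq_iff_eq_mul] at h2
    rw [h2, zpow_mul, zpow_natCast]
  induction i generalizing k with
  | zero => simp
  | succ i ih => rw [pow_succ, mul_assoc, h1, ← mul_assoc, ih, mul_assoc, pow_succ]; ring_nf

lemma normal_form (g : BS n) : ∃ (i : ℕ) (k j : ℤ), g = (a ^ i)⁻¹ * b ^ k * a ^ j := by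
  induction g using left_induction with
  | h1 => exact ⟨0, 0, 0, by simp⟩
  | ha g ih =>
    obtain ⟨i, k, j, rfl⟩ := ih
    rcases i with _ | i
    · refine ⟨0, n * k, j + 1, ?_⟩
      have := a_pow_b (n := n) 1 k
      simp only [pow_one] at this
      simp only [pow_zero, inv_one, one_mul]
      rw [← mul_assoc, this, add_comm, zpow_add, zpow_one, mul_assoc]
    · exact ⟨i, k, j, by rw [pow_succ]; group⟩
  | ha' g ih =>
    obtain ⟨i, k, j, rfl⟩ := ih
    exact ⟨i + 1, k, j, by rw [pow_succ]; group⟩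
  | hb g ih =>
    obtain ⟨i, k, j, rfl⟩ := ih
    refine ⟨i, (n : ℤ) ^ i * 1 + k, j, ?_⟩
    have := a_pow_b (n := n) i 1
    rw [← mul_assoc, ← mul_assoc, zpow_add, eq_mul_inv_of_mul_eq this.symm]; group
  | hb' g ih =>
    obtain ⟨i, k, j, rfl⟩ := ih
    refine ⟨i, (n : ℤ) ^ i * (-1) + k, j, ?_⟩
    have := a_pow_b (n := n) i (-1)
    rw [← mul_assoc, ← mul_assoc, zpow_add, eq_mul_inv_of_mul_eq this.symm]; group

lemma bs_ext {g h : BS n} (h1 : X g = X h) (h2 : ht g = ht h) : g = h := by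
  rw [← mul_inv_eq_one]
  have e1 : X (g * h⁻¹) = 0 := by
    simp [h1, h2]
    rw [← mul_assoc, mul_inv_cancel₀ (zpow_ne_zero _ nne)]; simp
  have e2 : ht (g * h⁻¹) = 0 := by simp [h2]
  obtain ⟨i, k, j, hg⟩ := normal_form (g * h⁻¹)
  rw [hg] at e1 e2 ⊢
  simp at e1 e2
  have hk : k = 0 := by
    rcases e1 with e1 | e1
    · have := hn.out; omega
    · exact_mod_cast e1
  have hj : j = i := by omega
  simp [hk, hj]

/-- `den k y`: `n ^ k * y` is an integer. -/
def Den (n : ℕ) (k : ℤ) (y : ℚ) : Prop := ∃ z : ℤ, y = z * (n : ℚ) ^ k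

lemma exists_mk (k : ℤ) (y : ℚ) (s : ℤ) (h : Den n k y) : ∃ g : BS n, X g = y ∧ ht g = s := by
  obtain ⟨z, rfl⟩ := h
  exact ⟨a ^ k * b ^ z * a ^ (s - k), by simp [mul_comm], by simp⟩

lemma Den.mono {k k' : ℤ} {y : ℚ} (h : Den n k y) (hk : k' ≤ k) : Den n k' y := by
  obtain ⟨z, rfl⟩ := h
  obtain ⟨d, rfl⟩ := Int.le.dest hk
  exact ⟨z * n ^ d, by rw [zpow_add₀ nne]; push_cast; simp; ring⟩

lemma Den.add {k : ℤ} {y y' : ℚ} (h : Den n k y) (h' : Den n k y') : Den n k (y + y') := by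
  obtain ⟨z, rfl⟩ := h
  obtain ⟨z', rfl⟩ := h'
  exact ⟨z + z', by push_cast; ring⟩

lemma Den.neg {k : ℤ} {y : ℚ} (h : Den n k y) : Den n k (-y) := by
  obtain ⟨z, rfl⟩ := h
  exact ⟨-z, by push_cast; ring⟩

lemma Den.sub {k : ℤ} {y y' : ℚ} (h : Den n k y) (h' : Den n k y') : Den n k (y - y') := by
  rw [sub_eq_add_neg]; exact h.add h'.neg

lemma Den.zero {k : ℤ} : Den n k 0 := ⟨0, by simp⟩

lemma Den.zpow_mul {k : ℤ} {y : ℚ} (t : ℤ) (h : Den n k y) : Den n (t + k) ((n : ℚ) ^ t * y) := by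
  obtain ⟨z, rfl⟩ := h
  exact ⟨z, by rw [zpow_add₀ nne]; ring⟩

lemma Den.int (z : ℤ) : Den n 0 z := ⟨z, by simp⟩

lemma exists_den (g : BS n) : ∃ k : ℕ, Den n (-k) (X g) := by
  obtain ⟨i, k, j, rfl⟩ := normal_form g
  exact ⟨i, k, by simp [mul_comm]⟩

/-- Standard finite boxes. -/
def Bd (n : ℕ) [Fact (2 ≤ n)] (C : ℕ) : Set (BS n) :=
  {g | |ht g| ≤ C ∧ |X g| ≤ C ∧ Den n (-C) (X g)}

lemma Bd_finite (C : ℕ) : (Bd n C).Finite := by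
  have hf : ((Set.Icc (-(C * n ^ C : ℤ)) (C * n ^ C)) ×ˢ (Set.Icc (-(C : ℤ)) C)).Finite :=
    (Set.finite_Icc _ _).prod (Set.finite_Icc _ _)
  have : ∀ g ∈ Bd n C, ∃ z : ℤ, X g = z * (n : ℚ) ^ (-(C : ℤ)) := fun g hg => hg.2.2
  choose! z hz using this
  refine Set.Finite.of_finite_image (f := fun g => (z g, ht g)) (hf.subset ?_) ?_
  · rintro _ ⟨g, hg, rfl⟩
    obtain ⟨h1, h2, h3⟩ := id hg
    refine ⟨?_, abs_le.1 h1⟩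
    rw [hz g hg, abs_mul, zpow_neg, zpow_natCast, abs_inv, abs_of_pos (pow_pos npos C),
      ← div_eq_mul_inv, div_le_iff₀ (pow_pos npos C)] at h2
    exact abs_le.1 (by exact_mod_cast h2)
  · intro g hg h hh e
    simp only [Prod.mk.injEq] at e
    exact bs_ext (by rw [hz g hg, hz h hh, e.1]) e.2

lemma Bd_mono {C C' : ℕ} (h : C ≤ C') : Bd n C ⊆ Bd n C' := by
  rintro g ⟨h1, h2, h3⟩
  refine ⟨h1.trans (by exact_mod_cast h), h2.trans (by exact_mod_cast h), h3.mono (by omega)⟩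

lemma exists_Bd (F : Set (BS n)) (hF : F.Finite) : ∃ C, F ⊆ Bd n C := by
  have h1 : ∀ g : BS n, ∃ C, g ∈ Bd n C := by
    intro g
    obtain ⟨k, hk⟩ := exists_den g
    obtain ⟨c, hc⟩ := exists_nat_ge (|X g|)
    refine ⟨(ht g).natAbs + k + c, ?_, hc.trans ?_, hk.mono ?_⟩
    · rw [Int.abs_eq_natAbs]; push_cast; omega
    · push_cast; linarith [(by positivity : (0:ℚ) ≤ ((ht g).natAbs : ℚ)), (by positivity : (0:ℚ) ≤ (k : ℚ))]
    · omega
  choose c hc using h1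
  obtain ⟨C, hC⟩ := (hF.image c).bddAbove
  exact ⟨C, fun g hg => Bd_mono (hC ⟨g, hg, rfl⟩) (hc g)⟩

end

end FM

set_option linter.unusedSectionVars false

namespace FM

open Pointwise

/-! ### Easy directions -/

lemma comm_qi {m n : ℕ} (h : CommensurableGroups (BS m) (BS n)) :
    QuasiIsometricGroups (BS m) (BS n) := by
  classical
  obtain ⟨f, f', hf⟩ := commensurable_ce h
  refine ce_qi (S := {a, b}) (T := {a, b}) ?_ ?_ hf
  · simpa using closure_ab
  · simpa using closure_ab

section
variable {n : ℕ} [hn : Fact (2 ≤ n)]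

/-- The power homomorphism. -/
def powHom (n : ℕ) [Fact (2 ≤ n)] (k : ℕ) : BS (n ^ k) →* BS n := lift (a ^ k) b (by
  rw [mul_inv_eq_one, mul_inv_eq_iff_eq_mul]
  have := a_pow_b (n := n) k 1
  rw [zpow_one, mul_one] at this
  rw [this, ← zpow_natCast b (n ^ k)]; push_cast; rfl)

lemma powHom_spec (k : ℕ) [Fact (2 ≤ n ^ k)] (g : BS (n ^ k)) :
    X (powHom n k g) = X g ∧ ht (powHom n k g) = k * ht g := by
  have hz : ∀ z : ℤ, ((n : ℚ) ^ k) ^ z = (n : ℚ) ^ (k * z) := by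
    intro z; rw [zpow_mul, zpow_natCast]
  induction g using left_induction with
  | h1 => simp
  | ha g ih => simp [powHom, lift_a] at ih ⊢; simp [ih]; ring
  | ha' g ih => simp [powHom, lift_a] at ih ⊢; simp [ih]; ring
  | hb g ih => simp [powHom, lift_b] at ih ⊢; simp [ih]
  | hb' g ih => simp [powHom, lift_b] at ih ⊢; simp [ih]

lemma powHom_injective (k : ℕ) (hk : 0 < k) [Fact (2 ≤ n ^ k)] :
    Function.Injective (powHom n k) := by
  intro g h e
  have h1 := powHom_spec k g
  have h2 := powHom_spec k h
  rw [e] at h1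
  refine bs_ext (h1.1.symm.trans h2.1) ?_
  have := h1.2.symm.trans h2.2
  exact mul_left_cancel₀ (by exact_mod_cast hk.ne') this

lemma powHom_range (k : ℕ) (hk : 0 < k) [Fact (2 ≤ n ^ k)] :
    (powHom n k).range.FiniteIndex := by
  let q : BS n →* Multiplicative (ZMod k) :=
    (AddMonoidHom.toMultiplicative (Int.castAddHom (ZMod k))).comp htHom
  have : NeZero k := ⟨hk.ne'⟩
  have : Finite (Multiplicative (ZMod k)) := inferInstanceAs (Finite (ZMod k))
  have hq : q.ker.FiniteIndex := Subgroup.finiteIndex_ker q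
  refine Subgroup.finiteIndex_of_le (H := q.ker) ?_
  intro g hg
  have hg' : ((ht g : ℤ) : ZMod k) = 0 := by
    have := MonoidHom.mem_ker.1 hg
    exact congrArg Multiplicative.toAdd this
  rw [ZMod.intCast_zmod_eq_zero_iff_dvd] at hg'
  obtain ⟨s, hs⟩ := hg'
  obtain ⟨d, hd⟩ := exists_den g
  have hden : Den (n ^ k) (-d) (X g) := by
    obtain ⟨z, hz⟩ := hd
    refine ⟨z * n ^ ((k - 1) * d), ?_⟩
    rw [hz]
    obtain ⟨k', rfl⟩ : ∃ k', k = k' + 1 := ⟨k - 1, by omega⟩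
    push_cast
    rw [mul_assoc, zpow_neg, zpow_neg]
    congr 1
    rw [zpow_natCast, zpow_natCast]
    have := nne (n := n)
    field_simp
    rw [← pow_mul, ← pow_add]; congr 1; ring
  obtain ⟨h, h1, h2⟩ := exists_mk (n := n ^ k) (-d) (X g) s hden
  refine ⟨h, bs_ext ?_ ?_⟩
  · rw [(powHom_spec k h).1, h1]
  · rw [(powHom_spec k h).2, h2, hs]

end

lemma pow_comm {r j k m n : ℕ} (hm : 2 ≤ m) (hn : 2 ≤ n) (hj : 0 < j) (hk : 0 < k)
    (h1 : m = r ^ j) (h2 : n = r ^ k) : CommensurableGroups (BS m) (BS n) := by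
  have : Fact (2 ≤ m) := ⟨hm⟩
  have : Fact (2 ≤ n) := ⟨hn⟩
  have e : m ^ k = n ^ j := by rw [h1, h2, ← pow_mul, ← pow_mul, mul_comm]
  have : Fact (2 ≤ m ^ k) := ⟨hm.trans (Nat.le_self_pow hk.ne' m)⟩
  have : Fact (2 ≤ n ^ j) := ⟨hn.trans (Nat.le_self_pow hj.ne' n)⟩
  refine ⟨(powHom m k).range, (powHom n j).range, powHom_range k hk, powHom_range j hj, ⟨?_⟩⟩
  have e1 := MonoidHom.ofInjective (powHom_injective (n := m) k hk)
  have e2 := MonoidHom.ofInjective (powHom_injective (n := n) j hj)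
  have e3 : ∀ {x y : ℕ}, x = y → Nonempty (BS x ≃* BS y) := by rintro x _ rfl; exact ⟨MulEquiv.refl _⟩
  exact (e1.symm.trans (e3 e).some).trans e2

end FM

set_option linter.unusedSectionVars false
set_option linter.unusedSimpArgs false

namespace FM

open Pointwise

/-! ### Chains with coefficients in `ZMod 2` -/

/-- Chains with `ι` types of cells. -/
abbrev Ch (ι G : Type*) := (ι × G) →₀ ZMod 2

section gen
variable {ι ι' ι'' G H K : Type*} [Group G] [Group H] [Group K]

lemma ch_add_self {α : Type*} (c : α →₀ ZMod 2) : c + c = 0 := by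
  ext x; exact CharTwo.add_self_eq_zero _

lemma ch_eq_of_add {α : Type*} {c d : α →₀ ZMod 2} (h : c + d = 0) : c = d := by
  have : c + d + d = d := by rw [h, zero_add]
  rwa [add_assoc, ch_add_self, add_zero] at this

/-- basis chain -/
noncomputable abbrev dl {α : Type*} (x : α) : α →₀ ZMod 2 := Finsupp.single x 1

/-- left translation -/
noncomputable def L (h : G) : Ch ι G →ₗ[ZMod 2] Ch ι G :=
  Finsupp.lmapDomain _ _ (fun p => (p.1, h * p.2))

@[simp] lemma L_dl (h : G) (i : ι) (g : G) : L h (dl (i, g)) = dl (i, h * g) := by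
  simp [L]

lemma L_mul (h k : G) (c : Ch ι G) : L h (L k c) = L (h * k) c := by
  simp only [L, Finsupp.lmapDomain_apply, ← Finsupp.mapDomain_comp]
  congr 1
  funext p
  simp [mul_assoc]

lemma L_one (c : Ch ι G) : L 1 c = c := by
  simp only [L, Finsupp.lmapDomain_apply]
  convert Finsupp.mapDomain_id using 2
  funext p; simp

lemma L_apply (h : G) (c : Ch ι G) (i : ι) (g : G) : L h c (i, g) = c (i, h⁻¹ * g) := by
  have : (i, g) = (fun p : ι × G => (p.1, h * p.2)) (i, h⁻¹ * g) := by simp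
  rw [L, Finsupp.lmapDomain_apply, this, Finsupp.mapDomain_apply]
  intro p q hpq
  simpa [Prod.ext_iff] using hpq

lemma lin_ext {α M : Type*} [AddCommMonoid M] [Module (ZMod 2) M]
    {φ ψ : (α →₀ ZMod 2) →ₗ[ZMod 2] M} (h : ∀ x, φ (dl x) = ψ (dl x)) : φ = ψ := by
  apply Finsupp.lhom_ext'
  intro x
  ext
  simpa using h x

/-- Linear maps controlled over `f`. -/
def Ctl (f : G → H) (φ : Ch ι G →ₗ[ZMod 2] Ch ι' H) : Prop :=
  ∃ F : Set H, F.Finite ∧ ∀ i g, ∀ x, φ (dl (i, g)) x ≠ 0 → (f g)⁻¹ * x.2 ∈ F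

lemma Ctl.supp {f : G → H} {φ : Ch ι G →ₗ[ZMod 2] Ch ι' H} (h : Ctl f φ) :
    ∃ F : Set H, F.Finite ∧ ∀ c x, φ c x ≠ 0 → ∃ y, c y ≠ 0 ∧ (f y.2)⁻¹ * x.2 ∈ F := by
  obtain ⟨F, hF, h⟩ := h
  refine ⟨F, hF, fun c x hx => ?_⟩
  by_contra! hc
  apply hx
  have : c = c.sum fun y r => r • dl y := by simp [Finsupp.smul_single]
  rw [this, map_finsuppSum, Finsupp.sum, Finsupp.finsetSum_apply]
  apply Finset.sum_eq_zero
  intro y hy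
  rw [map_smul, Finsupp.smul_apply]
  by_contra h2
  refine hc y (by simpa using hy) (h y.1 y.2 x ?_)
  intro h3
  exact h2 (by rw [h3, smul_zero])

lemma Ctl.add {f : G → H} {φ ψ : Ch ι G →ₗ[ZMod 2] Ch ι' H} (h : Ctl f φ) (h' : Ctl f ψ) :
    Ctl f (φ + ψ) := by
  obtain ⟨F, hF, h⟩ := h
  obtain ⟨F', hF', h'⟩ := h'
  refine ⟨F ∪ F', hF.union hF', fun i g x hx => ?_⟩
  by_cases h1 : φ (dl (i, g)) x = 0
  · by_cases h2 : ψ (dl (i, g)) x = 0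
    · simp [h1, h2] at hx
    · exact Or.inr (h' i g x h2)
  · exact Or.inl (h i g x h1)

lemma Ctl.comp {f : G → H} {f' : H → K} {φ : Ch ι G →ₗ[ZMod 2] Ch ι' H}
    {ψ : Ch ι' H →ₗ[ZMod 2] Ch ι'' K} (hf' : Born f') (h : Ctl f φ) (h' : Ctl f' ψ) :
    Ctl (fun g => f' (f g)) (ψ ∘ₗ φ) := by
  obtain ⟨F, hF, h⟩ := h
  obtain ⟨F', hF', h'⟩ := h'.supp
  obtain ⟨F2, hF2, h2⟩ := hf'.fin hF
  refine ⟨F2 * F', hF2.mul hF', fun i g x hx => ?_⟩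
  obtain ⟨y, hy, hyx⟩ := h' _ x hx
  have := h2 _ _ (h i g y hy)
  refine ⟨_, this, _, hyx, ?_⟩
  group

lemma Ctl.near {f : G → G} {φ : Ch ι G →ₗ[ZMod 2] Ch ι' G} (hf : NearId f) (h : Ctl f φ) :
    Ctl id φ := by
  obtain ⟨F, hF, h⟩ := h
  have hf' : (Set.range fun g => g⁻¹ * f g).Finite := hf
  refine ⟨_, hf'.mul hF, fun i g x hx => ⟨_, ⟨g, rfl⟩, _, h i g x hx, ?_⟩⟩
  simp [mul_assoc]

lemma Ctl.id : Ctl (ι := ι) (G := G) id LinearMap.id := by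
  classical
  refine ⟨{1}, Set.finite_singleton _, fun i g x hx => ?_⟩
  simp only [LinearMap.id_coe, id_eq, Finsupp.single_apply] at hx
  have : (i, g) = x := by by_contra h; simp [h] at hx
  rw [← this]; simp

lemma born_id : Born (id : G → G) := by
  intro d
  refine (Set.finite_singleton d).subset ?_
  rintro _ ⟨g, rfl⟩
  simp

/-- The Lifting lemma. -/
lemma lifting [Finite ι'] {f : G → H} {ψ : Ch ι G →ₗ[ZMod 2] Ch ι' H} (hψ : Ctl f ψ)
    {d : Ch ι'' H →ₗ[ZMod 2] Ch ι' H} (hd : ∀ h c, d (L h c) = L h (d c))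
    (hr : ∀ i g, ∃ u, d u = ψ (dl (i, g))) :
    ∃ φ : Ch ι G →ₗ[ZMod 2] Ch ι'' H, Ctl f φ ∧ ∀ c, d (φ c) = ψ c := by
  classical
  obtain ⟨F, hF, hψ⟩ := hψ
  let S : Set (Ch ι' H) := {z | ∀ x, z x ≠ 0 → x.2 ∈ F}
  have hS : S.Finite := by
    have hfin : ((Set.univ : Set ι') ×ˢ F).Finite := Set.finite_univ.prod hF
    have := hfin.to_subtype
    refine Set.Finite.of_finite_image (f := fun z (x : ((Set.univ : Set ι') ×ˢ F : Set _)) => z x.1)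
      (Set.toFinite _) ?_
    intro z hz w hw e
    ext x
    by_cases hx : x.2 ∈ F
    · exact congrFun e ⟨x, trivial, hx⟩
    · have h1 : z x = 0 := by by_contra h; exact hx (hz x h)
      have h2 : w x = 0 := by by_contra h; exact hx (hw x h)
      rw [h1, h2]
  let s : Ch ι' H → Ch ι'' H := fun z => if h : ∃ u, d u = z then h.choose else 0
  have hs : ∀ z, (∃ u, d u = z) → d (s z) = z := by
    intro z h
    simp only [s, dif_pos h]
    exact h.choose_spec
  let zz : ι × G → Ch ι' H := fun p => L (f p.2)⁻¹ (ψ (dl p))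
  have hzz : ∀ p, zz p ∈ S := by
    rintro ⟨i, g⟩ ⟨j, x⟩ hx
    rw [L_apply] at hx
    have := hψ i g _ hx
    simpa using this
  let φ : Ch ι G →ₗ[ZMod 2] Ch ι'' H :=
    Finsupp.linearCombination (ZMod 2) (fun p => L (f p.2) (s (zz p)))
  have hφ : ∀ p, φ (dl p) = L (f p.2) (s (zz p)) := by
    intro p; simp [φ]
  refine ⟨φ, ⟨⋃ z ∈ S, (fun x => x.2) '' ((s z).support : Set (ι'' × H)), ?_, ?_⟩, ?_⟩
  · exact hS.biUnion fun z _ => (Finset.finite_toSet _).image _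
  · rintro i g ⟨j, x⟩ hx
    rw [hφ, L_apply] at hx
    simp only [Set.mem_iUnion]
    exact ⟨zz (i, g), hzz _, (j, (f g)⁻¹ * x), by simpa using hx, rfl⟩
  · intro c
    have : d ∘ₗ φ = ψ := by
      apply lin_ext
      rintro ⟨i, g⟩
      rw [LinearMap.comp_apply, hφ, hd, hs, L_mul]
      · simp only [mul_inv_cancel]; exact L_one _
      · obtain ⟨u, hu⟩ := hr i g
        exact ⟨L (f g)⁻¹ u, by rw [hd, hu]⟩
    rw [← this]; rfl

end gen

section bdry
variable {n : ℕ} [hn : Fact (2 ≤ n)]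

/-- first boundary map -/
noncomputable def d1 (n : ℕ) : Ch Bool (BS n) →ₗ[ZMod 2] Ch Unit (BS n) :=
  Finsupp.linearCombination (ZMod 2) fun p =>
    dl ((), p.2) + dl ((), p.2 * (if p.1 then a else b))

/-- second boundary map -/
noncomputable def d2 (n : ℕ) : Ch Unit (BS n) →ₗ[ZMod 2] Ch Bool (BS n) :=
  Finsupp.linearCombination (ZMod 2) fun p =>
    dl (true, p.2) + dl (true, p.2 * b ^ n) + ∑ i ∈ Finset.range n, dl (false, p.2 * b ^ i) +
      dl (false, p.2 * a)

lemma d1_dl (i : Bool) (g : BS n) : d1 n (dl (i, g)) =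
    dl ((), g) + dl ((), g * (if i then a else b)) := by simp [d1]

lemma d2_dl (i : Unit) (g : BS n) : d2 n (dl (i, g)) =
    dl (true, g) + dl (true, g * b ^ n) + ∑ i ∈ Finset.range n, dl (false, g * b ^ i) +
      dl (false, g * a) := by simp [d2]

lemma d1_L (h : BS n) (c) : d1 n (L h c) = L h (d1 n c) := by
  have : d1 n ∘ₗ L h = L h ∘ₗ d1 n := by
    apply lin_ext
    rintro ⟨i, g⟩
    simp only [LinearMap.comp_apply, d1_dl, L_dl, map_add, mul_assoc]
  exact LinearMap.congr_fun this c

lemma d2_L (h : BS n) (c) : d2 n (L h c) = L h (d2 n c) := by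
  have : d2 n ∘ₗ L h = L h ∘ₗ d2 n := by
    apply lin_ext
    rintro ⟨i, g⟩
    simp only [LinearMap.comp_apply, d2_dl, L_dl, map_add, map_sum, mul_assoc]
  exact LinearMap.congr_fun this c

lemma ctl_d1 : Ctl id (d1 n) := by
  classical
  refine ⟨{1, a, b}, by simp, ?_⟩
  intro i g x hx
  rw [d1_dl] at hx
  by_contra h
  apply hx
  simp only [id_eq, Set.mem_insert_iff, Set.mem_singleton_iff, not_or] at h
  obtain ⟨h1, h2, h3⟩ := h
  have e1 : ((), g) ≠ x := by rintro rfl; simp at h1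
  have e2 : ((), g * (if i then a else b)) ≠ x := by
    rintro rfl; cases i <;> simp at h2 h3
  rw [Finsupp.add_apply, Finsupp.single_apply, Finsupp.single_apply, if_neg e1, if_neg e2, add_zero]

lemma ctl_d2 : Ctl id (d2 n) := by
  classical
  refine ⟨{1, a, b ^ n} ∪ (fun i : ℕ => (b : BS n) ^ i) '' (Finset.range n : Set ℕ),
    (by simp : Set.Finite {1, a, b ^ n}).union ((Finset.finite_toSet _).image _), ?_⟩
  intro i g x hx
  rw [d2_dl] at hx
  by_contra h
  apply hx
  simp only [id_eq, Set.mem_union, Set.mem_insert_iff, Set.mem_singleton_iff, not_or] at h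
  obtain ⟨⟨h1, h2, h3⟩, h4⟩ := h
  have e1 : (true, g) ≠ x := by rintro rfl; simp at h1
  have e2 : (true, g * b ^ n) ≠ x := by rintro rfl; simp at h3
  have e3 : (false, g * a) ≠ x := by rintro rfl; simp at h2
  have e4 : ∑ i ∈ Finset.range n, (dl (false, g * b ^ i) : Ch Bool (BS n)) x = 0 := by
    apply Finset.sum_eq_zero
    intro j hj
    have : (false, g * b ^ j) ≠ x := by
      rintro rfl
      exact h4 ⟨j, hj, by simp⟩
    simp [Finsupp.single_apply, this]
  simp only [Finsupp.add_apply, Finsupp.finsetSum_apply, e4]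
  simp [Finsupp.single_apply, e1, e2, e3]

lemma d1_d2 (c) : d1 n (d2 n c) = 0 := by
  have : d1 n ∘ₗ d2 n = 0 := by
    apply lin_ext
    rintro ⟨i, g⟩
    simp only [LinearMap.comp_apply, d2_dl, map_add, map_sum, d1_dl, LinearMap.zero_apply]
    simp only [if_true, Bool.false_eq_true, if_false]
    have hs : ∀ k : ℕ, ∑ i ∈ Finset.range k, ((dl ((), g * b ^ i) : Ch Unit (BS n)) +
        dl ((), g * b ^ i * b)) = dl ((), g) + dl ((), g * b ^ k) := by
      intro k
      induction k with
      | zero => simp [ch_add_self]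
      | succ k ih =>
        rw [Finset.sum_range_succ, ih, mul_assoc g (b ^ k) b, ← pow_succ]
        rw [add_assoc, ← add_assoc (dl ((), g * b ^ k)), ch_add_self, zero_add]
    rw [hs, mul_assoc g a b, rel, ← mul_assoc]
    have e : ∀ x y z w : Ch Unit (BS n), x + y + (z + w) + (x + z) + (y + w) =
      (x + x) + (y + y) + (z + z) + (w + w) := by intros; abel
    rw [e]; simp [ch_add_self]
  exact LinearMap.congr_fun this c

lemma d1_range (g h : BS n) : ∃ u, d1 n u = dl ((), g) + dl ((), h) := by
  suffices H : ∀ d g : BS n, ∃ u, d1 n u = dl ((), g) + dl ((), g * d) by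
    obtain ⟨u, hu⟩ := H (g⁻¹ * h) g
    exact ⟨u, by rw [hu]; simp⟩
  have key : ∀ s d : BS n, (∀ g, ∃ u, d1 n u = dl ((), g) + dl ((), g * s)) →
      (∀ g, ∃ u, d1 n u = dl ((), g) + dl ((), g * d)) →
      (∀ g, ∃ u, d1 n u = dl ((), g) + dl ((), g * (s * d))) := by
    intro s d h1 h2 g
    obtain ⟨u, hu⟩ := h1 g
    obtain ⟨v, hv⟩ := h2 (g * s)
    refine ⟨u + v, ?_⟩
    rw [map_add, hu, hv, add_assoc, ← add_assoc (dl ((), g * s)), ch_add_self, zero_add, mul_assoc]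
  have ha : ∀ g : BS n, ∃ u, d1 n u = dl ((), g) + dl ((), g * a) :=
    fun g => ⟨dl (true, g), by simp [d1_dl]⟩
  have hb : ∀ g : BS n, ∃ u, d1 n u = dl ((), g) + dl ((), g * b) :=
    fun g => ⟨dl (false, g), by simp [d1_dl]⟩
  have hi : ∀ s : BS n, (∀ g : BS n, ∃ u, d1 n u = dl ((), g) + dl ((), g * s)) →
      ∀ g : BS n, ∃ u, d1 n u = dl ((), g) + dl ((), g * s⁻¹) := by
    intro s h g
    obtain ⟨u, hu⟩ := h (g * s⁻¹)
    exact ⟨u, by rw [hu, add_comm]; simp⟩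
  intro d
  induction d using left_induction with
  | h1 => exact fun g => ⟨0, by simp [ch_add_self]⟩
  | ha g ih => exact key _ _ ha ih
  | ha' g ih => exact key _ _ (hi _ ha) ih
  | hb g ih => exact key _ _ hb ih
  | hb' g ih => exact key _ _ (hi _ hb) ih

lemma b_zpow_inj {j k : ℤ} (h : (b : BS n) ^ j = b ^ k) : j = k := by
  have := congrArg X h
  simpa using this

/-- A finitely supported chain invariant under `b ^ k` is zero. -/
lemma inv_zero {ι : Type*} (c : Ch ι (BS n)) (i : ι) (k : ℤ) (hk : k ≠ 0)
    (h : ∀ g, c (i, g * b ^ k) = c (i, g)) (g : BS n) : c (i, g) = 0 := by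
  by_contra hc
  have h1 : ∀ j : ℕ, c (i, g * b ^ (k * j)) = c (i, g) := by
    intro j
    induction j with
    | zero => simp
    | succ j ih =>
      rw [← ih, ← h (g * b ^ (k * (j : ℤ))), mul_assoc, ← zpow_add]; push_cast; ring_nf
  have : Set.Infinite (c.support : Set (ι × BS n)) := by
    apply Set.infinite_of_injective_forall_mem (f := fun j : ℕ => (i, g * b ^ (k * j)))
    · intro j j' e
      simp only [Prod.mk.injEq, mul_right_inj, true_and] at e
      have := b_zpow_inj e
      have := mul_left_cancel₀ hk this
      exact_mod_cast this
    · intro j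
      simp [h1, hc]
  exact this (Finset.finite_toSet _)

lemma d2_true (u) (g : BS n) : d2 n u (true, g) = u ((), g) + u ((), g * (b ^ n)⁻¹) := by
  classical
  have : (Finsupp.lapply (true, g)) ∘ₗ d2 n = Finsupp.lapply (R := ZMod 2) ((), g) +
      Finsupp.lapply ((), g * (b ^ n)⁻¹) := by
    apply lin_ext
    rintro ⟨i, h⟩
    simp only [LinearMap.comp_apply, d2_dl, Finsupp.lapply_apply, LinearMap.add_apply,
      Finsupp.add_apply, Finsupp.finsetSum_apply, Finsupp.single_apply, Prod.mk.injEq]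
    simp [eq_mul_inv_iff_mul_eq]
  exact LinearMap.congr_fun this u

lemma d2_inj {u} (h : d2 n u = 0) : u = 0 := by
  ext ⟨i, g⟩
  refine inv_zero u i n (by have := hn.out; omega) (fun g => ?_) g
  have := d2_true u (g * b ^ n)
  rw [h] at this
  simp only [mul_inv_cancel_right, Finsupp.coe_zero, Pi.zero_apply] at this
  rw [zpow_natCast]
  exact (CharTwo.add_eq_zero.1 this.symm)

lemma mem_zp (r g : BS n) : r⁻¹ * g ∈ Subgroup.zpowers ((b : BS n) ^ n) ↔
    ht g = ht r ∧ Den n (ht r + 1) (X g - X r) := by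
  constructor
  · rintro ⟨k, hk⟩
    have : g = r * (b ^ n) ^ k := by rw [show (b ^ n) ^ k = r⁻¹ * g from hk]; group
    subst this
    refine ⟨by simp, k, ?_⟩
    rw [← zpow_natCast, ← zpow_mul, X_mul, X_b_zpow, zpow_add₀ nne, zpow_one]
    push_cast
    ring
  · rintro ⟨h1, k, h2⟩
    refine ⟨k, ?_⟩
    show (b ^ n) ^ k = r⁻¹ * g
    rw [eq_inv_mul_iff_mul_eq]
    apply bs_ext
    · rw [← zpow_natCast, ← zpow_mul, X_mul, X_b_zpow]
      rw [sub_eq_iff_eq_add.1 h2, zpow_add₀ nne, zpow_one]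
      push_cast
      ring
    · simp [h1]

lemma ker_d1 {c} (hc : d1 n c = 0) : ∃ u, d2 n u = c := by
  classical
  -- coset sums vanish
  let fun1 : BS n → (Ch Bool (BS n) →ₗ[ZMod 2] ZMod 2) := fun r =>
    Finsupp.linearCombination (ZMod 2) fun p =>
      if p.1 = true ∧ ht p.2 = ht r ∧ Den n (ht r + 1) (X p.2 - X r) then 1 else 0
  have hfun : ∀ r, fun1 r c = 0 := by
    intro r
    let ℓ : Ch Unit (BS n) →ₗ[ZMod 2] ZMod 2 := Finsupp.linearCombination (ZMod 2) fun p =>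
      if ht r + 1 ≤ ht p.2 ∧ Den n (ht r + 1) (X p.2 - X r) then 1 else 0
    have : fun1 r = ℓ ∘ₗ d1 n := by
      apply lin_ext
      rintro ⟨i, g⟩
      rw [LinearMap.comp_apply, d1_dl, map_add]
      simp only [fun1, ℓ, Finsupp.linearCombination_single, one_smul]
      cases i with
      | true =>
        simp only [if_true, true_and, ht_mul, ht_a, X_mul, X_a, mul_zero, add_zero]
        by_cases hD : Den n (ht r + 1) (X g - X r)
        · simp only [hD, and_true]
          rcases lt_trichotomy (ht g) (ht r) with h | h | h
          · rw [if_neg (by omega), if_neg (by omega), if_neg (by omega)]; simp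
          · rw [if_pos (by omega), if_neg (by omega), if_pos (by omega)]; simp
          · rw [if_neg (by omega), if_pos (by omega), if_pos (by omega)]
            exact (CharTwo.add_self_eq_zero _).symm
        · simp [hD]
      | false =>
        simp only [Bool.false_eq_true, false_and, if_false, ht_mul, ht_b, X_mul, X_b, mul_one,
          add_zero]
        by_cases hh : ht r + 1 ≤ ht g
        · have : Den n (ht r + 1) (X g + (n : ℚ) ^ ht g - X r) ↔ Den n (ht r + 1) (X g - X r) := by
            have hp : Den n (ht r + 1) ((n : ℚ) ^ ht g) :=
              Den.mono (k := ht g) ⟨1, by simp⟩ hh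
            constructor
            · intro h; convert h.sub hp using 1; ring
            · intro h; convert h.add hp using 1; ring
          simp only [this]
          exact (CharTwo.add_self_eq_zero _).symm
        · simp [hh]
    rw [this, LinearMap.comp_apply, hc, map_zero]
  let rep : BS n → BS n := fun g => (Quotient.out (g : BS n ⧸ Subgroup.zpowers ((b : BS n) ^ n)))
  have hrep : ∀ g h, rep g = rep h ↔ g⁻¹ * h ∈ Subgroup.zpowers ((b : BS n) ^ n) := by
    intro g h
    rw [← QuotientGroup.eq]
    exact Quotient.out_inj
  have hrep2 : ∀ g, ∃ k : ℤ, rep g = g * (b ^ n) ^ k := by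
    intro g
    have : rep (rep g) = rep g := by
      show Quotient.out (((Quotient.out (g : BS n ⧸ Subgroup.zpowers ((b : BS n) ^ n))) : BS n) :
        BS n ⧸ Subgroup.zpowers ((b : BS n) ^ n)) = _
      rw [QuotientGroup.out_eq']
    obtain ⟨k, hk⟩ := (hrep _ _).1 this.symm
    exact ⟨k, by rw [show (b ^ n) ^ k = g⁻¹ * rep g from hk]; group⟩
  let mapA : Ch Bool (BS n) →ₗ[ZMod 2] Ch Bool (BS n) :=
    Finsupp.linearCombination (ZMod 2) fun p => if p.1 then dl (true, rep p.2) else 0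
  have hA : mapA c = 0 := by
    ext ⟨i, r⟩
    by_cases hr : i = true ∧ rep r = r
    · obtain ⟨rfl, hr⟩ := hr
      have : Finsupp.lapply (true, r) ∘ₗ mapA = fun1 r := by
        apply lin_ext
        rintro ⟨i, g⟩
        simp only [LinearMap.comp_apply, mapA, fun1, Finsupp.linearCombination_single, one_smul]
        cases i with
        | false => simp
        | true =>
          simp only [if_true, true_and, ← mem_zp, ← hrep, hr, Finsupp.lapply_apply,
            Finsupp.single_apply, Prod.mk.injEq]
          simp only [eq_comm]
      have h2 := LinearMap.congr_fun this c
      rw [hfun] at h2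
      exact h2
    · have : Finsupp.lapply (i, r) ∘ₗ mapA = 0 := by
        apply lin_ext
        rintro ⟨j, g⟩
        simp only [LinearMap.comp_apply, mapA, Finsupp.linearCombination_single, one_smul]
        cases j with
        | false => simp
        | true =>
          simp only [if_true, Finsupp.lapply_apply, LinearMap.zero_apply]
          rw [Finsupp.single_apply, if_neg]
          rintro ⟨rfl, rfl⟩
          apply hr
          refine ⟨rfl, ?_⟩
          obtain ⟨k, hk⟩ := hrep2 g
          rw [eq_comm, hrep, hk]
          exact ⟨k, by simp⟩
      exact LinearMap.congr_fun this c
  let B : Submodule (ZMod 2) (Ch Bool (BS n)) :=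
    Finsupp.supported (ZMod 2) (ZMod 2) {x | x.1 = false}
  let D : Submodule (ZMod 2) (Ch Bool (BS n)) := LinearMap.range (d2 n) ⊔ B
  have hB : ∀ g : BS n, dl (false, g) ∈ B := fun g => Finsupp.single_mem_supported _ _ rfl
  have hD1 : ∀ g : BS n, dl (true, g) + dl (true, g * b ^ n) ∈ D := by
    intro g
    have h1 : d2 n (dl ((), g)) ∈ D := Submodule.mem_sup_left ⟨_, rfl⟩
    have h2 : ∑ i ∈ Finset.range n, (dl (false, g * b ^ i) : Ch Bool (BS n)) + dl (false, g * a) ∈ D :=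
      Submodule.mem_sup_right (B.add_mem (B.sum_mem fun i _ => hB _) (hB _))
    convert D.sub_mem h1 h2 using 1
    rw [d2_dl]; abel
  have hD2 : ∀ (k : ℤ) (g : BS n), dl (true, g) + dl (true, g * (b ^ n) ^ k) ∈ D := by
    intro k
    induction k using Int.induction_on with
    | zero => intro g; simp [ch_add_self]
    | succ k ih =>
      intro g
      have := D.add_mem (ih g) (hD1 (g * (b ^ n) ^ (k : ℤ)))
      rw [add_assoc, ← add_assoc (dl (true, g * (b ^ n) ^ (k : ℤ))), ch_add_self, zero_add,
        mul_assoc, ← zpow_add_one] at this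
      exact this
    | pred k ih =>
      intro g
      have := D.add_mem (ih g) (hD1 (g * (b ^ n) ^ (-(k : ℤ) - 1)))
      rw [mul_assoc, ← zpow_add_one, sub_add_cancel, add_assoc,
        add_comm (dl (true, g * (b ^ n) ^ (-(k : ℤ) - 1))), ← add_assoc (dl (true, g * (b ^ n) ^ (-(k : ℤ)))),
        ch_add_self, zero_add] at this
      exact this
  have hD3 : ∀ c, c + mapA c ∈ D := by
    intro c
    induction c using Finsupp.induction_linear with
    | zero => simp
    | add x y hx hy =>
      rw [map_add]
      convert D.add_mem hx hy using 1
      abel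
    | single p r =>
      have : Finsupp.single p r = r • dl p := by simp
      rw [this, map_smul, ← smul_add]
      apply D.smul_mem
      obtain ⟨i, g⟩ := p
      cases i with
      | true =>
        obtain ⟨k, hk⟩ := hrep2 g
        have := hD2 k g
        rw [← hk] at this
        simpa [mapA] using this
      | false =>
        have := Submodule.mem_sup_right (S := LinearMap.range (d2 n)) (hB g)
        simpa [mapA] using this
  have hcD := hD3 c
  rw [hA, add_zero] at hcD
  obtain ⟨_, ⟨u, rfl⟩, β, hβ, e⟩ := Submodule.mem_sup.1 hcD
  refine ⟨u, ?_⟩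
  have hβ1 : d1 n β = 0 := by
    have := congrArg (d1 n) e
    rwa [map_add, d1_d2, hc, zero_add] at this
  have hβt : ∀ g, β (true, g) = 0 := by
    intro g
    by_contra h
    have := (Finsupp.mem_supported _ β).1 hβ (show (true, g) ∈ (β.support : Set _) by simpa using h)
    simp at this
  have hβf : ∀ g, β (false, g) = 0 := by
    intro g
    refine inv_zero β false 1 one_ne_zero (fun g => ?_) g
    have hl : Finsupp.lapply ((), g * b) ∘ₗ d1 n = Finsupp.lapply (R := ZMod 2) (false, g * b) +
        Finsupp.lapply (false, g) + Finsupp.lapply (true, g * b) +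
        Finsupp.lapply (true, g * b * a⁻¹) := by
      apply lin_ext
      rintro ⟨i, h⟩
      simp only [LinearMap.comp_apply, d1_dl, Finsupp.lapply_apply, LinearMap.add_apply,
        Finsupp.add_apply, Finsupp.single_apply, Prod.mk.injEq]
      cases i <;> simp [eq_mul_inv_iff_mul_eq]
    have h2 := LinearMap.congr_fun hl β
    simp only [LinearMap.comp_apply, hβ1, map_zero, LinearMap.add_apply, Finsupp.lapply_apply, hβt,
      add_zero] at h2
    rw [zpow_one]
    exact CharTwo.add_eq_zero.1 h2.symm
  have : β = 0 := by
    ext ⟨i, g⟩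
    cases i
    · exact hβf g
    · exact hβt g
  rw [← e, this, add_zero]

end bdry

end FM

set_option linter.unusedSectionVars false
set_option linter.unusedSimpArgs false

namespace FM

open Pointwise Filter

section
variable {m n : ℕ} [hm : Fact (2 ≤ m)] [hn : Fact (2 ≤ n)]

lemma half_maps {f : BS m → BS n} (hf : Born f) :
    ∃ (φ0 : Ch Unit (BS m) →ₗ[ZMod 2] Ch Unit (BS n)) (φ1 : Ch Bool (BS m) →ₗ[ZMod 2] Ch Bool (BS n))
      (φ2 : Ch Unit (BS m) →ₗ[ZMod 2] Ch Unit (BS n)), Ctl f φ0 ∧ Ctl f φ1 ∧ Ctl f φ2 ∧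
      (∀ g, φ0 (dl ((), g)) = dl ((), f g)) ∧ (∀ c, d1 n (φ1 c) = φ0 (d1 m c)) ∧
      (∀ c, d2 n (φ2 c) = φ1 (d2 m c)) := by
  classical
  let φ0 : Ch Unit (BS m) →ₗ[ZMod 2] Ch Unit (BS n) :=
    Finsupp.lmapDomain _ _ fun p => (p.1, f p.2)
  have h0 : ∀ g, φ0 (dl ((), g)) = dl ((), f g) := by intro g; simp [φ0]
  have c0 : Ctl f φ0 := by
    refine ⟨{1}, Set.finite_singleton _, fun i g x hx => ?_⟩
    rw [h0, Finsupp.single_apply] at hx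
    have : ((), f g) = x := by by_contra h; simp [h] at hx
    rw [← this]; simp
  obtain ⟨φ1, c1, h1⟩ := lifting (f := f) (ψ := φ0 ∘ₗ d1 m) (Ctl.comp hf ctl_d1 c0)
    (d := d1 n) d1_L (by
      intro i g
      rw [LinearMap.comp_apply, d1_dl, map_add, h0, h0]
      exact d1_range _ _)
  obtain ⟨φ2, c2, h2⟩ := lifting (f := f) (ψ := φ1 ∘ₗ d2 m) (Ctl.comp hf ctl_d2 c1)
    (d := d2 n) d2_L (by
      intro i g
      apply ker_d1
      rw [LinearMap.comp_apply, h1, LinearMap.comp_apply, d1_d2, map_zero])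
  exact ⟨φ0, φ1, φ2, c0, c1, c2, h0, h1, h2⟩

lemma chain_maps {f : BS m → BS n} {f' : BS n → BS m} (h : CE f f') :
    ∃ (φ1 : Ch Bool (BS m) →ₗ[ZMod 2] Ch Bool (BS n))
      (φ2 : Ch Unit (BS m) →ₗ[ZMod 2] Ch Unit (BS n))
      (ψ2 : Ch Unit (BS n) →ₗ[ZMod 2] Ch Unit (BS m))
      (k : Ch Bool (BS m) →ₗ[ZMod 2] Ch Unit (BS m)),
      Ctl f φ1 ∧ Ctl f φ2 ∧ Ctl f' ψ2 ∧ Ctl id k ∧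
      (∀ c, d2 n (φ2 c) = φ1 (d2 m c)) ∧ ∀ z, ψ2 (φ2 z) = z + k (d2 m z) := by
  obtain ⟨φ0, φ1, φ2, c0, c1, c2, h0, h1, h2⟩ := half_maps h.bf
  obtain ⟨ψ0, ψ1, ψ2, c0', c1', c2', h0', h1', h2'⟩ := half_maps h.bf'
  have near : NearId fun g => f' (f g) := h.near
  obtain ⟨k0, ck0, hk0⟩ := lifting (f := id) (ψ := ψ0 ∘ₗ φ0 + LinearMap.id)
    (((Ctl.comp h.bf' c0 c0').near near).add Ctl.id) (d := d1 m) d1_L (by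
      rintro ⟨⟩ g
      rw [LinearMap.add_apply, LinearMap.comp_apply, h0, h0', LinearMap.id_apply]
      exact d1_range _ _)
  obtain ⟨k1, ck1, hk1⟩ := lifting (f := id) (ψ := ψ1 ∘ₗ φ1 + LinearMap.id + k0 ∘ₗ d1 m)
    ((((Ctl.comp h.bf' c1 c1').near near).add Ctl.id).add (Ctl.comp born_id ctl_d1 ck0))
    (d := d2 m) d2_L (by
      rintro i g
      apply ker_d1
      simp only [LinearMap.add_apply, LinearMap.comp_apply, LinearMap.id_apply, map_add, h1', h1,
        hk0]
      have e : ∀ x y : Ch Unit (BS m), x + y + (x + y) = 0 := fun x y => ch_add_self _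
      exact e _ _)
  refine ⟨φ1, φ2, ψ2, k1, c1, c2, c2', ck1, h2, fun z => ?_⟩
  apply ch_eq_of_add
  apply d2_inj
  simp only [map_add, hk1, h2', h2, LinearMap.add_apply, LinearMap.comp_apply, LinearMap.id_apply,
    d1_d2, map_zero, add_zero]
  have e : ∀ x y : Ch Bool (BS m), x + (y + (x + y)) = 0 := fun x y => by
    rw [← add_assoc]; exact ch_add_self _
  exact e _ _

lemma CE.proper {G H : Type*} [Group G] [Group H] {f : G → H} {f' : H → G} (h : CE f f')
    (x : H) {F : Set H} (hF : F.Finite) : {y | (f y)⁻¹ * x ∈ F}.Finite := by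
  obtain ⟨F1, hF1, h1⟩ := h.bf'.fin hF
  have near : (Set.range fun g => g⁻¹ * f' (f g)).Finite := h.near
  refine ((Set.finite_singleton (f' x)).mul (near.mul hF1).inv).subset ?_
  intro y hy
  refine ⟨f' x, rfl, (f' x)⁻¹ * y, ?_, by simp⟩
  rw [Set.mem_inv]
  exact ⟨_, ⟨y, rfl⟩, _, h1 _ _ hy, by simp [mul_assoc]⟩

lemma key_lemma {f : BS m → BS n} {f' : BS n → BS m} (h : CE f f')
    (z : ℕ → Ch Unit (BS m)) (P : Set (BS m)) (hz1 : ∀ᶠ N in atTop, z N ((), 1) ≠ 0)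
    (hz2 : ∀ i g, ∀ᶠ N in atTop, d2 m (z N) (i, g) = 0)
    (hz3 : ∀ g, g ∉ P → ∀ᶠ N in atTop, z N ((), g) = 0) :
    ∃ W F : Set (BS n), W.Finite ∧ F.Finite ∧ ∀ p, ∃ w, (f p)⁻¹ * w ∈ W ∧
      ∀ k : ℤ, ∃ y ∈ P, (f (p * y))⁻¹ * (w * b ^ (n * k)) ∈ F := by
  obtain ⟨φ1, φ2, ψ2, κ, c1, c2, c2', ck, hd, hh⟩ := chain_maps h
  obtain ⟨F1, hF1, s1⟩ := c1.supp
  obtain ⟨F2, hF2, s2⟩ := c2.supp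
  obtain ⟨G2, hG2, t2⟩ := c2'.supp
  obtain ⟨Fk, hFk, sk⟩ := ck.supp
  obtain ⟨F3, hF3, t3⟩ := h.bf.fin hG2
  have near' : (Set.range fun g => g⁻¹ * f (f' g)).Finite := h.near'
  refine ⟨((Set.range fun g => g⁻¹ * f (f' g)) * F3)⁻¹, F2, (near'.mul hF3).inv, hF2, fun p => ?_⟩
  -- vanishing lemma
  have hz2' : ∀ Y : Set (BS m), Y.Finite → ∀ᶠ N in atTop, ∀ y ∈ Y, ∀ i, d2 m (L p (z N)) (i, y) = 0 := by
    intro Y hY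
    rw [Filter.eventually_all_finite hY]
    intro y _
    rw [Filter.eventually_all]
    intro i
    filter_upwards [hz2 i (p⁻¹ * y)] with N hN
    rw [d2_L, L_apply, hN]
  have hA : ∀ᶠ N in atTop, ∃ w, (f p)⁻¹ * w ∈ ((Set.range fun g => g⁻¹ * f (f' g)) * F3)⁻¹ ∧
      φ2 (L p (z N)) ((), w) ≠ 0 := by
    have hfin : {y : BS m | y⁻¹ * p ∈ Fk}.Finite := by
      refine ((Set.finite_singleton p).mul hFk.inv).subset ?_
      intro y hy
      exact ⟨p, rfl, p⁻¹ * y, by rw [Set.mem_inv]; simpa using hy, by simp⟩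
    filter_upwards [hz1, hz2' _ hfin] with N h1 h2
    have h3 : ψ2 (φ2 (L p (z N))) ((), p) ≠ 0 := by
      rw [hh, Finsupp.add_apply, L_apply, inv_mul_cancel]
      have : κ (d2 m (L p (z N))) ((), p) = 0 := by
        by_contra hc
        obtain ⟨⟨i, y⟩, hy, hyF⟩ := sk _ _ hc
        exact hy (h2 y hyF i)
      rw [this, add_zero]; exact h1
    obtain ⟨⟨⟨⟩, w⟩, hw, hwF⟩ := t2 _ _ h3
    refine ⟨w, ?_, hw⟩
    rw [Set.mem_inv]
    exact ⟨_, ⟨w, rfl⟩, _, t3 _ _ hwF, by simp [mul_assoc]⟩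
  have hB1 : ∀ x : BS n, ∀ᶠ N in atTop, φ2 (L p (z N)) ((), x * b ^ (n : ℤ)) = φ2 (L p (z N)) ((), x) := by
    intro x
    filter_upwards [hz2' _ (h.proper (x * b ^ (n : ℤ)) hF1)] with N h2
    have h3 := d2_true (φ2 (L p (z N))) (x * b ^ (n : ℤ))
    rw [zpow_natCast, mul_inv_cancel_right] at h3
    rw [zpow_natCast]
    have : d2 n (φ2 (L p (z N))) (true, x * b ^ n) = 0 := by
      by_contra hc
      rw [hd] at hc
      obtain ⟨⟨i, y⟩, hy, hyF⟩ := s1 _ _ hc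
      exact hy (h2 y (by simpa using hyF) i)
    rw [this] at h3
    exact CharTwo.add_eq_zero.1 h3.symm
  have hB : ∀ (w : BS n) (k : ℤ), ∀ᶠ N in atTop,
      φ2 (L p (z N)) ((), w * b ^ (n * k)) = φ2 (L p (z N)) ((), w) := by
    intro w k
    induction k using Int.induction_on with
    | zero => simp
    | succ k ih =>
      filter_upwards [ih, hB1 (w * b ^ (n * (k : ℤ)))] with N h1 h2
      rw [← h1, ← h2, mul_add, mul_one, zpow_add, mul_assoc]
    | pred k ih =>
      filter_upwards [ih, hB1 (w * b ^ (n * (-(k : ℤ) - 1)))] with N h1 h2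
      rw [← h1, ← h2, mul_assoc w, ← zpow_add]; ring_nf
  by_contra! hc
  have hc' : ∀ w, ∃ k : ℤ, (f p)⁻¹ * w ∈ ((Set.range fun g => g⁻¹ * f (f' g)) * F3)⁻¹ →
      ∀ y ∈ P, (f (p * y))⁻¹ * (w * b ^ (n * k)) ∉ F2 := by
    intro w
    by_cases hw : (f p)⁻¹ * w ∈ ((Set.range fun g => g⁻¹ * f (f' g)) * F3)⁻¹
    · obtain ⟨k, hk⟩ := hc w hw
      exact ⟨k, fun _ => hk⟩
    · exact ⟨0, fun h => absurd h hw⟩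
  choose k hk using hc'
  have hWf : {w | (f p)⁻¹ * w ∈ ((Set.range fun g => g⁻¹ * f (f' g)) * F3)⁻¹}.Finite := by
    refine ((Set.finite_singleton (f p)).mul (near'.mul hF3).inv).subset ?_
    intro w hw
    exact ⟨f p, rfl, _, hw, by simp⟩
  have hC : ∀ᶠ N in atTop, ∀ w ∈ {w | (f p)⁻¹ * w ∈ ((Set.range fun g => g⁻¹ * f (f' g)) * F3)⁻¹},
      φ2 (L p (z N)) ((), w) = 0 := by
    rw [Filter.eventually_all_finite hWf]
    intro w hw
    have hY := h.proper (w * b ^ (n * k w)) hF2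
    have : ∀ᶠ N in atTop, ∀ y ∈ {y | (f y)⁻¹ * (w * b ^ (n * k w)) ∈ F2}, p⁻¹ * y ∉ P →
        z N ((), p⁻¹ * y) = 0 := by
      rw [Filter.eventually_all_finite hY]
      intro y _
      by_cases hy : p⁻¹ * y ∈ P
      · simp [hy]
      · filter_upwards [hz3 _ hy] with N hN _ using hN
    filter_upwards [this, hB w (k w)] with N h1 h2
    rw [← h2]
    by_contra h3
    obtain ⟨⟨⟨⟩, y⟩, hy, hyF⟩ := s2 _ _ h3
    rw [L_apply] at hy
    by_cases hyP : p⁻¹ * y ∈ P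
    · have := hk w hw _ hyP
      rw [mul_inv_cancel_left] at this
      exact this hyF
    · exact hy (h1 y hyF hyP)
  obtain ⟨N, ⟨w, hw, hw2⟩, h2⟩ := (hA.and hC).exists
  exact hw2 (h2 w hw)

end

end FM

set_option linter.unusedSectionVars false
set_option linter.unusedSimpArgs false

namespace FM

open Pointwise Filter

section
variable {m n : ℕ} [hm : Fact (2 ≤ m)] [hn : Fact (2 ≤ n)]

lemma d2_false (u) (g : BS n) : d2 n u (false, g) =
    ∑ i ∈ Finset.range n, u ((), g * (b ^ i)⁻¹) + u ((), g * a⁻¹) := by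
  classical
  have : (Finsupp.lapply (false, g)) ∘ₗ d2 n = ∑ i ∈ Finset.range n,
      Finsupp.lapply (R := ZMod 2) ((), g * (b ^ i)⁻¹) + Finsupp.lapply ((), g * a⁻¹) := by
    apply lin_ext
    rintro ⟨i, h⟩
    simp only [LinearMap.comp_apply, d2_dl, Finsupp.lapply_apply, LinearMap.add_apply,
      LinearMap.sum_apply,
      Finsupp.add_apply, Finsupp.finsetSum_apply, Finsupp.single_apply, Prod.mk.injEq]
    simp [eq_mul_inv_iff_mul_eq]
  have h2 := LinearMap.congr_fun this u
  simpa only [LinearMap.comp_apply, Finsupp.lapply_apply, LinearMap.add_apply,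
      LinearMap.sum_apply] using h2

/-- Infinite 2-cycles. -/
def Cyc (u : BS n → ZMod 2) : Prop := ∀ g, u g + u (g * (b ^ n)⁻¹) = 0 ∧
  ∑ i ∈ Finset.range n, u (g * (b ^ i)⁻¹) + u (g * a⁻¹) = 0

lemma key_lemma' {f : BS m → BS n} {f' : BS n → BS m} (h : CE f f')
    (u : BS m → ZMod 2) (hu : Cyc u) (hu1 : u 1 ≠ 0) :
    ∃ W F : Set (BS n), W.Finite ∧ F.Finite ∧ ∀ p, ∃ w, (f p)⁻¹ * w ∈ W ∧
      ∀ k : ℤ, ∃ y, u y ≠ 0 ∧ (f (p * y))⁻¹ * (w * b ^ (n * k)) ∈ F := by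
  classical
  let z : ℕ → Ch Unit (BS m) := fun N => Finsupp.onFinset
    ((Finset.univ : Finset Unit) ×ˢ (Bd_finite (n := m) N).toFinset)
    (fun x => if x.2 ∈ Bd m N then u x.2 else 0) (by
      intro x hx
      simp only [Finset.mem_product, Finset.mem_univ, true_and, Set.Finite.mem_toFinset]
      by_contra hc
      simp [hc] at hx)
  have hz : ∀ g, ∀ᶠ N in atTop, z N ((), g) = u g := by
    intro g
    obtain ⟨C, hC⟩ := exists_Bd {g} (Set.finite_singleton g)
    filter_upwards [eventually_ge_atTop C] with N hN
    have : g ∈ Bd m N := Bd_mono hN (hC rfl)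
    simp [z, this]
  refine key_lemma h z {y | u y ≠ 0} ?_ ?_ ?_
  · filter_upwards [hz 1] with N hN
    rwa [hN]
  · intro i g
    cases i with
    | true =>
      filter_upwards [hz g, hz (g * (b ^ m)⁻¹)] with N h1 h2
      rw [d2_true, h1, h2]; exact (hu g).1
    | false =>
      have h3 : ∀ᶠ N in atTop, ∀ i ∈ Finset.range m, z N ((), g * (b ^ i)⁻¹) = u (g * (b ^ i)⁻¹) := by
        rw [Filter.eventually_all_finset]
        intro i _
        exact hz _
      filter_upwards [h3, hz (g * a⁻¹)] with N h1 h2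
      rw [d2_false, h2, Finset.sum_congr rfl h1]; exact (hu g).2
  · intro g hg
    have : u g = 0 := by simpa using hg
    filter_upwards [hz g] with N hN
    rw [hN, this]

open Classical in
/-- The standard plane. -/
noncomputable def pl (g : BS n) : ZMod 2 := if Den n (ht g + 1) (X g) then 1 else 0

lemma den_sub_iff {k : ℤ} {y y' : ℚ} (h : Den n k y') : Den n k (y - y') ↔ Den n k y :=
  ⟨fun H => by convert H.add h using 1; ring, fun H => H.sub h⟩

lemma den_pow {k l : ℤ} (h : k ≤ l) : Den n k ((n : ℚ) ^ l) := Den.mono (k := l) ⟨1, by simp⟩ h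

lemma pl_cyc : Cyc (pl (n := n)) := by
  classical
  intro g
  constructor
  · have : pl (g * (b ^ n)⁻¹) = pl g := by
      simp only [pl, ht_mul, ht_inv, ht_pow, ht_b, X_mul, X_inv, X_b_pow, mul_zero, neg_zero,
        add_zero, zpow_zero, one_mul]
      rw [mul_neg, ← sub_eq_add_neg, den_sub_iff]
      convert den_pow (n := n) (le_refl (ht g + 1)) using 1
      rw [zpow_add₀ nne, zpow_one]
    rw [this]; exact CharTwo.add_self_eq_zero _
  · have e1 : pl (g * a⁻¹) = if Den n (ht g) (X g) then 1 else 0 := by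
      simp only [pl, ht_mul, ht_inv, ht_a, X_mul, X_inv, X_a, mul_zero, neg_zero, add_zero]
      ring_nf
    have e2 : ∀ i : ℕ, pl (g * (b ^ i)⁻¹) = if Den n (ht g + 1) (X g - i * (n : ℚ) ^ ht g) then 1 else 0 := by
      intro i
      simp only [pl, ht_mul, ht_inv, ht_pow, ht_b, X_mul, X_inv, X_b_pow, mul_zero, neg_zero,
        add_zero, zpow_zero, one_mul]
      rw [mul_neg, ← sub_eq_add_neg, mul_comm]
    simp only [e1, e2]
    by_cases h : Den n (ht g) (X g)
    · rw [if_pos h]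
      obtain ⟨y, hy⟩ := h
      have hn0 : (n : ℤ) ≠ 0 := by have := hn.out; omega
      have hn1 : (0 : ℤ) < n := by have := hn.out; omega
      have e3 : ∀ i ∈ Finset.range n, (if Den n (ht g + 1) (X g - i * (n : ℚ) ^ ht g) then (1 : ZMod 2) else 0) =
          if i = (y % n).toNat then 1 else 0 := by
        intro i hi
        rw [Finset.mem_range] at hi
        congr 1
        rw [eq_iff_iff]
        have h0 := Int.emod_nonneg y hn0
        have h1 := Int.emod_lt_of_pos y hn1
        have h2 := Int.emod_add_mul_ediv y n
        constructor
        · rintro ⟨z, hz⟩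
          rw [hy, ← sub_mul, zpow_add₀ nne, zpow_one] at hz
          have hz' : ((y : ℚ) - i) = z * n := by
            have := zpow_ne_zero (ht g) (nne (n := n))
            apply mul_right_cancel₀ this
            rw [hz]; ring
          have hz2 : y - i = z * n := by exact_mod_cast hz'
          have : y % n = i := by
            rw [show y = i + n * z by linarith, Int.add_mul_emod_self_left]
            exact Int.emod_eq_of_lt (by omega) (by omega)
          omega
        · intro hi'
          refine ⟨y / n, ?_⟩
          rw [hy, ← sub_mul, zpow_add₀ nne, zpow_one]
          have h3 : (i : ℤ) = y % n := by omega
          have h4 : (y : ℚ) - i = (y / n : ℤ) * n := by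
            have : y - i = (y / n) * n := by rw [h3]; linarith
            exact_mod_cast this
          rw [h4]; ring
      rw [Finset.sum_congr rfl e3, Finset.sum_ite_eq', if_pos]
      · exact CharTwo.add_self_eq_zero _
      · rw [Finset.mem_range]
        have h0 := Int.emod_nonneg y hn0
        have h1 := Int.emod_lt_of_pos y hn1
        omega
    · rw [if_neg h, add_zero]
      apply Finset.sum_eq_zero
      intro i _
      rw [if_neg]
      intro h2
      apply h
      have := (h2.mono (by omega : ht g ≤ ht g + 1)).add (⟨i, by simp⟩ : Den n (ht g) (i * (n : ℚ) ^ ht g))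
      simpa using this

lemma Cyc.add {u v : BS n → ZMod 2} (hu : Cyc u) (hv : Cyc v) : Cyc fun g => u g + v g := by
  intro g
  obtain ⟨h1, h2⟩ := hu g
  obtain ⟨h3, h4⟩ := hv g
  refine ⟨by linear_combination h1 + h3, ?_⟩
  rw [Finset.sum_add_distrib]
  linear_combination h2 + h4

lemma Cyc.left {u : BS n → ZMod 2} (hu : Cyc u) (x : BS n) : Cyc fun g => u (x * g) := by
  intro g
  have := hu (x * g)
  simpa only [mul_assoc] using this

lemma den_one {k : ℤ} (h : Den n k 1) : k ≤ 0 := by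
  by_contra hk
  push Not at hk
  obtain ⟨z, hz⟩ := h.mono (show (1 : ℤ) ≤ k by omega)
  rw [zpow_one] at hz
  have : (1 : ℤ) = z * n := by exact_mod_cast hz
  have h2 : (n : ℤ) ∣ 1 := ⟨z, by linarith⟩
  have := Int.le_of_dvd one_pos h2
  have := hn.out
  omega

/-- The union of the two upper half planes. -/
noncomputable def pl2 (g : BS n) : ZMod 2 := pl g + pl (b⁻¹ * g)

lemma pl2_cyc : Cyc (pl2 (n := n)) := pl_cyc.add (pl_cyc.left _)

lemma pl2_one : pl2 (1 : BS n) ≠ 0 := by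
  have h1 : pl (1 : BS n) = 1 := by simp [pl, Den.zero]
  have h2 : pl (b⁻¹ * 1 : BS n) = 0 := by
    simp only [pl, mul_one, ht_inv, ht_b, X_inv, X_b]
    rw [if_neg]
    intro h
    have := den_one (n := n) (by simpa using h.neg)
    simp at this
  rw [pl2, h1, h2]; simp

lemma pl2_supp (g : BS n) (h : pl2 g ≠ 0) : 0 ≤ ht g := by
  by_contra hc
  apply h
  have : pl (b⁻¹ * g) = pl g := by
    have e : X (b⁻¹ * g) = X g - 1 := by simp; ring
    have e2 : ht (b⁻¹ * g) = ht g := by simp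
    unfold pl
    rw [e, e2]
    have h1 : Den n (ht g + 1) 1 := by
      simpa using den_pow (n := n) (show ht g + 1 ≤ 0 by omega)
    by_cases hD : Den n (ht g + 1) (X g)
    · rw [if_pos hD, if_pos ((den_sub_iff h1).2 hD)]
    · rw [if_neg hD, if_neg (fun h => hD ((den_sub_iff h1).1 h))]
  rw [pl2, this]; exact CharTwo.add_self_eq_zero _

lemma pl_supp (g : BS n) (h : pl g ≠ 0) : Den n (ht g + 1) (X g) := by
  by_contra hc
  simp [pl, hc] at h

/-- Coarse intersection of two planes and an upper half space. -/
lemma coarse_int (C : ℕ) : ∃ E : Set (BS n), E.Finite ∧ ∀ g : BS n,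
    (∃ y, pl y ≠ 0 ∧ y⁻¹ * g ∈ Bd n C) → (∃ y, pl y ≠ 0 ∧ (b * y)⁻¹ * g ∈ Bd n C) →
    (∃ y, pl2 y ≠ 0 ∧ y⁻¹ * g ∈ Bd n C) → ∃ j : ℤ, (b ^ j)⁻¹ * g ∈ E := by
  refine ⟨Bd n (3 * C + 1), Bd_finite _, ?_⟩
  have key : ∀ y e : BS n, e ∈ Bd n C → pl y ≠ 0 → Den n (ht (y * e) - 2 * C) (X (y * e)) := by
    rintro y e ⟨h1, h2, h3⟩ hy
    have h4 := pl_supp y hy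
    rw [abs_le] at h1
    rw [X_mul, ht_mul]
    exact (h4.mono (by omega)).add ((h3.zpow_mul (ht y)).mono (by omega))
  rintro g ⟨y1, hy1, hg1⟩ ⟨y2, hy2, hg2⟩ ⟨y3, hy3, hg3⟩
  have k1 := key _ _ hg1 hy1
  rw [mul_inv_cancel_left] at k1
  have k2 := key _ _ hg2 hy2
  have e2 : y2 * ((b * y2)⁻¹ * g) = b⁻¹ * g := by group
  rw [e2] at k2
  have e3 : X (b⁻¹ * g) = X g - 1 := by simp; ring
  have e4 : ht (b⁻¹ * g) = ht g := by simp
  rw [e3, e4] at k2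
  have k3 : Den n (ht g - 2 * C) 1 := by
    have := k1.sub k2
    simpa using this
  have k4 := den_one k3
  have k5 := pl2_supp _ hy3
  have k6 := hg3.1
  rw [ht_mul, ht_inv, abs_le] at k6
  refine ⟨⌊X g⌋, ?_, ?_, ?_⟩
  · rw [abs_le]; simp; omega
  · have e : X ((b ^ ⌊X g⌋)⁻¹ * g) = X g - ⌊X g⌋ := by
      rw [X_mul, X_inv, ht_inv, ht_zpow, ht_b, X_b_zpow]
      simp only [mul_zero, neg_zero, zpow_zero, one_mul]
      ring
    rw [e, abs_of_nonneg (by linarith [Int.floor_le (X g)])]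
    have := Int.lt_floor_add_one (X g)
    push_cast
    have : (0 : ℚ) ≤ C := by positivity
    linarith
  · have e : X ((b ^ ⌊X g⌋)⁻¹ * g) = X g - ⌊X g⌋ := by
      rw [X_mul, X_inv, ht_inv, ht_zpow, ht_b, X_b_zpow]
      simp only [mul_zero, neg_zero, zpow_zero, one_mul]
      ring
    rw [e]
    exact (k1.mono (by push_cast; omega)).sub ((Den.int _).mono (by push_cast; omega))

/-- Sliding a bounded element along a horizontal line. -/
lemma slide {D : Set (BS n)} (hD : D.Finite) : ∃ D' : Set (BS n), D'.Finite ∧ ∀ d ∈ D, ∀ k : ℤ,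
    ∃ j : ℤ, b ^ (-(n * k)) * d * b ^ (n * j) ∈ D' := by
  have : ∀ d : BS n, ∃ C : ℕ, ∀ k : ℤ, ∃ j : ℤ, b ^ (-(n * k)) * d * b ^ (n * j) ∈ Bd n C := by
    intro d
    obtain ⟨c, hc⟩ := exists_Bd {d} (Set.finite_singleton d)
    obtain ⟨h1, h2, h3⟩ := hc rfl
    have hp : (0 : ℚ) < (n : ℚ) ^ (ht d + 1) := zpow_pos npos _
    obtain ⟨c', hc'⟩ := exists_nat_ge ((n : ℚ) ^ (ht d + 1))
    refine ⟨c + c', fun k => ⟨⌊(n * k : ℚ) / (n : ℚ) ^ (ht d + 1)⌋, ?_⟩⟩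
    set j := ⌊(n * k : ℚ) / (n : ℚ) ^ (ht d + 1)⌋
    have f1 := Int.floor_le ((n * k : ℚ) / (n : ℚ) ^ (ht d + 1))
    have f2 := Int.lt_floor_add_one ((n * k : ℚ) / (n : ℚ) ^ (ht d + 1))
    rw [le_div_iff₀ hp] at f1
    rw [div_lt_iff₀ hp] at f2
    have e : X (b ^ (-(n * k)) * d * b ^ (n * j)) = X d + (j * (n : ℚ) ^ (ht d + 1) - n * k) := by
      rw [X_mul, X_mul, X_b_zpow, ht_mul, ht_zpow, ht_b, X_b_zpow]
      push_cast
      simp only [mul_zero, zpow_zero, one_mul, zero_add]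
      rw [zpow_add₀ nne, zpow_one]
      ring
    refine ⟨?_, ?_, ?_⟩
    · rw [abs_le] at h1 ⊢
      simp only [ht_mul, ht_zpow, ht_b]
      push_cast
      omega
    · rw [e]
      rw [abs_le] at h2 ⊢
      push_cast
      constructor <;> nlinarith
    · rw [e]
      refine (h3.mono (by push_cast; omega)).add (Den.sub ?_ ?_)
      · refine Den.mono (k := ht d + 1) ⟨j, rfl⟩ ?_
        rw [abs_le] at h1
        push_cast; omega
      · refine Den.mono (k := 0) ?_ (by push_cast; omega)
        exact_mod_cast Den.int (n := n) (n * k)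
  choose C hC using this
  exact ⟨⋃ d ∈ D, Bd n (C d), hD.biUnion fun d _ => Bd_finite _, fun d hd k => by
    obtain ⟨j, hj⟩ := hC d k
    refine ⟨j, ?_⟩
    simp only [Set.mem_iUnion]
    exact ⟨d, hd, hj⟩⟩

/-- Horizontal lines go near horizontal lines, preliminary form. -/
lemma line1 {f : BS m → BS n} {f' : BS n → BS m} (h : CE f f') :
    ∃ E : Set (BS m), E.Finite ∧ ∀ p, ∃ w, ∀ k : ℤ, ∃ j : ℤ,
      (p * b ^ j)⁻¹ * f' (w * b ^ (n * k)) ∈ E := by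
  obtain ⟨W0, F0, hW0, hF0, H0⟩ := key_lemma' h pl pl_cyc (by simp [pl, Den.zero])
  obtain ⟨W1, F1, hW1, hF1, H1⟩ := key_lemma' h pl2 pl2_cyc pl2_one
  have near : (Set.range fun g => g⁻¹ * f' (f g)).Finite := h.near
  -- general pull back
  have pull : ∀ F : Set (BS n), F.Finite → ∃ F' : Set (BS m), F'.Finite ∧
      ∀ x v, (f x)⁻¹ * v ∈ F → x⁻¹ * f' v ∈ F' := by
    intro F hF
    obtain ⟨F', hF', h'⟩ := h.bf'.fin hF
    exact ⟨_, near.mul hF', fun x v hx => ⟨_, ⟨x, rfl⟩, _, h' _ _ hx, by simp [mul_assoc]⟩⟩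
  obtain ⟨P0, hP0, H0'⟩ := pull F0 hF0
  obtain ⟨P1, hP1, H1'⟩ := pull F1 hF1
  -- differences of the base points
  obtain ⟨Fb, hFb, hb⟩ := h.bf.fin (Set.finite_singleton (b : BS m))
  have hD : (W0⁻¹ * (Fb * W0) ∪ W0⁻¹ * W1).Finite :=
    (hW0.inv.mul (hFb.mul hW0)).union (hW0.inv.mul hW1)
  obtain ⟨D', hD', hs⟩ := slide hD
  obtain ⟨D2, hD2, hs2⟩ := h.bf'.fin hD'.inv
  obtain ⟨C, hC⟩ := exists_Bd (P0 ∪ P0 * D2 ∪ P1 * D2) ((hP0.union (hP0.mul hD2)).union (hP1.mul hD2))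
  obtain ⟨E, hE, HE⟩ := coarse_int (n := m) C
  refine ⟨E, hE, fun p => ?_⟩
  obtain ⟨w0, hw0, K0⟩ := H0 p
  obtain ⟨w1, hw1, K1⟩ := H0 (p * b)
  obtain ⟨w2, hw2, K2⟩ := H1 p
  have d1 : w0⁻¹ * w1 ∈ W0⁻¹ * (Fb * W0) ∪ W0⁻¹ * W1 := by
    left
    refine ⟨((f p)⁻¹ * w0)⁻¹, by rwa [Set.inv_mem_inv], _, ⟨_, hb p (p * b) (by simp), _, hw1, rfl⟩, ?_⟩
    simp [mul_assoc]
  have d2 : w0⁻¹ * w2 ∈ W0⁻¹ * (Fb * W0) ∪ W0⁻¹ * W1 := by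
    right
    refine ⟨((f p)⁻¹ * w0)⁻¹, by rwa [Set.inv_mem_inv], _, hw2, ?_⟩
    simp
  have tr : ∀ (w' : BS n) (k : ℤ), w0⁻¹ * w' ∈ W0⁻¹ * (Fb * W0) ∪ W0⁻¹ * W1 → ∃ j : ℤ,
      (f' (w' * b ^ (n * j)))⁻¹ * f' (w0 * b ^ (n * k)) ∈ D2 := by
    intro w' k hw'
    obtain ⟨j, hj⟩ := hs _ hw' k
    refine ⟨j, hs2 _ _ ?_⟩
    rw [Set.mem_inv]
    convert hj using 1
    group
  refine ⟨w0, fun k => ?_⟩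
  have A1 : ∃ y, pl y ≠ 0 ∧ y⁻¹ * (p⁻¹ * f' (w0 * b ^ (n * k))) ∈ Bd m C := by
    obtain ⟨y, hy, hyF⟩ := K0 k
    refine ⟨y, hy, hC (Or.inl (Or.inl ?_))⟩
    have := H0' _ _ hyF
    convert this using 1
    group
  have A2 : ∃ y, pl y ≠ 0 ∧ (b * y)⁻¹ * (p⁻¹ * f' (w0 * b ^ (n * k))) ∈ Bd m C := by
    obtain ⟨j, hj⟩ := tr w1 k d1
    obtain ⟨y, hy, hyF⟩ := K1 j
    refine ⟨y, hy, hC (Or.inl (Or.inr ⟨_, H0' _ _ hyF, _, hj, ?_⟩))⟩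
    simp; group
  have A3 : ∃ y, pl2 y ≠ 0 ∧ y⁻¹ * (p⁻¹ * f' (w0 * b ^ (n * k))) ∈ Bd m C := by
    obtain ⟨j, hj⟩ := tr w2 k d2
    obtain ⟨y, hy, hyF⟩ := K2 j
    refine ⟨y, hy, hC (Or.inr ⟨_, H1' _ _ hyF, _, hj, ?_⟩)⟩
    simp; group
  obtain ⟨j, hj⟩ := HE _ A1 A2 A3
  refine ⟨j, ?_⟩
  convert hj using 1
  group

end

end FM

set_option linter.unusedSectionVars false
set_option linter.unusedSimpArgs false

namespace FM

open Pointwise Filter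

/-- Lipschitz from steps. -/
lemma lip_int (k : ℤ → ℤ) (C : ℤ) (h : ∀ j, |k (j + 1) - k j| ≤ C) (i j : ℤ) :
    |k i - k j| ≤ C * |i - j| := by
  have h1 : ∀ (d : ℕ) (j : ℤ), |k (j + d) - k j| ≤ C * d := by
    intro d j
    induction d with
    | zero => simp
    | succ d ih =>
      have := h (j + d)
      rw [abs_le] at this ih ⊢
      push_cast
      rw [← add_assoc]
      constructor <;> linarith
  rcases le_total j i with hij | hij
  · obtain ⟨d, rfl⟩ := Int.le.dest hij
    have := h1 d j
    rw [add_sub_cancel_left, Nat.abs_cast]; exact this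
  · obtain ⟨d, rfl⟩ := Int.le.dest hij
    have := h1 d i
    rw [abs_sub_comm, abs_sub_comm i, add_sub_cancel_left, Nat.abs_cast]; exact this

lemma climb (h : ℕ → ℤ) (C : ℤ) (D : ℤ) (j : ℤ) (hj : ∀ k, j ≤ h k)
    (hs : ∀ k, |h (k + 1) - h k| ≤ C) (he : ∀ k k', |h k - h k'| ≤ C → |(k : ℤ) - k'| ≤ D)
    (M : ℤ) (hM : h 0 < M) : ∃ k : ℕ, M ≤ h k ∧ h k ≤ M + C := by
  classical
  have hex : ∃ k, M ≤ h k := by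
    by_contra! hc
    have hC : 0 ≤ C := (abs_nonneg _).trans (hs 0)
    have hmap : Set.MapsTo h Set.univ (Set.Icc j M) := fun k _ => ⟨hj k, (hc k).le⟩
    obtain ⟨y, hy, hinf⟩ : ∃ y ∈ Set.Icc j M, (h ⁻¹' {y}).Infinite := by
      by_contra! hfin
      have : (⋃ y ∈ Set.Icc j M, h ⁻¹' {y}).Finite :=
        (Set.finite_Icc j M).biUnion fun y hy => Set.not_infinite.1 (by simpa using hfin y hy)
      apply Set.infinite_univ (α := ℕ)
      refine this.subset ?_
      intro k _
      simp only [Set.mem_iUnion]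
      exact ⟨h k, hmap trivial, rfl⟩
    obtain ⟨k0, hk0⟩ := hinf.nonempty
    apply hinf
    refine (Set.finite_Iic (k0 + D.toNat)).subset ?_
    intro k hk
    have := he k k0 (by rw [show h k = y from hk, show h k0 = y from hk0]; simpa using hC)
    rw [abs_le] at this
    simp only [Set.mem_Iic]
    omega
  have h1 := Nat.find_spec hex
  refine ⟨Nat.find hex, h1, ?_⟩
  rcases hk : Nat.find hex with _ | k
  · rw [hk] at h1; omega
  · have h2 := Nat.find_min hex (m := k) (by omega)
    have h3 := hs k
    rw [abs_le] at h3
    omega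

/-- Coarse surjectivity on `ℤ`. -/
lemma onto_half (g : ℤ → ℤ) (C D : ℤ) (hs : ∀ k, |g (k + 1) - g k| ≤ C)
    (he : ∀ k k', |g k - g k'| ≤ C → |k - k'| ≤ D) (j : ℤ) : ∃ k, g k < j := by
  by_contra! hc
  have hC : 0 ≤ C := (abs_nonneg _).trans (hs 0)
  have hD : 0 ≤ D := (abs_nonneg _).trans (he 0 0 (by simpa using hC))
  have key : ∀ σ : ℤ, (σ = 1 ∨ σ = -1) → ∃ k : ℕ, g 0 + 1 + C * D ≤ g (σ * k) ∧
      g (σ * k) ≤ g 0 + 1 + C * D + C := by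
    intro σ hσ
    refine climb (fun k => g (σ * k)) C D j (fun k => hc _) ?_ ?_ _ ?_
    · intro k
      rcases hσ with rfl | rfl
      · have := hs k; simpa using this
      · have := hs (-(k : ℤ) - 1)
        rw [abs_sub_comm]
        push_cast
        convert this using 3 <;> ring_nf
    · intro k k' hk
      have := he _ _ hk
      rcases hσ with rfl | rfl
      · simpa using this
      · rw [abs_sub_comm]; convert this using 2; ring
    · simp only [Nat.cast_zero, mul_zero]
      nlinarith
  obtain ⟨k, h1, h2⟩ := key 1 (Or.inl rfl)
  obtain ⟨k', h3, h4⟩ := key (-1) (Or.inr rfl)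
  have h5 := he (1 * k) (-1 * k') (by rw [abs_le]; constructor <;> linarith)
  have h6 := lip_int g C hs (1 * k) 0
  rw [abs_le] at h5 h6
  simp only [one_mul, sub_zero, Nat.abs_cast] at h6 h1 h5
  have : (k : ℤ) ≤ D := by linarith [(Nat.cast_nonneg k' : (0 : ℤ) ≤ k')]
  nlinarith

lemma onto_int (g : ℤ → ℤ) (C D : ℤ) (hs : ∀ k, |g (k + 1) - g k| ≤ C)
    (he : ∀ k k', |g k - g k'| ≤ C → |k - k'| ≤ D) (j : ℤ) : ∃ k, |g k - j| ≤ C := by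
  by_contra! hc
  obtain ⟨k1, hk1⟩ := onto_half g C D hs he j
  obtain ⟨k2, hk2⟩ := onto_half (fun k => - g k) C D
    (fun k => by rw [← abs_neg]; convert hs k using 2; ring)
    (fun k k' h => he k k' (by rw [← abs_neg]; convert h using 2; ring)) (-j)
  have hk2' : j < g k2 := by linarith
  have step : ∀ k, g (k + 1) < j ↔ g k < j := by
    intro k
    have h1 := hs k
    have h2 := hc k
    have h3 := hc (k + 1)
    rw [abs_le] at h1
    rw [lt_abs] at h2 h3
    omega
  have all : ∀ d : ℕ, ∀ k, g (k + d) < j ↔ g k < j := by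
    intro d k
    induction d with
    | zero => simp
    | succ d ih => rw [← ih]; push_cast; rw [← add_assoc]; exact step _
  rcases le_total k1 k2 with h | h
  · obtain ⟨d, rfl⟩ := Int.le.dest h
    have := (all d k1).2 hk1
    omega
  · obtain ⟨d, rfl⟩ := Int.le.dest h
    have := (all d k2).1 hk1
    omega

lemma CE.expand {G H : Type*} [Group G] [Group H] {f : G → H} {f' : H → G} (h : CE f f')
    {F : Set H} (hF : F.Finite) : ∃ F' : Set G, F'.Finite ∧ ∀ x y, (f x)⁻¹ * f y ∈ F → x⁻¹ * y ∈ F' := by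
  obtain ⟨F1, hF1, h1⟩ := h.bf'.fin hF
  have near : (Set.range fun g => g⁻¹ * f' (f g)).Finite := h.near
  refine ⟨_, (near.mul hF1).mul near.inv, fun x y hxy => ?_⟩
  refine ⟨_, ⟨_, ⟨x, rfl⟩, _, h1 _ _ hxy, rfl⟩, (y⁻¹ * f' (f y))⁻¹, ?_, ?_⟩
  · rw [Set.inv_mem_inv]; exact ⟨y, rfl⟩
  · simp [mul_assoc]

section
variable {m n : ℕ} [hm : Fact (2 ≤ m)] [hn : Fact (2 ≤ n)]

lemma bpow_bdd {F : Set (BS n)} (hF : F.Finite) : ∃ C : ℕ, ∀ k : ℤ, b ^ k ∈ F → |k| ≤ C := by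
  obtain ⟨C, hC⟩ := exists_Bd F hF
  refine ⟨C, fun k hk => ?_⟩
  have := (hC hk).2.1
  rw [X_b_zpow] at this
  exact_mod_cast this

lemma bpow_fin (C : ℤ) : {g : BS n | ∃ k : ℤ, |k| ≤ C ∧ g = b ^ k}.Finite := by
  refine ((Set.finite_Icc (-C) C).image fun k : ℤ => (b : BS n) ^ k).subset ?_
  rintro _ ⟨k, hk, rfl⟩
  exact ⟨k, abs_le.1 hk, rfl⟩

lemma line2 {f : BS m → BS n} {f' : BS n → BS m} (h : CE f f') :
    ∃ E : Set (BS m), E.Finite ∧ ∀ p, ∃ w, ∀ k : ℤ, ∃ j : ℤ,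
      (p * b ^ j)⁻¹ * f' (w * b ^ k) ∈ E := by
  obtain ⟨E, hE, H⟩ := line1 h
  obtain ⟨F, hF, hF'⟩ := h.bf'.fin (bpow_fin (n := n) n)
  refine ⟨E * F, hE.mul hF, fun p => ?_⟩
  obtain ⟨w, hw⟩ := H p
  refine ⟨w, fun k => ?_⟩
  obtain ⟨j, hj⟩ := hw (k / n)
  refine ⟨j, _, hj, _, hF' (w * b ^ (n * (k / n))) (w * b ^ k) ⟨k % n, ?_, ?_⟩, ?_⟩
  · have hn0 : (0 : ℤ) < n := by have := hn.out; omega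
    have h0 := Int.emod_nonneg k hn0.ne'
    have h1 := Int.emod_lt_of_pos k hn0
    rw [abs_of_nonneg h0]; omega
  · have := Int.mul_ediv_add_emod k n
    nth_rewrite 2 [← this]
    rw [zpow_add]; group
  · simp [mul_assoc]

/-- Horizontal lines are mapped near horizontal lines. -/
lemma line3 {f : BS m → BS n} {f' : BS n → BS m} (h : CE f f') :
    ∃ A : ℕ, ∀ p, ∃ (w : BS n) (k : ℤ → ℤ), (∀ j, (w * b ^ k j)⁻¹ * f (p * b ^ j) ∈ Bd n A) ∧
      ∀ i j, |k i - k j| ≤ A * |i - j| ∧ |i - j| ≤ A * |k i - k j| + A := by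
  obtain ⟨E, hE, H⟩ := line2 h
  obtain ⟨F1, hF1, b1⟩ := h.bf'.fin (Set.finite_singleton (b : BS n))
  obtain ⟨C1, hC1⟩ := bpow_bdd ((hE.mul hF1).mul hE.inv)
  have hB := bpow_fin (n := m) C1
  obtain ⟨F2, hF2, e2⟩ := h.symm.expand ((hE.inv.mul hB).mul hE)
  obtain ⟨D, hD⟩ := bpow_bdd hF2
  obtain ⟨F3, hF3, b3⟩ := h.bf.fin (hE.inv.mul hB)
  have near' : (Set.range fun g => g⁻¹ * f (f' g)).Finite := h.near'
  have hF4 := near'.mul hF3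
  obtain ⟨A1, hA1⟩ := exists_Bd _ hF4
  obtain ⟨Fb, hFb, bb⟩ := h.bf.fin (Set.finite_singleton (b : BS m))
  obtain ⟨C2, hC2⟩ := bpow_bdd ((hF4.mul hFb).mul hF4.inv)
  refine ⟨A1 + C2 + 2 * C1, fun p => ?_⟩
  obtain ⟨w, hw⟩ := H p
  choose g hg using hw
  have hs : ∀ k, |g (k + 1) - g k| ≤ C1 := by
    intro k
    apply hC1
    refine ⟨_, ⟨_, hg k, _, b1 (w * b ^ k) (w * b ^ (k + 1)) ?_, rfl⟩, _, Set.inv_mem_inv.2 (hg (k + 1)), ?_⟩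
    · rw [zpow_add_one]; simp [mul_assoc]
    · simp [mul_assoc]; group
  have he : ∀ k k', |g k - g k'| ≤ C1 → |k - k'| ≤ D := by
    intro k k' hk
    rw [abs_sub_comm]
    apply hD
    have : (w * b ^ k)⁻¹ * (w * b ^ k') ∈ F2 := by
      apply e2
      refine ⟨_, ⟨_, Set.inv_mem_inv.2 (hg k), b ^ (-(g k) + g k'), ⟨_, ?_, rfl⟩, rfl⟩, _, hg k', ?_⟩
      · rw [show -(g k) + g k' = -(g k - g k') by ring, abs_neg]; exact hk
      · simp [mul_assoc, zpow_add]
    convert this using 1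
    group
  choose k hk using onto_int g C1 D hs he
  have hk2 : ∀ j, (w * b ^ k j)⁻¹ * f (p * b ^ j) ∈ (Set.range fun g => g⁻¹ * f (f' g)) * F3 := by
    intro j
    refine ⟨_, ⟨w * b ^ k j, rfl⟩, _, b3 (f' (w * b ^ k j)) (p * b ^ j) ?_, ?_⟩
    · refine ⟨_, Set.inv_mem_inv.2 (hg (k j)), b ^ (j - g (k j)), ⟨_, ?_, rfl⟩, ?_⟩
      · rw [abs_sub_comm]; exact hk j
      · simp [mul_assoc, zpow_sub]; group
    · simp [mul_assoc]
  have hks : ∀ j, |k (j + 1) - k j| ≤ C2 := by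
    intro j
    apply hC2
    refine ⟨_, ⟨_, hk2 j, _, bb (p * b ^ j) (p * b ^ (j + 1)) ?_, rfl⟩, _, Set.inv_mem_inv.2 (hk2 (j + 1)), ?_⟩
    · rw [zpow_add_one]; simp [mul_assoc]
    · simp [mul_assoc]; group
  refine ⟨w, k, fun j => Bd_mono (by omega) (hA1 (hk2 j)), fun i j => ⟨?_, ?_⟩⟩
  · have := lip_int k C2 hks i j
    have h0 := abs_nonneg (i - j)
    push_cast
    nlinarith
  · have h1 := lip_int g C1 hs (k i) (k j)
    have h2 := hk i
    have h3 := hk j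
    have h0 := abs_nonneg (k i - k j)
    have h4 : |i - j| ≤ |g (k i) - g (k j)| + 2 * C1 := by
      rw [abs_le] at h2 h3
      have h5 := le_abs_self (g (k i) - g (k j))
      have h6 := neg_abs_le (g (k i) - g (k j))
      rw [abs_le]
      constructor <;> linarith
    push_cast
    nlinarith

end

end FM

set_option linter.unusedSectionVars false
set_option linter.unusedSimpArgs false

namespace FM

open Pointwise Filter

lemma arch_le (x y c : ℚ) (h : ∀ j : ℕ, x * j ≤ y * j + c) : x ≤ y := by
  by_contra! hc
  obtain ⟨j, hj⟩ := exists_nat_gt (c / (x - y))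
  rw [div_lt_iff₀ (by linarith)] at hj
  have := h j
  nlinarith

section
variable {m n : ℕ} [hm : Fact (2 ≤ m)] [hn : Fact (2 ≤ n)]

lemma zp_pos (k : ℤ) : (0 : ℚ) < (n : ℚ) ^ k := zpow_pos npos k

lemma zp_le {k l : ℤ} (h : k ≤ l) : (n : ℚ) ^ k ≤ (n : ℚ) ^ l := zpow_le_zpow_right₀ none' h

/-- Quantitative form of `line3`. -/
lemma line4 {f : BS m → BS n} {f' : BS n → BS m} (h : CE f f') :
    ∃ A : ℕ, 1 ≤ A ∧ ∀ p, ∃ τ : ℤ, (∀ j : ℤ, |ht (f (p * b ^ j)) - τ| ≤ A) ∧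
      ∀ j : ℕ, |X (f (p * b ^ j)) - X (f p)| ≤ (n : ℚ) ^ τ * (A * j + A) ∧
        (n : ℚ) ^ τ * j ≤ A * |X (f (p * b ^ j)) - X (f p)| + (n : ℚ) ^ τ * A := by
  obtain ⟨A, H⟩ := line3 h
  refine ⟨A + 2 * A + 2 * A * A + 1, by omega, fun p => ?_⟩
  obtain ⟨w, k, hk, hL⟩ := H p
  have e : ∀ j, f (p * b ^ j) = w * b ^ k j * ((w * b ^ k j)⁻¹ * f (p * b ^ j)) := by
    intro j; group
  refine ⟨ht w, fun j => ?_, fun j => ?_⟩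
  · have := (hk j).1
    rw [e j, ht_mul]
    generalize (w * b ^ k j)⁻¹ * f (p * b ^ j) = d at this
    simp only [ht_mul, ht_zpow, ht_b, mul_zero, add_zero, add_sub_cancel_left]
    refine this.trans ?_
    push_cast
    nlinarith
  · have hX : ∀ j, ∃ r : ℚ, |r| ≤ A ∧ X (f (p * b ^ j)) = X w + (n : ℚ) ^ ht w * (k j + r) := by
      intro j
      have e' := e j
      have hd := (hk j).2.1
      generalize (w * b ^ k j)⁻¹ * f (p * b ^ j) = d at e' hd
      refine ⟨X d, hd, ?_⟩
      rw [e']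
      simp
      ring
    obtain ⟨r, hr, hr'⟩ := hX j
    obtain ⟨r0, hr0, hr0'⟩ := hX 0
    simp only [zpow_zero, mul_one] at hr0'
    have hp := zp_pos (n := n) (ht w)
    have e1 : X (f (p * b ^ (j : ℤ))) - X (f p) = (n : ℚ) ^ ht w * ((k j - k 0) + (r - r0)) := by
      rw [hr', hr0']; ring
    rw [zpow_natCast] at e1
    rw [e1, abs_mul, abs_of_pos hp]
    obtain ⟨h1, h2⟩ := hL j 0
    have h1' : |(k j : ℚ) - k 0| ≤ A * j := by
      have : |k j - k 0| ≤ A * (j : ℤ) := by simpa using h1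
      exact_mod_cast this
    have h2' : (j : ℚ) ≤ A * |(k j : ℚ) - k 0| + A := by
      have : (j : ℤ) ≤ A * |k j - k 0| + A := by simpa using h2
      exact_mod_cast this
    have h3 : |r - r0| ≤ 2 * A := by
      rw [abs_le] at *; constructor <;> linarith
    have hA : (0 : ℚ) ≤ A := by positivity
    have hj : (0 : ℚ) ≤ j := by positivity
    constructor
    · apply mul_le_mul_of_nonneg_left _ hp.le
      refine (abs_add_le _ _).trans ?_
      push_cast
      nlinarith [mul_nonneg hA hj, mul_nonneg hA hA, mul_nonneg (mul_nonneg hA hA) hj]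
    · have h4 : |(k j : ℚ) - k 0| ≤ |(k j : ℚ) - k 0 + (r - r0)| + 2 * A := by
        have := abs_sub ((k j : ℚ) - k 0 + (r - r0)) (r - r0)
        rw [add_sub_cancel_right] at this
        linarith
      have h0 := abs_nonneg ((k j : ℚ) - k 0 + (r - r0))
      have h5 : (j : ℚ) ≤ (A + 2 * A + 2 * A * A + 1) * |(k j : ℚ) - k 0 + (r - r0)|
          + (A + 2 * A + 2 * A * A + 1) := by
        nlinarith [mul_le_mul_of_nonneg_left h4 hA, mul_nonneg hA h0, mul_nonneg (mul_nonneg hA hA) h0]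
      push_cast
      calc (n : ℚ) ^ ht w * j ≤ (n : ℚ) ^ ht w * _ := mul_le_mul_of_nonneg_left h5 hp.le
        _ = _ := by ring

lemma vert {f : BS m → BS n} {f' : BS n → BS m} (h : CE f f') :
    ∃ B : ℚ, 0 < B ∧ ∀ p : BS m, ∀ s : ℕ,
      (n : ℚ) ^ ht (f (p * a ^ s)) ≤ B * (m ^ s * (n : ℚ) ^ ht (f p)) ∧
      m ^ s * (n : ℚ) ^ ht (f p) ≤ B * (n : ℚ) ^ ht (f (p * a ^ s)) := by
  obtain ⟨A, hA1, H⟩ := line4 h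
  have hA : (0 : ℚ) < A := by exact_mod_cast hA1
  have hnA := zp_pos (n := n) A
  refine ⟨(n : ℚ) ^ (A : ℤ) * (n : ℚ) ^ (A : ℤ) * (A * A), by positivity, fun p s => ?_⟩
  obtain ⟨F, hF, hF'⟩ := h.bf.fin (Set.finite_singleton (a ^ s : BS m))
  obtain ⟨C, hC⟩ := exists_Bd F hF
  obtain ⟨τ, h1, h2⟩ := H (p * a ^ s)
  obtain ⟨τ', h1', h2'⟩ := H p
  have key : ∀ j : ℕ, |X (f (p * a ^ s * b ^ j)) - X (f (p * b ^ (m ^ s * j)))| ≤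
      (n : ℚ) ^ (τ' + A) * C := by
    intro j
    have e : p * a ^ s * b ^ j = p * b ^ (m ^ s * j) * a ^ s := by
      have := a_pow_b (n := m) s j
      rw [zpow_natCast] at this
      rw [mul_assoc, this, ← mul_assoc]
      congr 2
    rw [e]
    have h3 := hC (hF' (p * b ^ (m ^ s * j)) (p * b ^ (m ^ s * j) * a ^ s) (by simp [mul_assoc]))
    have h4 : f (p * b ^ (m ^ s * j) * a ^ s) = f (p * b ^ (m ^ s * j)) *
      ((f (p * b ^ (m ^ s * j)))⁻¹ * f (p * b ^ (m ^ s * j) * a ^ s)) := by group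
    rw [h4, X_mul, add_sub_cancel_left, abs_mul, abs_of_pos (zp_pos _)]
    have h5 := h1' (m ^ s * j : ℕ)
    rw [zpow_natCast, abs_le] at h5
    exact mul_le_mul (zp_le (by linarith)) h3.2.1 (abs_nonneg _) (zp_pos _).le
  have k0 := key 0
  simp only [pow_zero, mul_zero, mul_one] at k0
  set E := (n : ℚ) ^ (τ' + A) * C with hE
  have t1 : (n : ℚ) ^ τ ≤ A * A * (m ^ s * (n : ℚ) ^ τ') := by
    apply arch_le _ _ (A * ((n : ℚ) ^ τ' * A + 2 * E) + (n : ℚ) ^ τ * A)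
    intro j
    have := (h2' (m ^ s * j)).1
    have h3 := (h2 j).2
    have k1 := key j
    have : |X (f (p * a ^ s * b ^ j)) - X (f (p * a ^ s))| ≤ (n : ℚ) ^ τ' * (A * (m ^ s * j) + A) + 2 * E := by
      push_cast at this
      rw [abs_le] at *
      constructor <;> linarith
    nlinarith [mul_le_mul_of_nonneg_left this hA.le]
  have t2 : m ^ s * (n : ℚ) ^ τ' ≤ A * A * (n : ℚ) ^ τ := by
    apply arch_le _ _ (A * ((n : ℚ) ^ τ * A + 2 * E) + (n : ℚ) ^ τ' * A)
    intro j
    have := (h2' (m ^ s * j)).2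
    have h3 := (h2 j).1
    have k1 := key j
    have h4 : |X (f (p * b ^ (m ^ s * j))) - X (f p)| ≤ (n : ℚ) ^ τ * (A * j + A) + 2 * E := by
      rw [abs_le] at *
      constructor <;> linarith
    push_cast at this
    nlinarith [mul_le_mul_of_nonneg_left h4 hA.le]
  have v := h1 0
  have v' := h1' 0
  simp only [zpow_zero, mul_one, abs_le] at v v'
  have i1 : (n : ℚ) ^ ht (f (p * a ^ s)) ≤ (n : ℚ) ^ (A : ℤ) * (n : ℚ) ^ τ := by
    rw [← zpow_add₀ nne]; exact zp_le (by linarith)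
  have i2 : (n : ℚ) ^ τ ≤ (n : ℚ) ^ (A : ℤ) * (n : ℚ) ^ ht (f (p * a ^ s)) := by
    rw [← zpow_add₀ nne]; exact zp_le (by linarith)
  have i3 : (n : ℚ) ^ ht (f p) ≤ (n : ℚ) ^ (A : ℤ) * (n : ℚ) ^ τ' := by
    rw [← zpow_add₀ nne]; exact zp_le (by linarith)
  have i4 : (n : ℚ) ^ τ' ≤ (n : ℚ) ^ (A : ℤ) * (n : ℚ) ^ ht (f p) := by
    rw [← zpow_add₀ nne]; exact zp_le (by linarith)
  have hms : (0 : ℚ) < m ^ s := pow_pos npos s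
  constructor
  · calc _ ≤ _ := i1
      _ ≤ (n : ℚ) ^ (A : ℤ) * (A * A * (m ^ s * ((n : ℚ) ^ (A : ℤ) * (n : ℚ) ^ ht (f p)))) := by
        exact mul_le_mul_of_nonneg_left (t1.trans (by gcongr)) hnA.le
      _ = _ := by ring
  · calc _ ≤ m ^ s * ((n : ℚ) ^ (A : ℤ) * (n : ℚ) ^ τ') := by gcongr
      _ = (n : ℚ) ^ (A : ℤ) * (m ^ s * (n : ℚ) ^ τ') := by ring
      _ ≤ (n : ℚ) ^ (A : ℤ) * (A * A * ((n : ℚ) ^ (A : ℤ) * (n : ℚ) ^ ht (f (p * a ^ s)))) := by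
        exact mul_le_mul_of_nonneg_left (t2.trans (by gcongr)) hnA.le
      _ = _ := by ring

/-- Heights are distorted affinely. -/
lemma heights {f : BS m → BS n} {f' : BS n → BS m} (h : CE f f') :
    ∃ B : ℚ, 0 < B ∧ ∀ p : BS m,
      (n : ℚ) ^ ht (f p) ≤ B * (m : ℚ) ^ ht p ∧ (m : ℚ) ^ ht p ≤ B * (n : ℚ) ^ ht (f p) := by
  obtain ⟨B, hB, HB⟩ := vert h
  obtain ⟨A, hA1, H⟩ := line4 h
  set N := (n : ℚ) ^ (2 * A : ℤ) with hN
  have hNp : 0 < N := zp_pos _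
  set T1 := (n : ℚ) ^ ht (f 1) with hT1
  have hTp : 0 < T1 := zp_pos _
  refine ⟨B * N * B * T1 + B * N * B / T1, by positivity, fun p => ?_⟩
  obtain ⟨k, hk⟩ := exists_den p
  obtain ⟨s, hs1, hs2⟩ : ∃ s : ℕ, (k : ℤ) ≤ s ∧ - ht p ≤ s := ⟨k + (ht p).natAbs, by omega, by omega⟩
  obtain ⟨u, hu⟩ : ∃ u : ℕ, (u : ℤ) = s + ht p := ⟨(s + ht p).toNat, by omega⟩
  obtain ⟨j, hj⟩ := hk.mono (k' := -s) (by omega)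
  set p0 : BS m := (a ^ s)⁻¹ with hp0
  have e1 : p0 * a ^ s = 1 := by simp [p0]
  have e2 : p0 * b ^ j * a ^ u = p := by
    apply bs_ext
    · simp [p0, hj, mul_comm]
    · simp [p0, hu]
  obtain ⟨τ, hτ, -⟩ := H p0
  have v := hτ 0
  have v' := hτ j
  simp only [zpow_zero, mul_one, abs_le] at v v'
  obtain ⟨a1, a2⟩ := HB p0 s
  obtain ⟨b1, b2⟩ := HB (p0 * b ^ j) u
  rw [e1] at a1 a2
  rw [e2] at b1 b2
  have c1 : (n : ℚ) ^ ht (f (p0 * b ^ j)) ≤ N * (n : ℚ) ^ ht (f p0) := by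
    rw [hN, ← zpow_add₀ nne]; exact zp_le (by linarith)
  have c2 : (n : ℚ) ^ ht (f p0) ≤ N * (n : ℚ) ^ ht (f (p0 * b ^ j)) := by
    rw [hN, ← zpow_add₀ nne]; exact zp_le (by linarith)
  have hms : (0 : ℚ) < m ^ s := pow_pos npos s
  have hmu : (m : ℚ) ^ u = m ^ s * (m : ℚ) ^ ht p := by
    rw [← zpow_natCast, hu, zpow_add₀ nne, zpow_natCast]
  rw [hmu] at b1 b2
  have hmp := zp_pos (n := m) (ht p)
  have hnp := zp_pos (n := n) (ht (f p))
  set M := (m : ℚ) ^ ht p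
  set P := (n : ℚ) ^ ht (f p)
  set x0 := (n : ℚ) ^ ht (f p0)
  set x1 := (n : ℚ) ^ ht (f (p0 * b ^ j))
  constructor
  · calc P ≤ B * (m ^ s * M * x1) := b1
      _ ≤ B * (m ^ s * M * (N * x0)) := by gcongr
      _ = B * M * N * (m ^ s * x0) := by ring
      _ ≤ B * M * N * (B * T1) := by gcongr
      _ = (B * N * B * T1 + 0) * M := by ring
      _ ≤ _ := by gcongr; positivity
  · have : M * T1 ≤ B * N * B * P := by
      calc M * T1 ≤ M * (B * (m ^ s * x0)) := by gcongr
        _ ≤ M * (B * (m ^ s * (N * x1))) := by gcongr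
        _ = B * N * (m ^ s * M * x1) := by ring
        _ ≤ B * N * (B * P) := by gcongr
        _ = _ := by ring
    calc M = M * T1 / T1 := by field_simp
      _ ≤ B * N * B * P / T1 := by gcongr
      _ = (0 + B * N * B / T1) * P := by ring
      _ ≤ _ := by gcongr; positivity

end

end FM

set_option linter.unusedSectionVars false
set_option linter.unusedSimpArgs false

namespace FM

open Pointwise Filter

section
variable {m n : ℕ} [hm : Fact (2 ≤ m)] [hn : Fact (2 ≤ n)]

/-- Elements above height `t` in one branch are mapped into one branch. -/
lemma shadow {f : BS m → BS n} {f' : BS n → BS m} (h : CE f f') :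
    ∃ c : ℕ, ∀ t K : ℤ, (∀ p, t ≤ ht p → K + c ≤ ht (f p)) → ∀ p p', t ≤ ht p → t ≤ ht p' →
      Den m t (X p - X p') → Den n K (X (f p) - X (f p')) := by
  obtain ⟨F, hF, hF'⟩ := h.bf.fin (Set.toFinite ({a, b} : Set (BS m)))
  obtain ⟨c, hc⟩ := exists_Bd F hF
  refine ⟨c, fun t K hK => ?_⟩
  have step : ∀ p, ∀ s ∈ ({a, b} : Set (BS m)), t ≤ ht p → Den n K (X (f (p * s)) - X (f p)) := by
    intro p s hs hp
    have h1 := hc (hF' p (p * s) (by simpa using hs))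
    have e : f (p * s) = f p * ((f p)⁻¹ * f (p * s)) := by group
    rw [e, X_mul, add_sub_cancel_left]
    have := hK p hp
    exact (h1.2.2.zpow_mul _).mono (by linarith)
  have up : ∀ (i : ℕ) p, t ≤ ht p → Den n K (X (f (p * a ^ i)) - X (f p)) := by
    intro i p hp
    induction i with
    | zero => simpa using Den.zero
    | succ i ih =>
      have := (step (p * a ^ i) a (by simp) (by simp; omega)).add ih
      rw [mul_assoc, ← pow_succ] at this
      convert this using 1; ring
  have hor : ∀ (i : ℕ) p, t ≤ ht p → Den n K (X (f (p * b ^ i)) - X (f p)) := by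
    intro i p hp
    induction i with
    | zero => simpa using Den.zero
    | succ i ih =>
      have := (step (p * b ^ i) b (by simp) (by simp; omega)).add ih
      rw [mul_assoc, ← pow_succ] at this
      convert this using 1; ring
  have main : ∀ p p', t ≤ ht p → t ≤ ht p' → ∀ z : ℕ, X p' - X p = z * (m : ℚ) ^ t →
      Den n K (X (f p') - X (f p)) := by
    intro p p' hp hp' z hz
    obtain ⟨i, hi⟩ : ∃ i : ℕ, (i : ℤ) = ht p - t := ⟨(ht p - t).toNat, by omega⟩
    obtain ⟨i', hi'⟩ : ∃ i : ℕ, (i : ℤ) = ht p' - t := ⟨(ht p' - t).toNat, by omega⟩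
    set q := p * (a ^ i)⁻¹ with hq
    have hqt : ht q = t := by simp [q]; omega
    have e1 : p = q * a ^ i := by simp [q]
    have e2 : p' = q * b ^ z * a ^ i' := by
      apply bs_ext
      · have : X q = X p := by simp [q]
        simp [this, hqt]; linarith
      · simp [hqt]; omega
    have u1 := up i q hqt.ge
    have u2 := hor z q hqt.ge
    have u3 := up i' (q * b ^ z) (by simp [hqt])
    rw [← e1] at u1
    rw [← e2] at u3
    have := (u3.add u2).sub u1
    convert this using 1; ring
  rintro p p' hp hp' ⟨z, hz⟩
  rcases le_total 0 z with h0 | h0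
  · obtain ⟨z, rfl⟩ := Int.eq_ofNat_of_zero_le h0
    exact main p' p hp' hp z (by simpa using hz)
  · obtain ⟨z', hz'⟩ := Int.eq_ofNat_of_zero_le (a := -z) (by omega)
    have := (main p p' hp hp' z' ?_).neg
    · convert this using 1; ring
    · have e : (z : ℚ) = - (z' : ℚ) := by
        have : z = - (z' : ℤ) := by omega
        rw [this]; push_cast; ring
      rw [e] at hz
      linarith

lemma exists_big (B : ℚ) : ∃ C : ℕ, B ≤ (n : ℚ) ^ C := by
  obtain ⟨C, hC⟩ := pow_unbounded_of_one_lt B (none (n := n))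
  exact ⟨C, hC.le⟩

lemma digit_back {t : ℕ} {y : ℚ} {i : ℕ} (h : Den m (t + 1 : ℕ) (y - i * m ^ t)) : Den m t y := by
  have h1 := h.mono (k' := t) (by push_cast; omega)
  have h2 : Den m t ((i : ℚ) * m ^ t) := ⟨i, by simp⟩
  simpa using h1.add h2

lemma digit_card (t : ℕ) (y : ℚ) [DecidablePred fun i : ℕ => Den m (t + 1 : ℕ) (y - i * m ^ t)]
    [Decidable (Den m t y)] :
    (∑ i ∈ Finset.range m, if Den m (t + 1 : ℕ) (y - i * m ^ t) then 1 else 0) =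
      if Den m t y then 1 else 0 := by
  have hm0 : (0 : ℤ) < m := by have := hm.out; omega
  have hmt : (m : ℚ) ^ t ≠ 0 := pow_ne_zero _ nne
  split_ifs with hy
  · obtain ⟨z, rfl⟩ := hy
    have key : ∀ i ∈ Finset.range m, Den m (t + 1 : ℕ) ((z : ℚ) * m ^ (t : ℤ) - i * m ^ t) ↔
        i = (z % m).toNat := by
      intro i hi
      have h0 := Int.emod_nonneg z hm0.ne'
      have h1 := Int.emod_lt_of_pos z hm0
      rw [Finset.mem_range] at hi
      constructor
      · rintro ⟨u, hu⟩
        rw [zpow_natCast, zpow_natCast, pow_succ] at hu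
        have h3 : (z : ℚ) - i = u * m := by
          apply mul_right_cancel₀ hmt; linarith
        have h4 : z - i = u * m := by exact_mod_cast h3
        have h5 : z % m = i := by
          rw [show z = i + m * u by linarith, Int.add_mul_emod_self_left]
          exact Int.emod_eq_of_lt (by omega) (by omega)
        omega
      · rintro rfl
        refine ⟨z / m, ?_⟩
        have h2 : ((z % m).toNat : ℚ) = ((z % m : ℤ) : ℚ) := by
          exact_mod_cast Int.toNat_of_nonneg h0
        have h3 : (z : ℚ) = m * ((z / m : ℤ) : ℚ) + ((z % m : ℤ) : ℚ) := by
          exact_mod_cast (Int.mul_ediv_add_emod z m).symm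
        rw [h2, zpow_natCast, zpow_natCast, pow_succ]
        linear_combination (m : ℚ) ^ t * h3
    rw [Finset.sum_congr rfl (fun i hi => if_congr (key i hi) rfl rfl)]
    rw [Finset.sum_ite_eq', if_pos]
    rw [Finset.mem_range]
    have h0 := Int.emod_nonneg z hm0.ne'
    have h1 := Int.emod_lt_of_pos z hm0
    omega
  · apply Finset.sum_eq_zero
    intro i _
    rw [if_neg]
    exact fun h => hy (digit_back h)

lemma count_mod (P : ℕ → Prop) [DecidablePred P] (u v : ℕ) :
    ((Finset.range (u * v)).filter fun r => P (r % u)).card =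
      v * ((Finset.range u).filter P).card := by
  induction v with
  | zero => simp
  | succ v ih =>
    rw [← Nat.count_eq_card_filter_range, Nat.mul_succ, Nat.count_add,
      Nat.count_eq_card_filter_range, ih, Nat.count_eq_card_filter_range, Nat.succ_mul]
    congr 2
    apply Finset.filter_congr
    intro k hk
    rw [Finset.mem_range] at hk
    rw [Nat.mul_add_mod, Nat.mod_eq_of_lt hk]

open Classical in
lemma counting {f : BS m → BS n} {f' : BS n → BS m} (h : CE f f') :
    ∃ (k : ℕ → ℕ) (D N : ℕ) (ρ : ℕ → ℕ → ℕ), Monotone k ∧ (∀ t, m ^ t ≤ n ^ k t) ∧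
      (∀ t, n ^ k t ≤ D * m ^ t) ∧ (∀ x t, ρ x t ≤ N) ∧ 0 < ρ 0 0 ∧
      ∀ x t, ∑ i ∈ Finset.range m, ρ (x + i * m ^ t) (t + 1) = n ^ (k (t + 1) - k t) * ρ x t := by
  obtain ⟨c, hc⟩ := shadow h
  obtain ⟨c', hc'⟩ := shadow h.symm
  obtain ⟨B, hB, H⟩ := heights h
  obtain ⟨B', hB', H'⟩ := heights h.symm
  obtain ⟨C1, hC1⟩ := exists_big (n := n) (B' * (m : ℚ) ^ c')
  have near' : (Set.range fun g => g⁻¹ * f (f' g)).Finite := h.near'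
  obtain ⟨c4, hc4⟩ := exists_Bd _ near'
  have hm1 : 1 < m := hm.out
  have hn1 : 1 < n := hn.out
  set k : ℕ → ℕ := fun t => Nat.clog n (m ^ t) + C1 with hk
  set D := n * n ^ C1 with hD
  obtain ⟨C3, hC3⟩ := exists_big (n := n) (D * B * (n : ℚ) ^ c)
  have kmono : Monotone k := by
    intro s t hst
    simp only [hk]
    have := Nat.clog_mono_right n (Nat.pow_le_pow_right (n := m) (by omega) hst)
    omega
  have k0 : ∀ t, m ^ t ≤ n ^ Nat.clog n (m ^ t) := fun t => Nat.le_pow_clog hn1 _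
  have k1 : ∀ t, m ^ t ≤ n ^ k t := fun t =>
    (k0 t).trans (Nat.pow_le_pow_right (by omega) (by simp [hk]))
  have k2 : ∀ t, n ^ k t ≤ D * m ^ t := by
    intro t
    have : n ^ Nat.clog n (m ^ t) ≤ n * m ^ t := by
      rcases Nat.eq_zero_or_pos (Nat.clog n (m ^ t)) with h0 | h0
      · rw [h0]; have := Nat.pow_pos (n := t) (show 0 < m by omega); nlinarith
      · have h1 : 1 < m ^ t := by
          by_contra! hh
          rw [Nat.clog_of_right_le_one hh] at h0
          omega
        have := Nat.pow_pred_clog_lt_self hn1 h1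
        obtain ⟨j, hj⟩ := Nat.exists_eq_succ_of_ne_zero h0.ne'
        rw [hj] at this ⊢
        simp only [Nat.pred_succ] at this
        rw [pow_succ]; nlinarith
    simp only [hk, hD, pow_add]
    nlinarith [Nat.zero_le (n ^ C1)]
  have up' : ∀ t : ℕ, ∀ q : BS n, (k t : ℤ) ≤ ht q → (t : ℤ) + c' ≤ ht (f' q) := by
    intro t q hq
    have h1 := (H' q).2
    have h2 : (n : ℚ) ^ (k t : ℤ) ≤ (n : ℚ) ^ ht q := zp_le hq
    have h3 : (m : ℚ) ^ t ≤ (n : ℚ) ^ Nat.clog n (m ^ t) := by exact_mod_cast k0 t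
    rw [zpow_natCast] at h2
    have h4 : (n : ℚ) ^ k t = (n : ℚ) ^ Nat.clog n (m ^ t) * (n : ℚ) ^ C1 := by
      simp only [hk, pow_add]
    have hmt : (0 : ℚ) < m ^ t := pow_pos npos _
    have h5 : B' * (m : ℚ) ^ ((t : ℤ) + c') ≤ B' * (m : ℚ) ^ ht (f' q) := by
      calc B' * (m : ℚ) ^ ((t : ℤ) + c') = m ^ t * (B' * m ^ c') := by
            rw [zpow_add₀ nne, zpow_natCast, zpow_natCast]; ring
        _ ≤ (n : ℚ) ^ Nat.clog n (m ^ t) * (n : ℚ) ^ C1 := by gcongr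
        _ ≤ _ := by rw [← h4]; exact h2.trans h1
    have h6 := le_of_mul_le_mul_left h5 hB'
    exact (zpow_le_zpow_iff_right₀ none).1 h6
  have up : ∀ t : ℕ, ∀ p : BS m, (t : ℤ) ≤ ht p → (k t : ℤ) - C3 + c ≤ ht (f p) := by
    intro t p hp
    have h1 := (H p).2
    have h2 : (m : ℚ) ^ (t : ℤ) ≤ (m : ℚ) ^ ht p := zp_le hp
    rw [zpow_natCast] at h2
    have h3 : (n : ℚ) ^ k t ≤ D * m ^ t := by exact_mod_cast k2 t
    have hp0 := zp_pos (n := n) (ht (f p))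
    have hnc : (0 : ℚ) < n ^ c := pow_pos npos _
    have h5 : (n : ℚ) ^ ((k t : ℤ) + c) ≤ (n : ℚ) ^ ((C3 : ℤ) + ht (f p)) := by
      rw [zpow_add₀ nne, zpow_add₀ nne, zpow_natCast, zpow_natCast, zpow_natCast]
      calc (n : ℚ) ^ k t * n ^ c ≤ D * (B * (n : ℚ) ^ ht (f p)) * n ^ c := by
            gcongr
            exact h3.trans (by gcongr; exact h2.trans h1)
        _ = D * B * n ^ c * (n : ℚ) ^ ht (f p) := by ring
        _ ≤ _ := by gcongr
    have := (zpow_le_zpow_iff_right₀ none).1 h5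
    linarith
  have hq : ∀ t r : ℕ, ∃ g : BS n, X g = r ∧ ht g = k t := fun t r =>
    exists_mk 0 r (k t) (Den.int r)
  choose q hqX hqt using hq
  set x0 := X (f' (q 0 0)) with hx0
  set C := C3 + c4
  refine ⟨k, D, n ^ C, fun x t => ((Finset.range (n ^ k t)).filter
    fun r => Den m t (X (f' (q t r)) - x0 - x)).card, kmono, k1, k2, ?_, ?_, ?_⟩
  · intro x t
    rw [← Finset.card_range (n ^ C)]
    apply Finset.card_le_card_of_injOn (fun r => r / n ^ (k t - C))
    · intro r hr
      simp only [Finset.coe_filter, Finset.mem_range, Set.mem_ofPred_eq, Finset.coe_range, Set.mem_Iio] at hr ⊢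
      apply Nat.div_lt_of_lt_mul
      rw [← pow_add]
      exact hr.1.trans_le (Nat.pow_le_pow_right (by omega) (by omega))
    · intro r hr r' hr' hrr
      simp only [Finset.coe_filter, Finset.mem_range, Set.mem_ofPred_eq] at hr hr' hrr
      suffices hmod : r % n ^ (k t - C) = r' % n ^ (k t - C) by
        rw [← Nat.div_add_mod r (n ^ (k t - C)), ← Nat.div_add_mod r' (n ^ (k t - C)), hmod, hrr]
      rcases le_total (k t) C with hkC | hkC
      · rw [Nat.sub_eq_zero_of_le hkC]; simp [Nat.mod_one]
      have d1 : Den m t (X (f' (q t r)) - X (f' (q t r'))) := by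
        have := hr.2.sub hr'.2
        convert this using 1; ring
      have d2 := hc t (k t - C3) (up t) _ _ (by have := up' t (q t r) (hqt t r).ge; omega)
        (by have := up' t (q t r') (hqt t r').ge; omega) d1
      have d3 : ∀ r, Den n (k t - c4) (X (f (f' (q t r))) - r) := by
        intro r
        have h1 := hc4 ⟨q t r, rfl⟩
        have e : f (f' (q t r)) = q t r * ((q t r)⁻¹ * f (f' (q t r))) := by group
        rw [e, X_mul, hqX, add_sub_cancel_left, hqt]
        exact (h1.2.2.zpow_mul _).mono (by linarith)
      have d4 : Den n ((k t - C : ℕ) : ℤ) ((r : ℚ) - r') := by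
        have l1 : ((k t - C : ℕ) : ℤ) ≤ k t - c4 := by omega
        have l2 : ((k t - C : ℕ) : ℤ) ≤ k t - C3 := by omega
        have := ((d2.mono l2).sub ((d3 r).mono l1)).add ((d3 r').mono l1)
        convert this using 1; ring
      obtain ⟨z, hz⟩ := d4
      rw [zpow_natCast] at hz
      have hz' : (r : ℤ) - r' = z * (n : ℤ) ^ (k t - C) := by exact_mod_cast hz
      have : (r' : ℤ) ≡ r [ZMOD ((n ^ (k t - C) : ℕ) : ℤ)] := by
        rw [Int.modEq_iff_dvd]
        exact ⟨z, by push_cast; rw [hz']; ring⟩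
      exact ((Int.natCast_modEq_iff).1 this).symm
  · apply Finset.card_pos.2
    refine ⟨0, ?_⟩
    simp only [Finset.mem_filter, Finset.mem_range]
    refine ⟨by positivity, ?_⟩
    simpa [hx0] using Den.zero
  · intro x t
    simp only [Finset.card_filter (fun r => Den m ((t + 1 : ℕ) : ℤ) _)]
    rw [Finset.sum_comm]
    have e1 : ∀ r ∈ Finset.range (n ^ k (t + 1)),
        (∑ i ∈ Finset.range m, if Den m ((t + 1 : ℕ) : ℤ)
          (X (f' (q (t + 1) r)) - x0 - ((x + i * m ^ t : ℕ) : ℚ)) then 1 else 0) =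
        if Den m t (X (f' (q t (r % n ^ k t))) - x0 - x) then 1 else 0 := by
      intro r _
      have e2 : ∀ i : ℕ, X (f' (q (t + 1) r)) - x0 - ((x + i * m ^ t : ℕ) : ℚ) =
          X (f' (q (t + 1) r)) - x0 - x - i * m ^ t := by
        intro i; push_cast; ring
      simp only [e2]
      rw [digit_card]
      have l1 : k t ≤ k (t + 1) := kmono (by omega)
      have d := hc' (k t) t (up' t) (q (t + 1) r) (q t (r % n ^ k t))
        (by rw [hqt]; exact_mod_cast l1) (by rw [hqt]) (by
          rw [hqX, hqX]
          refine ⟨(r / n ^ k t : ℕ), ?_⟩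
          rw [zpow_natCast]
          have := Nat.div_add_mod r (n ^ k t)
          have h3 : (n : ℚ) ^ k t * ((r / n ^ k t : ℕ) : ℚ) + ((r % n ^ k t : ℕ) : ℚ) = r := by
            exact_mod_cast this
          rw [Int.cast_natCast]
          linarith)
      refine if_congr ⟨fun hh => ?_, fun hh => ?_⟩ rfl rfl
      · convert hh.sub d using 1; ring
      · convert hh.add d using 1; ring
    rw [Finset.sum_congr rfl e1, ← Finset.card_filter]
    have e3 : n ^ k (t + 1) = n ^ k t * n ^ (k (t + 1) - k t) := by
      rw [← pow_add]; congr 1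
      have : k t ≤ k (t + 1) := kmono (by omega)
      omega
    rw [e3]
    exact count_mod (fun r => Den m t (X (f' (q t r)) - x0 - x)) _ _

end

end FM

set_option linter.unusedSectionVars false
set_option linter.unusedSimpArgs false

namespace FM

open Pointwise Filter

lemma endgame (m n : ℕ) (hm : 2 ≤ m) (hn : 2 ≤ n) (k : ℕ → ℕ) (D N : ℕ) (ρ : ℕ → ℕ → ℕ)
    (kmono : Monotone k) (k1 : ∀ t, m ^ t ≤ n ^ k t) (k2 : ∀ t, n ^ k t ≤ D * m ^ t)
    (hN : ∀ x t, ρ x t ≤ N) (h0 : 0 < ρ 0 0)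
    (hs : ∀ x t, ∑ i ∈ Finset.range m, ρ (x + i * m ^ t) (t + 1) = n ^ (k (t + 1) - k t) * ρ x t) :
    ∃ d e : ℕ, 0 < d ∧ m ^ d = n ^ e := by
  have hm0 : (0 : ℝ) < m := by exact_mod_cast (by omega : 0 < m)
  have hn0 : (0 : ℝ) < n := by exact_mod_cast (by omega : 0 < n)
  set R : ℕ → ℕ → ℝ := fun x t => ρ x t * m ^ t / n ^ k t with hR
  have Rav : ∀ x t, ∑ i ∈ Finset.range m, R (x + i * m ^ t) (t + 1) = m * R x t := by
    intro x t
    have h1 : ∑ i ∈ Finset.range m, (ρ (x + i * m ^ t) (t + 1) : ℝ) =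
        (n : ℝ) ^ (k (t + 1) - k t) * ρ x t := by exact_mod_cast hs x t
    have h2 : (n : ℝ) ^ k (t + 1) = n ^ (k (t + 1) - k t) * n ^ k t := by
      rw [← pow_add]; congr 1
      have : k t ≤ k (t + 1) := kmono (by omega)
      omega
    simp only [hR]
    rw [← Finset.sum_div, ← Finset.sum_mul, h1, h2, pow_succ]
    field_simp
  have RN : ∀ x t, R x t ≤ N := by
    intro x t
    simp only [hR]
    rw [div_le_iff₀ (by positivity)]
    have h1 : (ρ x t : ℝ) ≤ N := by exact_mod_cast hN x t
    have h2 : (m : ℝ) ^ t ≤ n ^ k t := by exact_mod_cast k1 t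
    gcongr
  have hbdd : BddAbove (Set.range fun y : ℕ × ℕ => R y.1 y.2) := by
    refine ⟨N, ?_⟩
    rintro _ ⟨y, rfl⟩
    exact RN _ _
  set S := sSup (Set.range fun y : ℕ × ℕ => R y.1 y.2) with hS
  have RS : ∀ x t, R x t ≤ S := fun x t => le_csSup hbdd ⟨(x, t), rfl⟩
  have hSp : 0 < S := by
    refine lt_of_lt_of_le ?_ (RS 0 0)
    simp only [hR]
    have : (0 : ℝ) < ρ 0 0 := by exact_mod_cast h0
    positivity
  have hD0 : 0 < D := by
    rcases Nat.eq_zero_or_pos D with rfl | h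
    · have := k2 0
      have := Nat.pow_pos (n := k 0) (show 0 < n by omega)
      omega
    · exact h
  have hD : (0 : ℝ) < D := by exact_mod_cast hD0
  have hD1 : (1 : ℝ) ≤ D := by exact_mod_cast hD0
  have hm1 : (1 : ℝ) ≤ m := by exact_mod_cast (by omega : 1 ≤ m)
  set Q : ℝ := D * m ^ (N + 1) with hQ
  have hQ1 : 1 ≤ Q := by
    have := one_le_pow₀ hm1 (n := N + 1)
    rw [hQ]; nlinarith
  set δ : ℝ := S / (4 * Q) with hδ
  have hδ0 : 0 < δ := by positivity
  have hδQ : δ * Q = S / 4 := by rw [hδ]; field_simp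
  have hδS : δ ≤ S / 4 := by nlinarith
  set ε : ℝ := δ / m ^ (N + 1) with hε
  have hε0 : 0 < ε := by positivity
  have hεδ : m ^ (N + 1) * ε = δ := by rw [hε]; field_simp
  obtain ⟨_, ⟨⟨x, t⟩, rfl⟩, hxt⟩ := exists_lt_of_lt_csSup (Set.range_nonempty _)
    (show S - ε < sSup (Set.range fun y : ℕ × ℕ => R y.1 y.2) by linarith)
  simp only at hxt
  have path : ∀ d, S - m ^ d * ε ≤ R x (t + d) := by
    intro d
    induction d with
    | zero => simpa using hxt.le
    | succ d ih =>
      have h1 := Rav x (t + d)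
      obtain ⟨m', rfl⟩ : ∃ m', m = m' + 1 := ⟨m - 1, by omega⟩
      rw [Finset.sum_range_succ'] at h1
      have h2 : ∑ i ∈ Finset.range m', R (x + (i + 1) * (m' + 1) ^ (t + d)) (t + d + 1) ≤
          ∑ i ∈ Finset.range m', S := Finset.sum_le_sum fun i _ => RS _ _
      rw [Finset.sum_const, Finset.card_range, nsmul_eq_mul] at h2
      simp only [zero_mul, add_zero] at h1
      rw [← add_assoc, pow_succ]
      push_cast at h1 h2 ih ⊢
      nlinarith
  have path' : ∀ d, d ≤ N + 1 → S - δ ≤ R x (t + d) := by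
    intro d hd
    refine le_trans ?_ (path d)
    have : (m : ℝ) ^ d ≤ m ^ (N + 1) := pow_le_pow_right₀ hm1 hd
    nlinarith
  obtain ⟨d1, hd1, d2, hd2, hlt, heq⟩ : ∃ d1, d1 ≤ N + 1 ∧ ∃ d2, d2 ≤ N + 1 ∧ d1 < d2 ∧
      ρ x (t + d1) = ρ x (t + d2) := by
    obtain ⟨i, hi, j, hj, hij, he⟩ := Finset.exists_ne_map_eq_of_card_lt_of_maps_to
      (s := Finset.range (N + 2)) (t := Finset.range (N + 1)) (by simp)
      (f := fun d => ρ x (t + d)) (fun d _ => by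
        have := hN x (t + d)
        simp; omega)
    rw [Finset.mem_range] at hi hj
    rcases lt_or_gt_of_ne hij with h | h
    · exact ⟨i, by omega, j, by omega, h, he⟩
    · exact ⟨j, by omega, i, by omega, h, he.symm⟩
  obtain ⟨d, rfl⟩ := Nat.exists_eq_add_of_lt hlt
  set e := k (t + (d1 + d + 1)) - k (t + d1) with he
  have hk : k (t + (d1 + d + 1)) = k (t + d1) + e := by
    have : k (t + d1) ≤ k (t + (d1 + d + 1)) := kmono (by omega)
    omega
  refine ⟨d + 1, e, by omega, ?_⟩
  by_contra hne
  have r1 := path' d1 hd1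
  have r2 := path' _ hd2
  have s1 := RS x (t + d1)
  have s2 := RS x (t + (d1 + d + 1))
  set r := R x (t + d1) with hr
  have hrel : R x (t + (d1 + d + 1)) * n ^ e = r * m ^ (d + 1) := by
    simp only [hr, hR]
    rw [← heq, hk, show t + (d1 + d + 1) = t + d1 + (d + 1) by ring, pow_add (m : ℝ) (t + d1),
      pow_add (n : ℝ)]
    field_simp
  set r' := R x (t + (d1 + d + 1))
  have hne' : (n : ℝ) ^ e ≤ Q := by
    have h1 : (n : ℝ) ^ (k (t + d1) + e) ≤ D * m ^ (t + (d1 + d + 1)) := by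
      rw [← hk]; exact_mod_cast k2 _
    have h2 : (m : ℝ) ^ (t + d1) ≤ n ^ k (t + d1) := by exact_mod_cast k1 _
    rw [pow_add, show t + (d1 + d + 1) = t + d1 + (d + 1) by ring, pow_add] at h1
    have h3 : (m : ℝ) ^ (t + d1) * n ^ e ≤ (m : ℝ) ^ (t + d1) * (D * m ^ (d + 1)) := by
      calc _ ≤ (n : ℝ) ^ k (t + d1) * n ^ e := by gcongr
        _ ≤ _ := h1
        _ = _ := by ring
    refine (le_of_mul_le_mul_left h3 (by positivity)).trans ?_
    rw [hQ]
    gcongr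
    omega
  have hgap : (1 : ℝ) ≤ |(m : ℝ) ^ (d + 1) - n ^ e| := by
    have : (1 : ℤ) ≤ |(m : ℤ) ^ (d + 1) - n ^ e| := by
      apply Int.one_le_abs
      intro h
      apply hne
      have : (m : ℤ) ^ (d + 1) = n ^ e := by linarith
      exact_mod_cast this
    exact_mod_cast this
  have hdiff : |r' - r| ≤ δ := by
    rw [abs_le]; constructor <;> linarith
  have e1 : r * ((m : ℝ) ^ (d + 1) - n ^ e) = (r' - r) * n ^ e := by linarith
  have e2 := congrArg abs e1
  have hr0 : 0 < r := by linarith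
  rw [abs_mul, abs_mul, abs_of_pos hr0, abs_of_pos (show (0 : ℝ) < n ^ e by positivity)] at e2
  have e3 : |r' - r| * (n : ℝ) ^ e ≤ δ * Q := by gcongr
  nlinarith

lemma qi_pow (m n : ℕ) (hm : 2 ≤ m) (hn : 2 ≤ n) (h : QuasiIsometricGroups (BS m) (BS n)) :
    ∃ r j k : ℕ, 0 < j ∧ 0 < k ∧ m = r ^ j ∧ n = r ^ k := by
  have : Fact (2 ≤ m) := ⟨hm⟩
  have : Fact (2 ≤ n) := ⟨hn⟩
  obtain ⟨f, f', hc⟩ := qi_ce h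
  obtain ⟨k, D, N, ρ, h1, h2, h3, h4, h5, h6⟩ := counting hc
  obtain ⟨d, e, hd, hde⟩ := endgame m n hm hn k D N ρ h1 h2 h3 h4 h5 h6
  have he : 0 < e := by
    rcases Nat.eq_zero_or_pos e with rfl | h
    · rw [pow_zero] at hde
      have := Nat.one_lt_pow hd.ne' (show 1 < m by omega)
      omega
    · exact h
  obtain ⟨c, hc1, hc2⟩ := Nat.exists_eq_pow_of_pow_eq_pow (Or.inl hd.ne') hde
  exact ⟨c, _, _, Nat.div_pos (Nat.gcd_le_right _ he) (Nat.gcd_pos_of_pos_left _ hd),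
    Nat.div_pos (Nat.gcd_le_left _ hd) (Nat.gcd_pos_of_pos_left _ hd), hc1, hc2⟩

end FM

theorem BS_quasiIsometry_classification (m n : ℕ) (hm : 2 ≤ m) (hn : 2 ≤ n) :
    (QuasiIsometricGroups (BS m) (BS n) ↔ CommensurableGroups (BS m) (BS n)) ∧
    (QuasiIsometricGroups (BS m) (BS n) ↔
      ∃ r j k : ℕ, 0 < j ∧ 0 < k ∧ m = r ^ j ∧ n = r ^ k) := by
  have : Fact (2 ≤ m) := ⟨hm⟩
  have : Fact (2 ≤ n) := ⟨hn⟩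
  refine ⟨⟨fun h => ?_, FM.comm_qi⟩, FM.qi_pow m n hm hn, ?_⟩
  · obtain ⟨r, j, k, hj, hk, h1, h2⟩ := FM.qi_pow m n hm hn h
    exact FM.pow_comm hm hn hj hk h1 h2
  · rintro ⟨r, j, k, hj, hk, h1, h2⟩
    exact FM.comm_qi (FM.pow_comm hm hn hj hk h1 h2)
end

section
/- Let S = (n₁,…,n_k) be a tuple of pairwise coprime integers n_i ≥ 2, and let φ : Γ(S) → ℤ^k be the surjective homomorphism with φ(a_i) = e_i and φ(b) = 0. Then the kernel of φ is an abelian subgroup of Γ(S); consequently Γ(S) is metabelian, i.e. its commutator subgroup is abelian, and in particular Γ(S) is solvable. -/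
theorem gamma_aux_b {G : Type*} [Group G] {k : ℕ} (n : Fin k → ℕ) (a : Fin k → G) (b : G)
    (hab : ∀ i, b * a i = a i * b ^ (n i)) (t : G)
    (ht : t ∈ Submonoid.closure (Set.range a)) :
    ∃ N : ℕ, ∀ m : ℤ, b ^ m * t = t * b ^ (N * m : ℤ) := by
  induction ht using Submonoid.closure_induction with
  | mem x hx =>
    obtain ⟨i, rfl⟩ := hx
    refine ⟨n i, fun m => ?_⟩
    have h : SemiconjBy (a i) (b ^ (n i)) b := (hab i).symm
    have h2 := h.zpow_right m
    rw [zpow_mul, zpow_natCast]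
    exact h2.eq.symm
  | one => exact ⟨1, fun m => by simp⟩
  | mul x y _ _ hx hy =>
    obtain ⟨N, hN⟩ := hx
    obtain ⟨M, hM⟩ := hy
    refine ⟨M * N, fun m => ?_⟩
    rw [← mul_assoc, hN, mul_assoc, hM, mul_assoc]
    push_cast
    rw [mul_assoc (M : ℤ)]

theorem gamma_aux_comm {G : Type*} [Group G] {k : ℕ} (a : Fin k → G)
    (haa : ∀ i j, a i * a j = a j * a i) (s t : G)
    (hs : s ∈ Submonoid.closure (Set.range a)) (ht : t ∈ Submonoid.closure (Set.range a)) :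
    s * t = t * s := by
  have key : ∀ i, Commute (a i) t := by
    intro i
    induction ht using Submonoid.closure_induction with
    | mem x hx => obtain ⟨j, rfl⟩ := hx; exact haa i j
    | one => exact Commute.one_right _
    | mul x y _ _ hx hy => exact hx.mul_right hy
  have : Commute s t := by
    induction hs using Submonoid.closure_induction with
    | mem x hx => obtain ⟨j, rfl⟩ := hx; exact key j
    | one => exact Commute.one_left _
    | mul x y _ _ hx hy => exact hx.mul_left hy
  exact this

theorem gamma_aux_form {G : Type*} [Group G] {k : ℕ} (n : Fin k → ℕ) (a : Fin k → G) (b : G)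
    (hab : ∀ i, b * a i = a i * b ^ (n i)) (haa : ∀ i j, a i * a j = a j * a i)
    (hgen : Subgroup.closure (Set.range a ∪ {b}) = ⊤) (g : G) :
    ∃ t ∈ Submonoid.closure (Set.range a), ∃ s ∈ Submonoid.closure (Set.range a), ∃ m : ℤ,
      g = t * b ^ m * s⁻¹ := by
  have hmem : ∀ i, a i ∈ Submonoid.closure (Set.range a) :=
    fun i => Submonoid.subset_closure ⟨i, rfl⟩
  have hb : ∀ (e : ℤ) (y : G), (∃ t ∈ Submonoid.closure (Set.range a),
      ∃ s ∈ Submonoid.closure (Set.range a), ∃ m : ℤ, y = t * b ^ m * s⁻¹) →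
      (∃ t ∈ Submonoid.closure (Set.range a),
      ∃ s ∈ Submonoid.closure (Set.range a), ∃ m : ℤ, b ^ e * y = t * b ^ m * s⁻¹) := by
    rintro e y ⟨t, ht, s, hs, m, rfl⟩
    obtain ⟨N, hN⟩ := gamma_aux_b n a b hab t ht
    refine ⟨t, ht, s, hs, N * e + m, ?_⟩
    rw [zpow_add, ← mul_assoc, ← mul_assoc, hN, mul_assoc t]
  have hg : g ∈ Subgroup.closure (Set.range a ∪ {b}) := by rw [hgen]; trivial
  induction hg using Subgroup.closure_induction_left with
  | one => exact ⟨1, one_mem _, 1, one_mem _, 0, by simp⟩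
  | mul_left x hx y _ ih =>
    rcases hx with ⟨i, rfl⟩ | rfl
    · obtain ⟨t, ht, s, hs, m, rfl⟩ := ih
      exact ⟨a i * t, mul_mem (hmem i) ht, s, hs, m, by group⟩
    · simpa using hb 1 y ih
  | inv_mul_cancel x hx y _ ih =>
    rcases hx with ⟨i, rfl⟩ | rfl
    · obtain ⟨t, ht, s, hs, m, rfl⟩ := ih
      refine ⟨t, ht, s * a i, mul_mem hs (hmem i), n i * m, ?_⟩
      have h1 := gamma_aux_comm a haa _ _ (hmem i) ht
      have h3 : b ^ m * a i = a i * b ^ (n i * m : ℤ) := by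
        have h : SemiconjBy (a i) (b ^ (n i)) b := (hab i).symm
        rw [zpow_mul, zpow_natCast]
        exact (h.zpow_right m).eq.symm
      have h4 : b ^ (n i * m : ℤ) = (a i)⁻¹ * (b ^ m * a i) := by rw [h3]; group
      have h5 : t = a i * t * (a i)⁻¹ := by rw [h1]; group
      rw [h4]
      calc (a i)⁻¹ * (t * b ^ m * s⁻¹) = (a i)⁻¹ * ((a i * t * (a i)⁻¹) * b ^ m * s⁻¹) := by
            rw [← h5]
        _ = _ := by group
    · simpa using hb (-1) y ih

theorem gamma_aux_inj {G : Type*} [Group G] {k : ℕ} (a : Fin k → G)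
    (haa : ∀ i j, a i * a j = a j * a i)
    (φ : G →* Multiplicative (Fin k → ℤ))
    (hA : ∀ i : Fin k, φ (a i) = Multiplicative.ofAdd (Pi.single i 1)) (s t : G)
    (hs : s ∈ Submonoid.closure (Set.range a)) (ht : t ∈ Submonoid.closure (Set.range a))
    (h : φ s = φ t) : s = t := by
  have hc : ∀ x ∈ Set.range a, ∀ y ∈ Set.range a, x * y = y * x := by
    rintro _ ⟨i, rfl⟩ _ ⟨j, rfl⟩; exact haa i j
  letI : CommMonoid (Submonoid.closure (Set.range a)) :=
    Submonoid.closureCommMonoidOfComm _ hc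
  let α : Fin k → Submonoid.closure (Set.range a) :=
    fun i => ⟨a i, Submonoid.subset_closure ⟨i, rfl⟩⟩
  have key : ∀ x (hx : x ∈ Submonoid.closure (Set.range a)), (∀ i, 0 ≤ (φ x).toAdd i) ∧
      (⟨x, hx⟩ : Submonoid.closure (Set.range a)) = ∏ i, α i ^ ((φ x).toAdd i).toNat := by
    intro x hx
    induction hx using Submonoid.closure_induction with
    | mem x hx =>
      obtain ⟨j, rfl⟩ := hx
      rw [hA]
      constructor
      · intro i
        by_cases hij : i = j
        · subst hij; simp
        · simp [hij]
      · rw [Finset.prod_eq_single j]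
        · simp [α]
        · intro i _ hij; simp [hij]
        · simp
    | one => 
      refine ⟨by simp, ?_⟩
      simp only [map_one, toAdd_one, Pi.zero_apply, Int.toNat_zero, pow_zero, Finset.prod_const_one]
      rfl
    | mul x y hx' hy' hx hy =>
      refine ⟨fun i => ?_, ?_⟩
      · simpa using add_nonneg (hx.1 i) (hy.1 i)
      · have : (⟨x * y, mul_mem hx' hy'⟩ : Submonoid.closure (Set.range a))
            = ⟨x, hx'⟩ * ⟨y, hy'⟩ := rfl
        rw [this, hx.2, hy.2, ← Finset.prod_mul_distrib]
        refine Finset.prod_congr rfl fun i _ => ?_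
        rw [← pow_add, ← Int.toNat_add (hx.1 i) (hy.1 i), map_mul, toAdd_mul, Pi.add_apply]
  have e := (key s hs).2
  rw [h, ← (key t ht).2] at e
  exact congrArg Subtype.val e

theorem gamma_aux_ker {G : Type*} [Group G] {k : ℕ} (n : Fin k → ℕ) (a : Fin k → G) (b : G)
    (hab : ∀ i, b * a i = a i * b ^ (n i)) (haa : ∀ i j, a i * a j = a j * a i)
    (hgen : Subgroup.closure (Set.range a ∪ {b}) = ⊤)
    (φ : G →* Multiplicative (Fin k → ℤ))
    (hA : ∀ i : Fin k, φ (a i) = Multiplicative.ofAdd (Pi.single i 1))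
    (hB : φ b = 1) (x y : G) (hx : φ x = 1) (hy : φ y = 1) : x * y = y * x := by
  have red : ∀ x, φ x = 1 → ∃ t ∈ Submonoid.closure (Set.range a), ∃ m : ℤ,
      x = t * b ^ m * t⁻¹ := by
    intro x hx
    obtain ⟨t, ht, s, hs, m, rfl⟩ := gamma_aux_form n a b hab haa hgen x
    have : φ t = φ s := by
      simpa [hB, mul_inv_eq_one] using hx
    obtain rfl := gamma_aux_inj a haa φ hA t s ht hs this
    exact ⟨t, ht, m, rfl⟩
  obtain ⟨t, ht, m, rfl⟩ := red x hx
  obtain ⟨s, hs, l, rfl⟩ := red y hy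
  obtain ⟨N, hN⟩ := gamma_aux_b n a b hab t ht
  obtain ⟨M, hM⟩ := gamma_aux_b n a b hab s hs
  have hc := gamma_aux_comm a haa s t hs ht
  have e1 : t * b ^ m * t⁻¹ = (t * s) * b ^ (M * m : ℤ) * (t * s)⁻¹ := by
    rw [mul_assoc t s, ← hM]; group
  have e2 : s * b ^ l * s⁻¹ = (t * s) * b ^ (N * l : ℤ) * (t * s)⁻¹ := by
    rw [← hc, mul_assoc s t, ← hN]; group
  rw [e1, e2]
  have h3 : ∀ (u : G) (p q : ℤ), u * b ^ p * u⁻¹ * (u * b ^ q * u⁻¹) = u * b ^ (p + q) * u⁻¹ := by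
    intro u p q; rw [zpow_add]; group
  rw [h3, h3, add_comm]

/-- The kernel of the projection `φ : Γ(S) → ℤ^k` (with `φ(aᵢ) = eᵢ`,
`φ(b) = 0`) is abelian; consequently `Γ(S)` is metabelian, and in particular
solvable. -/
theorem gammaGroup_metabelian {k : ℕ} (n : Fin k → ℕ)
    (hn2 : ∀ i, 2 ≤ n i) (hcop : ∀ i j, i ≠ j → Nat.Coprime (n i) (n j))
    (φ : GammaGroup n →* Multiplicative (Fin k → ℤ))
    (hsurj : Function.Surjective φ)
    (hA : ∀ i : Fin k, φ (gammaA n i) = Multiplicative.ofAdd (Pi.single i 1))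
    (hB : φ (gammaB n) = 1) :
    (∀ x y : (MonoidHom.ker φ), x * y = y * x) ∧
    (∀ x y : commutator (GammaGroup n), x * y = y * x) ∧
    IsSolvable (GammaGroup n) := by
  have hab : ∀ i, gammaB n * gammaA n i = gammaA n i * gammaB n ^ (n i) := by
    intro i
    have h : (PresentedGroup.mk (gammaRels n)) ((FreeGroup.of (Sum.inl i))⁻¹ *
        FreeGroup.of (Sum.inr ()) *
        FreeGroup.of (Sum.inl i) * (FreeGroup.of (Sum.inr ()) ^ (n i))⁻¹) = 1 :=
      PresentedGroup.one_of_mem (Or.inl ⟨i, rfl⟩)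
    rw [map_mul, map_mul, map_mul, map_inv, map_inv, map_pow, mul_inv_eq_one, mul_assoc,
      inv_mul_eq_iff_eq_mul] at h
    exact h
  have haa : ∀ i j, gammaA n i * gammaA n j = gammaA n j * gammaA n i := by
    intro i j
    by_cases hij : i = j
    · rw [hij]
    have h : (PresentedGroup.mk (gammaRels n)) (FreeGroup.of (Sum.inl i) *
        FreeGroup.of (Sum.inl j) *
        (FreeGroup.of (Sum.inl i))⁻¹ * (FreeGroup.of (Sum.inl j))⁻¹) = 1 :=
      PresentedGroup.one_of_mem (Or.inr ⟨i, j, hij, rfl⟩)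
    rw [map_mul, map_mul, map_mul, map_inv, map_inv, mul_inv_eq_one, mul_inv_eq_iff_eq_mul] at h
    exact h
  have hgen : Subgroup.closure (Set.range (gammaA n) ∪ {gammaB n}) = ⊤ := by
    rw [eq_top_iff]
    have h : (⊤ : Subgroup (GammaGroup n)) = Subgroup.closure
        (Set.range (PresentedGroup.of (rels := gammaRels n))) :=
      (PresentedGroup.closure_range_of (gammaRels n)).symm
    rw [h]
    apply Subgroup.closure_mono
    rintro _ ⟨i | u, rfl⟩
    · exact Or.inl ⟨i, rfl⟩
    · exact Or.inr rfl
  have hker := gamma_aux_ker n _ _ hab haa hgen φ hA hB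
  have hk : ∀ x y : (MonoidHom.ker φ), x * y = y * x :=
    fun x y => Subtype.ext (hker x y x.2 y.2)
  refine ⟨hk, fun x y => Subtype.ext ?_, ?_⟩
  · have hle := Abelianization.commutator_subset_ker φ
    exact hker x y (hle x.2) (hle y.2)
  · have : Group.IsSolvable (MonoidHom.ker φ) := Group.isSolvable_of_comm hk
    exact Group.isSolvable_of_ker_le_range (MonoidHom.ker φ).subtype φ (by simp)
end

section
/- Let n = p₁^{e₁}···p_k^{e_k} where p₁,…,p_k are distinct primes, and let φ : Γ(p₁^{2e₁},…,p_k^{2e_k}) → ℤ^k be the surjective homomorphism with φ(a_i) = e_i and φ(b) = 0. Then the kernel of φ is isomorphic as a group to the additive group of ℤ[1/n], the subring of ℚ generated by ℤ and 1/n. -/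
/-- `ℤ[1/n]`: the subring of `ℚ` generated by `ℤ` and `1/n`. -/
def Zinv (n : ℕ) : Subring ℚ := Subring.closure {((n : ℚ))⁻¹}

namespace GammaAux

theorem pow_shift (m : ℕ) (x : ℚ) : ((Equiv.addRight (1 : ℚ) : Equiv.Perm ℚ) ^ m) x = x + m := by
  induction m generalizing x with
  | zero => simp
  | succ m ih =>
    rw [pow_succ, Equiv.Perm.mul_apply, ih]
    simp only [Equiv.coe_addRight]
    push_cast
    ring

theorem zpow_shift (m : ℤ) (x : ℚ) :
    ((Equiv.addRight (1 : ℚ) : Equiv.Perm ℚ) ^ m) x = x + m := by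
  obtain ⟨m, rfl | rfl⟩ := m.eq_nat_or_neg
  · rw [zpow_natCast, pow_shift]; simp
  · rw [zpow_neg, zpow_natCast, Equiv.Perm.inv_eq_iff_eq, pow_shift]
    push_cast
    ring

theorem relB {k : ℕ} (N : Fin k → ℕ) (i : Fin k) :
    (gammaA N i)⁻¹ * gammaB N * gammaA N i = gammaB N ^ (N i) := by
  have h := PresentedGroup.one_of_mem (rels := gammaRels N) (Or.inl ⟨i, rfl⟩)
  simp only [map_mul, map_inv, map_pow] at h
  exact mul_inv_eq_one.mp h

theorem relA {k : ℕ} (N : Fin k → ℕ) (i j : Fin k) :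
    Commute (gammaA N i) (gammaA N j) := by
  by_cases hij : i = j
  · subst hij; exact Commute.refl _
  have h := PresentedGroup.one_of_mem (rels := gammaRels N) (Or.inr ⟨i, j, hij, rfl⟩)
  simp only [map_mul, map_inv] at h
  have h2 := mul_inv_eq_iff_eq_mul.mp (mul_inv_eq_one.mp h)
  exact h2

theorem gen_induction {k : ℕ} (N : Fin k → ℕ) (P : GammaGroup N → Prop)
    (hA : ∀ i, P (gammaA N i)) (hB : P (gammaB N)) (h1 : P 1)
    (hm : ∀ g h, P g → P h → P (g * h)) (hi : ∀ g, P g → P g⁻¹) (g : GammaGroup N) : P g := by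
  have hc : Subgroup.closure (Set.range (PresentedGroup.of (rels := gammaRels N))) = ⊤ :=
    PresentedGroup.closure_range_of _
  have hg : g ∈ Subgroup.closure (Set.range (PresentedGroup.of (rels := gammaRels N))) := by
    rw [hc]; trivial
  refine Subgroup.closure_induction (p := fun g _ => P g) ?_ h1 (fun x y _ _ => hm x y)
    (fun x _ => hi x) hg
  rintro _ ⟨(i | u), rfl⟩
  · exact hA i
  · exact hB

/-- The affine action on `ℚ`: `aᵢ` divides by `Nᵢ`, `b` translates by one. -/
theorem exists_action {k : ℕ} (N : Fin k → ℕ) (hN : ∀ i, N i ≠ 0) :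
    ∃ ψ : GammaGroup N →* Equiv.Perm ℚ,
      (∀ i x, ψ (gammaA N i) x = x / N i) ∧ (∀ x, ψ (gammaB N) x = x + 1) := by
  have hN' : ∀ i, (N i : ℚ) ≠ 0 := fun i => Nat.cast_ne_zero.mpr (hN i)
  let f : Fin k ⊕ Unit → Equiv.Perm ℚ :=
    Sum.elim (fun i => (Equiv.mulRight₀ (N i : ℚ) (hN' i))⁻¹) (fun _ => Equiv.addRight (1 : ℚ))
  have hf : ∀ r ∈ gammaRels N, FreeGroup.lift f r = 1 := by
    rintro r (⟨i, rfl⟩ | ⟨i, j, -, rfl⟩)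
    · simp only [map_mul, map_inv, map_pow, FreeGroup.lift_apply_of]
      rw [mul_inv_eq_one]
      ext x
      simp [f, Equiv.Perm.mul_apply, pow_shift]
      have := hN' i
      field_simp
    · simp only [map_mul, map_inv, FreeGroup.lift_apply_of]
      rw [mul_inv_eq_one, mul_inv_eq_iff_eq_mul]
      ext x
      simp [f, Equiv.Perm.mul_apply]
      have := hN' i
      have := hN' j
      field_simp
  refine ⟨PresentedGroup.toGroup hf, fun i x => ?_, fun x => ?_⟩
  · have : PresentedGroup.toGroup hf (gammaA N i) = f (Sum.inl i) := PresentedGroup.toGroup.of hf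
    refine (DFunLike.congr_fun this x).trans ?_
    simp [f, div_eq_mul_inv]
  · have : PresentedGroup.toGroup hf (gammaB N) = f (Sum.inr ()) := PresentedGroup.toGroup.of hf
    refine (DFunLike.congr_fun this x).trans ?_
    simp [f]

theorem exists_c {k : ℕ} (N : Fin k → ℕ) (ψ : GammaGroup N →* Equiv.Perm ℚ)
    (hψ : ∀ i x, ψ (gammaA N i) x = x / N i) (S : Finset (Fin k)) :
    ∃ c : GammaGroup N, (∀ i, Commute (gammaA N i) c) ∧
      c⁻¹ * gammaB N * c = gammaB N ^ (∏ i ∈ S, N i) ∧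
      ∀ x, ψ c x = x / ((∏ i ∈ S, N i : ℕ) : ℚ) := by
  classical
  induction S using Finset.induction_on with
  | empty => exact ⟨1, fun i => Commute.one_right _, by simp, by simp⟩
  | insert j S hj ih =>
    obtain ⟨c, h1, h2, h3⟩ := ih
    refine ⟨gammaA N j * c, fun i => (relA N i j).mul_right (h1 i), ?_, fun x => ?_⟩
    · rw [Finset.prod_insert hj, mul_comm (N j), pow_mul, ← h2]
      have : (gammaA N j * c)⁻¹ * gammaB N * (gammaA N j * c)
          = c⁻¹ * ((gammaA N j)⁻¹ * gammaB N * gammaA N j) * c := by group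
      rw [this, relB]
      have := conj_pow (i := N j) (a := c⁻¹) (b := gammaB N)
      rw [inv_inv] at this
      exact this.symm
    · rw [Finset.prod_insert hj, map_mul, Equiv.Perm.mul_apply, h3, hψ]
      push_cast
      rw [div_div, mul_comm]

theorem exists_section {k : ℕ} (N : Fin k → ℕ) :
    ∃ s : Multiplicative (Fin k → ℤ) →* GammaGroup N,
      ∀ i, s (Multiplicative.ofAdd (Pi.single i 1)) = gammaA N i := by
  classical
  have hc : Pairwise fun i j => ∀ x y : Multiplicative ℤ,
      Commute (zpowersHom _ (gammaA N i) x) (zpowersHom _ (gammaA N j) y) := by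
    intro i j _ x y
    simp only [zpowersHom_apply]
    exact (relA N i j).zpow_zpow _ _
  let t := MonoidHom.noncommPiCoprod (fun i => zpowersHom _ (gammaA N i)) hc
  let u : Multiplicative (Fin k → ℤ) →* (Fin k → Multiplicative ℤ) :=
    { toFun := fun v i => Multiplicative.ofAdd (v.toAdd i)
      map_one' := rfl
      map_mul' := fun _ _ => rfl }
  refine ⟨t.comp u, fun i => ?_⟩
  have : u (Multiplicative.ofAdd (Pi.single i 1)) =
      Pi.mulSingle i (Multiplicative.ofAdd (1 : ℤ)) := by
    funext j
    by_cases h : j = i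
    · subst h; simp [u]
    · simp [u, h]
  rw [MonoidHom.comp_apply, this]
  simp [t, MonoidHom.noncommPiCoprod_mulSingle]

section
variable {G : Type*} [Group G]

theorem shift {b c : G} {M : ℕ} (h : c⁻¹ * b * c = b ^ M) (s : ℕ) (m : ℤ) :
    b ^ m = c ^ s * b ^ (m * (M : ℤ) ^ s) * (c ^ s)⁻¹ := by
  have h' : ∀ m : ℤ, b ^ m = c * b ^ (m * M) * c⁻¹ := by
    intro m
    rw [mul_comm, zpow_mul, zpow_natCast, ← h]
    have := conj_zpow (i := m) (a := c⁻¹) (b := b)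
    rw [inv_inv] at this
    rw [this]; group
  induction s with
  | zero => simp
  | succ s ih =>
    rw [ih, h' (m * (M : ℤ) ^ s), pow_succ c, pow_succ (M : ℤ)]
    simp only [mul_inv_rev, mul_assoc]

/-- Union of the cyclic groups `c^t ⟨b⟩ c^{-t}`. -/
def unionGroup (b c : G) (M : ℕ) (h : c⁻¹ * b * c = b ^ M) : Subgroup G where
  carrier := {g | ∃ (t : ℕ) (m : ℤ), g = c ^ t * b ^ m * (c ^ t)⁻¹}
  one_mem' := ⟨0, 0, by simp⟩
  inv_mem' := by
    rintro _ ⟨t, m, rfl⟩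
    exact ⟨t, -m, by group⟩
  mul_mem' := by
    rintro _ _ ⟨t, m, rfl⟩ ⟨s, l, rfl⟩
    refine ⟨t + s, m * (M : ℤ) ^ s + l * (M : ℤ) ^ t, ?_⟩
    rw [shift h s m, shift h t l, zpow_add]
    have e1 : c ^ t * (c ^ s * b ^ (m * (M : ℤ) ^ s) * (c ^ s)⁻¹) * (c ^ t)⁻¹ =
        c ^ (t + s) * b ^ (m * (M : ℤ) ^ s) * (c ^ (t + s))⁻¹ := by
      rw [pow_add]; group
    have e2 : c ^ s * (c ^ t * b ^ (l * (M : ℤ) ^ t) * (c ^ t)⁻¹) * (c ^ s)⁻¹ =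
        c ^ (t + s) * b ^ (l * (M : ℤ) ^ t) * (c ^ (t + s))⁻¹ := by
      rw [add_comm t s, pow_add]; group
    rw [e1, e2]; group

end

theorem conj_mem {k : ℕ} (N : Fin k → ℕ) (c : GammaGroup N)
    (h1 : ∀ i, Commute (gammaA N i) c)
    (h2 : c⁻¹ * gammaB N * c = gammaB N ^ (∏ i, N i)) (g : GammaGroup N) :
    (∀ h ∈ unionGroup _ c _ h2, g * h * g⁻¹ ∈ unionGroup _ c _ h2) ∧
    (∀ h ∈ unionGroup _ c _ h2, g⁻¹ * h * g ∈ unionGroup _ c _ h2) := by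
  induction g using gen_induction with
  | hA i =>
    have hz : ∀ m : ℤ, (gammaA N i)⁻¹ * gammaB N ^ m * gammaA N i = gammaB N ^ (N i * m) := by
      intro m
      rw [zpow_mul, zpow_natCast, ← relB]
      have := conj_zpow (i := m) (a := (gammaA N i)⁻¹) (b := gammaB N)
      rw [inv_inv] at this
      exact this.symm
    constructor
    · rintro _ ⟨t, m, rfl⟩
      obtain ⟨q, hq⟩ := Finset.dvd_prod_of_mem N (Finset.mem_univ i)
      refine ⟨t + 1, q * m, ?_⟩
      rw [shift h2 1 m]
      have e : m * ((∏ i, N i : ℕ) : ℤ) ^ 1 = N i * (q * m) := by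
        rw [hq]; push_cast; ring
      rw [e, ← hz]
      have hc : gammaA N i * c ^ (t + 1) = c ^ (t + 1) * gammaA N i := (h1 i).pow_right (t + 1)
      calc _ = (gammaA N i * c ^ (t + 1)) * ((gammaA N i)⁻¹ * gammaB N ^ (q * m : ℤ) * gammaA N i)
            * (gammaA N i * c ^ (t + 1))⁻¹ := by rw [pow_succ]; group
        _ = _ := by rw [hc]; group
    · rintro _ ⟨t, m, rfl⟩
      refine ⟨t, N i * m, ?_⟩
      rw [← hz]
      have hc : (gammaA N i)⁻¹ * c ^ t = c ^ t * (gammaA N i)⁻¹ := ((h1 i).pow_right t).inv_left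
      calc _ = ((gammaA N i)⁻¹ * c ^ t) * gammaB N ^ m * ((gammaA N i)⁻¹ * c ^ t)⁻¹ := by group
        _ = _ := by rw [hc]; group
  | hB =>
    have hb : gammaB N ∈ unionGroup _ c _ h2 := ⟨0, 1, by simp⟩
    exact ⟨fun h hh => mul_mem (mul_mem hb hh) (inv_mem hb),
      fun h hh => mul_mem (mul_mem (inv_mem hb) hh) hb⟩
  | h1 => simp
  | hm g g' ih ih' =>
    constructor
    · intro h hh
      have := ih.1 _ (ih'.1 h hh)
      convert this using 1; group
    · intro h hh
      have := ih'.2 _ (ih.2 h hh)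
      convert this using 1; group
  | hi g ih => simpa using ih.symm

theorem ker_form {k : ℕ} (N : Fin k → ℕ) (c : GammaGroup N)
    (h1 : ∀ i, Commute (gammaA N i) c)
    (h2 : c⁻¹ * gammaB N * c = gammaB N ^ (∏ i, N i))
    (φ : GammaGroup N →* Multiplicative (Fin k → ℤ))
    (hA : ∀ i : Fin k, φ (gammaA N i) = Multiplicative.ofAdd (Pi.single i 1))
    (hB : φ (gammaB N) = 1) (g : GammaGroup N) (hg : φ g = 1) :
    ∃ (t : ℕ) (m : ℤ), g = c ^ t * gammaB N ^ m * (c ^ t)⁻¹ := by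
  obtain ⟨s, hs⟩ := exists_section N
  have key : ∀ g, g * (s (φ g))⁻¹ ∈ unionGroup _ c _ h2 := by
    intro g
    induction g using gen_induction with
    | hA i => rw [hA, hs, mul_inv_cancel]; exact one_mem _
    | hB => rw [hB]; exact ⟨0, 1, by simp⟩
    | h1 => simp
    | hm g g' ih ih' =>
      have := mul_mem ((conj_mem N c h1 h2 g).1 _ ih') ih
      convert this using 1
      rw [map_mul, map_mul]; group
    | hi g ih =>
      have := (conj_mem N c h1 h2 g).2 _ (inv_mem ih)
      convert this using 1
      rw [map_inv, map_inv]; group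
  have := key g
  rw [hg, map_one, inv_one, mul_one] at this
  exact this

theorem mem_Zinv {n : ℕ} (hn : n ≠ 0) {x : ℚ} (hx : x ∈ Zinv n) :
    ∃ (t : ℕ) (m : ℤ), x = m / (n : ℚ) ^ t := by
  have hn' : (n : ℚ) ≠ 0 := Nat.cast_ne_zero.mpr hn
  refine Subring.closure_induction (p := fun x _ => ∃ (t : ℕ) (m : ℤ), x = m / (n : ℚ) ^ t)
    ?_ ⟨0, 0, by simp⟩ ⟨0, 1, by simp⟩ ?_ ?_ ?_ hx
  · rintro _ rfl
    exact ⟨1, 1, by simp⟩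
  · rintro _ _ _ _ ⟨t, m, rfl⟩ ⟨s, l, rfl⟩
    refine ⟨t + s, m * n ^ s + l * n ^ t, ?_⟩
    push_cast
    field_simp
    ring
  · rintro _ _ ⟨t, m, rfl⟩
    exact ⟨t, -m, by push_cast; ring⟩
  · rintro _ _ _ _ ⟨t, m, rfl⟩ ⟨s, l, rfl⟩
    refine ⟨t + s, m * l, ?_⟩
    push_cast
    field_simp
    ring

end GammaAux

/-- For `n = p₁^{e₁} ⋯ p_k^{e_k}` (distinct primes), the kernel of the
projection `φ : Γ(p₁^{2e₁},…,p_k^{2e_k}) → ℤ^k` is isomorphic, as a group, to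
the additive group of `ℤ[1/n]`. -/
theorem gammaGroup_ker_iso_Zinv {k : ℕ} (p e : Fin k → ℕ)
    (hp : ∀ i, (p i).Prime) (hpinj : Function.Injective p) (he : ∀ i, 1 ≤ e i)
    (n : ℕ) (hn : n = ∏ i, p i ^ e i)
    (φ : GammaGroup (fun i => p i ^ (2 * e i)) →* Multiplicative (Fin k → ℤ))
    (hsurj : Function.Surjective φ)
    (hA : ∀ i : Fin k, φ (gammaA (fun i => p i ^ (2 * e i)) i) =
      Multiplicative.ofAdd (Pi.single i 1))
    (hB : φ (gammaB (fun i => p i ^ (2 * e i))) = 1) :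
    Nonempty (Additive (MonoidHom.ker φ) ≃+ ↥(Zinv n)) := by
  have hNn : ∏ i, p i ^ (2 * e i) = n ^ 2 := by
    rw [hn, ← Finset.prod_pow]
    exact Finset.prod_congr rfl fun i _ => by rw [← pow_mul, mul_comm]
  have hn0 : n ≠ 0 := by
    rw [hn]; exact Finset.prod_ne_zero_iff.mpr fun i _ => pow_ne_zero _ (hp i).ne_zero
  have hn' : (n : ℚ) ≠ 0 := Nat.cast_ne_zero.mpr hn0
  have hN0 : ∀ i, (fun i => p i ^ (2 * e i)) i ≠ 0 := fun i => pow_ne_zero _ (hp i).ne_zero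
  generalize (fun i => p i ^ (2 * e i)) = N at *
  obtain ⟨ψ, hψA, hψB⟩ := GammaAux.exists_action N hN0
  obtain ⟨c, h1, h2, h3⟩ := GammaAux.exists_c N ψ hψA Finset.univ
  rw [hNn] at h3
  have hψc : ∀ (t : ℕ) x, ψ (c ^ t) x = x / ((n : ℚ) ^ 2) ^ t := by
    intro t
    induction t with
    | zero => simp
    | succ t ih =>
      intro x
      rw [pow_succ, map_mul, Equiv.Perm.mul_apply, h3, ih]
      push_cast
      field_simp
      ring
  have hψb : ∀ (m : ℤ) x, ψ (gammaB N ^ m) x = x + m := by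
    have : ψ (gammaB N) = Equiv.addRight (1 : ℚ) := by ext x; simp [hψB]
    intro m x
    rw [map_zpow, this, GammaAux.zpow_shift]
  have hform : ∀ (t : ℕ) (m : ℤ) x,
      ψ (c ^ t * gammaB N ^ m * (c ^ t)⁻¹) x = x + m / ((n : ℚ) ^ 2) ^ t := by
    intro t m x
    have : ψ ((c ^ t)⁻¹) x = x * ((n : ℚ) ^ 2) ^ t := by
      rw [map_inv, Equiv.Perm.inv_eq_iff_eq, hψc]
      field_simp
    rw [map_mul, map_mul, Equiv.Perm.mul_apply, Equiv.Perm.mul_apply, this, hψb, hψc]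
    field_simp
  have hker := GammaAux.ker_form N c h1 h2 φ hA hB
  have hinv : (n : ℚ)⁻¹ ∈ Zinv n := Subring.subset_closure rfl
  have hmem : ∀ g : MonoidHom.ker φ, ψ g 0 ∈ Zinv n := by
    rintro ⟨g, hg⟩
    obtain ⟨t, m, rfl⟩ := hker g hg
    simp only [hform, zero_add]
    rw [div_eq_mul_inv, ← inv_pow, ← inv_pow]
    exact mul_mem (intCast_mem _ _) (pow_mem (pow_mem hinv _) _)
  let F : Additive (MonoidHom.ker φ) →+ ↥(Zinv n) := AddMonoidHom.mk'
    (fun g => ⟨ψ (g.toMul : MonoidHom.ker φ) 0, hmem g.toMul⟩) (by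
      intro a b
      apply Subtype.ext
      obtain ⟨⟨g, hg⟩, rfl⟩ := Additive.ofMul.surjective a
      obtain ⟨⟨h, hh⟩, rfl⟩ := Additive.ofMul.surjective b
      change ψ (g * h) 0 = ψ g 0 + ψ h 0
      obtain ⟨t, m, rfl⟩ := hker g hg
      rw [map_mul, Equiv.Perm.mul_apply, hform, hform, zero_add, add_comm])
  refine ⟨AddEquiv.ofBijective F ⟨?_, ?_⟩⟩
  · rw [injective_iff_map_eq_zero]
    intro a ha
    obtain ⟨⟨g, hg⟩, rfl⟩ := Additive.ofMul.surjective a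
    have ha' : ψ g 0 = 0 := congrArg Subtype.val ha
    obtain ⟨t, m, rfl⟩ := hker g hg
    rw [hform, zero_add, div_eq_zero_iff] at ha'
    have hm : m = 0 := by
      rcases ha' with h | h
      · exact_mod_cast h
      · exact absurd h (pow_ne_zero _ (pow_ne_zero _ hn'))
    subst hm
    rw [← ofMul_one]
    congr 1
    apply Subtype.ext
    simp
  · rintro ⟨x, hx⟩
    obtain ⟨t, m, rfl⟩ := GammaAux.mem_Zinv hn0 hx
    refine ⟨Additive.ofMul ⟨c ^ t * gammaB N ^ (m * n ^ t : ℤ) * (c ^ t)⁻¹, ?_⟩, ?_⟩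
    · rw [MonoidHom.mem_ker]; simp [hB]
    · apply Subtype.ext
      change ψ (c ^ t * gammaB N ^ (m * n ^ t : ℤ) * (c ^ t)⁻¹) 0 = _
      rw [hform]
      push_cast
      field_simp
      ring
end
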